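/- arXiv:2211.05752 — 2 statements merged into one kernel-verified Lean document; each statement's English description precedes it below -/
import Mathlib

section
/- Fix n ≥ 1. Then liminf_{l→∞} of the ratio #{(r₁, …, r_n) ∈ 𝓡_l : the group G = ⟨x₁, …, x_{n+1} ∣ r₁, …, r_n⟩ is not subgroup separable} / #𝓡_l is strictly positive. (That is, a random deficiency 1 group in the few-relator model is not subgroup separable with positive asymptotic probability.) -/
open scoped Classical

/-- A word in the letters `x₁^{±1}, …, x_{n+1}^{±1}`. -/
abbrev RWord (n : ℕ) := List (Fin (n + 1) × Bool)

/-- A word is cyclically reduced if its double is a reduced word. -/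
def CyclicallyReduced {n : ℕ} (w : RWord n) : Prop :=
  FreeGroup.reduce (w ++ w) = w ++ w

/-- The set of relators determined by a tuple of words. -/
def relsOf {n : ℕ} (r : Fin n → RWord n) : Set (FreeGroup (Fin (n + 1))) :=
  Set.range fun i => FreeGroup.mk (r i)

/-- A group is *subgroup separable (LERF)* if every finitely generated subgroup is the
intersection of the finite-index subgroups containing it. -/
def SubgroupSeparable (G : Type*) [Group G] : Prop :=
  ∀ H : Subgroup G, H.FG → H = ⨅ (K : Subgroup G) (_ : H ≤ K) (_ : K.FiniteIndex), K

/-- `𝓡_l`: the set of `n`-tuples of nonempty cyclically reduced words of length at most `l`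
in the alphabet `{x₁^{±1}, …, x_{n+1}^{±1}}`. -/
def Rtuples (n l : ℕ) : Set (Fin n → RWord n) :=
  {r | ∀ i, r i ≠ [] ∧ (r i).length ≤ l ∧ CyclicallyReduced (r i)}

/-- The proportion of tuples in `𝓡_l` satisfying the property `Pr`. -/
noncomputable def tupleRatio (n : ℕ) (Pr : (Fin n → RWord n) → Prop) (l : ℕ) : ℝ :=
  (Nat.card {r : Fin n → RWord n // r ∈ Rtuples n l ∧ Pr r} : ℝ) /
    (Nat.card (Rtuples n l) : ℝ)

/-! The `n × (n + 1)` matrix of exponent sums of the relators has a nonzero integral kernel vector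
`φ`, a height function vanishing on every relator. Let `m` maximise `|φ m|`, let `t` be the
ascending letter of the `m`-th generator, and match the relators with the other generators. Into the
relator matched with the ascending letter `y` insert `t [t, y⁻¹] t⁻¹` at its first highest point,
and `t⁻¹ [t⁻¹, y]² t` at its first lowest point. Exponent sums are unchanged, so the insertion is
injective on tuples; it keeps words cyclically reduced and lengthens them by `16`. Since
`#𝓡_{l + 16} ≤ C · #𝓡_l`, the modified tuples have positive density.

The highest insertions show that the subgroups of loops at height `0` in the strips `[0, M]`
stabilise to a finitely generated `K` with `t K t⁻¹ ≤ K`, and subgroup separability would force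
`t⁻¹ K t ≤ K`. The lowest insertions give the Fox matrix of the relators, with the `m`-th column
removed, constant term `2 · I`. Its determinant has constant coefficient `2 ^ n`, hence a root `α`
in some field with `α⁻¹` not integral over `ℤ`. The resulting affine representation maps `K` onto a
nonzero finitely generated `ℤ`-module of translations, which would be stable under `α ^ (-|φ m|)`,
making `α⁻¹` integral. -/

namespace RandomDeficiencyOne

section Separability

variable {G : Type*} [Group G] {K : Subgroup G} {t : G}

theorem pow_mul_mul_inv_pow_mem (hconj : ∀ x ∈ K, t * x * t⁻¹ ∈ K) (k : ℕ) {x : G} (hx : x ∈ K) :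
    t ^ k * x * (t ^ k)⁻¹ ∈ K := by
  induction k with
  | zero => simpa using hx
  | succ k ih =>
    have hmul : t ^ (k + 1) * x * (t ^ (k + 1))⁻¹ = t * (t ^ k * x * (t ^ k)⁻¹) * t⁻¹ := by
      rw [pow_succ']; group
    exact hmul ▸ hconj _ ih

/-- Some positive power of `t` lies in each finite-index subgroup containing `tKt⁻¹`, and it
conjugates `K` into `tKt⁻¹`; hence `K ≤ tKt⁻¹` once `tKt⁻¹` is separable. -/
theorem inv_mul_mul_mem_of_subgroupSeparable (hG : SubgroupSeparable G) (hK : K.FG)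
    (hconj : ∀ x ∈ K, t * x * t⁻¹ ∈ K) {x : G} (hx : x ∈ K) : t⁻¹ * x * t ∈ K := by
  suffices hmem : x ∈ K.map (MulAut.conj t).toMonoidHom by
    obtain ⟨y, hy, rfl⟩ := Subgroup.mem_map.1 hmem
    simpa [mul_assoc] using hy
  have hfg : (K.map (MulAut.conj t).toMonoidHom).FG := by
    rw [Subgroup.fg_iff_submonoid_fg] at hK ⊢
    exact hK.map (MulAut.conj t).toMonoidHom
  rw [hG _ hfg]
  simp only [Subgroup.mem_iInf]
  intro H hH hfin
  obtain ⟨k, hk, -, hpow⟩ := Subgroup.exists_pow_mem_of_index_ne_zero hfin.index_ne_zero t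
  obtain ⟨j, rfl⟩ := Nat.exists_eq_succ_of_ne_zero hk.ne'
  have hconjmem : t ^ (j + 1) * x * (t ^ (j + 1))⁻¹ ∈ H := by
    refine hH (Subgroup.mem_map.2 ⟨_, pow_mul_mul_inv_pow_mem hconj j hx, ?_⟩)
    simp [pow_succ', mul_assoc]
  rwa [H.mul_mem_cancel_right (H.inv_mem hpow), H.mul_mem_cancel_left hpow] at hconjmem

end Separability

section NonIntegralRoots

open Polynomial

theorem dvd_of_isIntegral_div {R K : Type*} [CommRing R] [IsDomain R] [IsIntegrallyClosed R]
    [Field K] [Algebra R K] [FaithfulSMul R K] {a b : R} (hb : b ≠ 0)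
    (hab : IsIntegral R (algebraMap R K a / algebraMap R K b)) : b ∣ a := by
  let := FractionRing.liftAlgebra R K
  have := FractionRing.isScalarTower_liftAlgebra R K
  have hfrac : IsIntegral R
      (algebraMap R (FractionRing R) a / algebraMap R (FractionRing R) b) := by
    rw [← isIntegral_algebraMap_iff (algebraMap (FractionRing R) K).injective, map_div₀,
      ← IsScalarTower.algebraMap_apply, ← IsScalarTower.algebraMap_apply]
    exact hab
  obtain ⟨c, hc⟩ := IsIntegrallyClosed.isIntegral_iff.1 hfrac
  refine ⟨c, FaithfulSMul.algebraMap_injective R (FractionRing R) ?_⟩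
  rw [map_mul, hc, mul_div_cancel₀]
  simpa using hb

theorem leadingCoeff_dvd_coeff_of_isIntegral_roots {R K : Type*} [CommRing R] [IsDomain R]
    [IsIntegrallyClosed R] [Field K] [Algebra R K] [FaithfulSMul R K] {Q : R[X]} (hQ : Q ≠ 0)
    (hsplits : (Q.map (algebraMap R K)).Splits)
    (hroots : ∀ x : K, aeval x Q = 0 → IsIntegral R x) (i : ℕ) :
    Q.leadingCoeff ∣ Q.coeff i := by
  have hinj : Function.Injective (algebraMap R K) := FaithfulSMul.algebraMap_injective R K
  have hlead : algebraMap R K Q.leadingCoeff ≠ 0 := by simpa using hQ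
  refine dvd_of_isIntegral_div (K := K) (leadingCoeff_ne_zero.2 hQ) ?_
  have hmonic := isIntegral_coeff_of_factors (R := R)
    (C (algebraMap R K Q.leadingCoeff)⁻¹ * Q.map (algebraMap R K))
    (by simp [leadingCoeff_map_of_injective hinj, hlead, isIntegral_one]) (hsplits.C_mul _)
    (fun x hx => hroots x (by simpa [hlead, eval_map_algebraMap] using hx)) i
  simpa [div_eq_inv_mul] using hmonic

theorem aeval_eq_zero_of_forall_dvd_coeff {A : Type*} [CommRing A] (p : ℕ) [CharP A p] {P : ℤ[X]}
    (hdvd : ∀ i, (p : ℤ) ∣ P.coeff i) (x : A) : aeval x P = 0 := by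
  rw [aeval_eq_sum_range]
  refine Finset.sum_eq_zero fun i _ => ?_
  rw [zsmul_eq_mul, (CharP.intCast_eq_zero_iff A p _).2 (hdvd i), zero_mul]

theorem not_isIntegral_inv_of_transcendental {k L : Type*} [Field k] [Field L] [Algebra k L]
    {x : L} (hx : Transcendental k x) : ¬IsIntegral ℤ x⁻¹ := fun hint =>
  hx <| by simpa using (hint.tower_top (A := k)).isAlgebraic.inv

/-- If every root `α` in `ℂ` had `α⁻¹` integral, the roots of the reversed polynomial would be
integral, and its leading coefficient `P.coeff 0` would divide every coefficient of `P`. -/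
theorem exists_complex_root_inv_not_isIntegral {P : ℤ[X]} (hP : P.coeff 0 ≠ 0) {i : ℕ}
    (hi : ¬P.coeff 0 ∣ P.coeff i) :
    ∃ α : ℂˣ, aeval (α : ℂ) P = 0 ∧ ¬IsIntegral ℤ (α⁻¹ : ℂ) := by
  by_contra! hcon
  have hlead : P.reverse.leadingCoeff = P.coeff 0 := by
    rw [reverse_leadingCoeff, trailingCoeff_eq_coeff_zero hP]
  have hroots : ∀ x : ℂ, aeval x P.reverse = 0 → IsIntegral ℤ x := by
    intro x hx
    rcases eq_or_ne x 0 with rfl | hx0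
    · exact isIntegral_zero
    have := invertibleOfNonzero (inv_ne_zero hx0)
    have hroot : aeval x⁻¹ P = 0 :=
      (eval₂_reverse_eq_zero_iff (algebraMap ℤ ℂ) x⁻¹ P).1 (by simpa [aeval_def] using hx)
    simpa using hcon (Units.mk0 x⁻¹ (inv_ne_zero hx0)) hroot
  have hreverse : P.reverse ≠ 0 := by simpa using fun h : P = 0 => hP (by simp [h])
  have hdvd := leadingCoeff_dvd_coeff_of_isIntegral_roots hreverse (IsAlgClosed.splits _) hroots
    (revAt P.natDegree i)
  rw [hlead, coeff_reverse, revAt_invol] at hdvd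
  exact hi hdvd

theorem exists_root_inv_not_isIntegral {P : ℤ[X]} (hP : P.coeff 0 ≠ 0)
    (hunit : ¬IsUnit (P.coeff 0)) :
    ∃ (L : Type) (_ : Field L) (α : Lˣ), aeval (α : L) P = 0 ∧ ¬IsIntegral ℤ (α⁻¹ : L) := by
  by_cases hall : ∀ i, P.coeff 0 ∣ P.coeff i
  · obtain ⟨p, hp, hdvd⟩ := Int.exists_prime_and_dvd (mt Int.isUnit_iff_natAbs_eq.2 hunit)
    have : Fact p.natAbs.Prime := ⟨Int.prime_iff_natAbs_prime.1 hp⟩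
    have : CharP (RatFunc (ZMod p.natAbs)) p.natAbs := charP_of_injective_algebraMap
      (algebraMap (ZMod p.natAbs) (RatFunc (ZMod p.natAbs))).injective _
    refine ⟨RatFunc (ZMod p.natAbs), inferInstance, Units.mk0 RatFunc.X RatFunc.X_ne_zero,
      aeval_eq_zero_of_forall_dvd_coeff p.natAbs (fun i => ?_) _,
      not_isIntegral_inv_of_transcendental RatFunc.transcendental_X⟩
    exact Int.natAbs_dvd.2 (hdvd.trans (hall i))
  · obtain ⟨i, hi⟩ := not_forall.1 hall
    exact ⟨ℂ, inferInstance, exists_complex_root_inv_not_isIntegral hP hi⟩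

end NonIntegralRoots

section Words

variable {ι : Type*}

/-- The formal inverse of a letter. -/
def invLetter (c : ι × Bool) : ι × Bool := (c.1, !c.2)

/-- The value on a letter of the homomorphism to `ℤ` taking the `j`-th generator to `φ j`. -/
def letterHeight (φ : ι → ℤ) (c : ι × Bool) : ℤ := bif c.2 then φ c.1 else -φ c.1

/-- The value on a word of the homomorphism to `ℤ` taking the `j`-th generator to `φ j`. Reading
a word as a path, this is the height of its endpoint above its starting point. -/
def height (φ : ι → ℤ) (w : List (ι × Bool)) : ℤ := (w.map (letterHeight φ)).sum

/-- The path spelled by `w` from height `a` visits only heights in `s`. -/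
def StaysIn (φ : ι → ℤ) (s : Set ℤ) (a : ℤ) (w : List (ι × Bool)) : Prop :=
  ∀ u, u <+: w → a + height φ u ∈ s

variable {φ : ι → ℤ} {s t : Set ℤ} {a : ℤ} {c : ι × Bool} {u w : List (ι × Bool)}

@[simp] theorem invLetter_fst (c : ι × Bool) : (invLetter c).1 = c.1 := rfl

@[simp] theorem invLetter_snd (c : ι × Bool) : (invLetter c).2 = !c.2 := rfl

@[simp] theorem invLetter_invLetter (c : ι × Bool) : invLetter (invLetter c) = c := by
  simp [invLetter]

@[simp] theorem letterHeight_invLetter (φ : ι → ℤ) (c : ι × Bool) :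
    letterHeight φ (invLetter c) = -letterHeight φ c := by
  rcases c with ⟨j, _ | _⟩ <;> simp [letterHeight, invLetter]

@[simp] theorem letterHeight_neg (φ : ι → ℤ) (c : ι × Bool) :
    letterHeight (-φ) c = -letterHeight φ c := by
  rcases c with ⟨j, _ | _⟩ <;> simp [letterHeight]

@[simp] theorem height_nil (φ : ι → ℤ) : height φ [] = 0 := rfl

@[simp] theorem height_cons (φ : ι → ℤ) (c : ι × Bool) (w : List (ι × Bool)) :
    height φ (c :: w) = letterHeight φ c + height φ w := by
  simp [height]

@[simp] theorem height_append (φ : ι → ℤ) (u w : List (ι × Bool)) :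
    height φ (u ++ w) = height φ u + height φ w := by
  simp [height]

@[simp] theorem height_neg (φ : ι → ℤ) (w : List (ι × Bool)) : height (-φ) w = -height φ w := by
  induction w with
  | nil => simp
  | cons c w ih => simp [ih, add_comm]

@[simp] theorem staysIn_nil : StaysIn φ s a [] ↔ a ∈ s := by
  simp [StaysIn]

@[simp] theorem staysIn_cons :
    StaysIn φ s a (c :: w) ↔ a ∈ s ∧ StaysIn φ s (a + letterHeight φ c) w := by
  simp only [StaysIn, List.prefix_cons_iff]
  constructor
  · exact fun h => ⟨by simpa using h [] (Or.inl rfl), fun u hu => by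
      simpa [add_assoc] using h (c :: u) (Or.inr ⟨u, rfl, hu⟩)⟩
  · rintro ⟨ha, hw⟩ u (rfl | ⟨v, rfl, hv⟩)
    · simpa using ha
    · simpa [add_assoc] using hw v hv

theorem StaysIn.left_mem (h : StaysIn φ s a w) : a ∈ s := by
  simpa using h [] List.nil_prefix

theorem StaysIn.right_mem (h : StaysIn φ s a w) : a + height φ w ∈ s :=
  h w List.prefix_rfl

theorem staysIn_append :
    StaysIn φ s a (u ++ w) ↔ StaysIn φ s a u ∧ StaysIn φ s (a + height φ u) w := by
  induction u generalizing a with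
  | nil => simpa using fun h : StaysIn φ s a w => h.left_mem
  | cons c u ih => simp [ih, and_assoc, add_assoc]

theorem StaysIn.map (h : StaysIn φ s a w) {d : ℤ} (hd : ∀ x ∈ s, x + d ∈ t) :
    StaysIn φ t (a + d) w := fun u hu => by
  rw [add_right_comm]; exact hd _ (h u hu)

theorem staysIn_neg : StaysIn (-φ) s a w ↔ StaysIn φ (-s) (-a) w := by
  simp only [StaysIn, height_neg, Set.mem_neg, neg_add, neg_neg]

theorem exists_staysIn_Ici (φ : ι → ℤ) (a : ℤ) (w : List (ι × Bool)) :
    ∃ lo, StaysIn φ (Set.Ici lo) a w := by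
  induction w generalizing a with
  | nil => exact ⟨a, by simp⟩
  | cons c w ih =>
    obtain ⟨lo, hlo⟩ := ih (a + letterHeight φ c)
    exact ⟨min lo a, staysIn_cons.2 ⟨min_le_right lo a, fun u hu =>
      (min_le_left lo a).trans (hlo u hu)⟩⟩

end Words

section Evaluation

variable {ι G H : Type*} [Group G] [Group H]

/-- The element of `G` represented by a letter, the `j`-th generator being sent to `g j`. -/
def evalLetter (g : ι → G) (c : ι × Bool) : G := bif c.2 then g c.1 else (g c.1)⁻¹

/-- The element of `G` represented by a word, the `j`-th generator being sent to `g j`. -/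
def evalWord (g : ι → G) (w : List (ι × Bool)) : G := (w.map (evalLetter g)).prod

@[simp] theorem evalLetter_invLetter (g : ι → G) (c : ι × Bool) :
    evalLetter g (invLetter c) = (evalLetter g c)⁻¹ := by
  rcases c with ⟨j, _ | _⟩ <;> simp [evalLetter, invLetter]

@[simp] theorem evalWord_nil (g : ι → G) : evalWord g [] = 1 := rfl

@[simp] theorem evalWord_cons (g : ι → G) (c : ι × Bool) (w : List (ι × Bool)) :
    evalWord g (c :: w) = evalLetter g c * evalWord g w := by
  simp [evalWord]

@[simp] theorem evalWord_append (g : ι → G) (u w : List (ι × Bool)) :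
    evalWord g (u ++ w) = evalWord g u * evalWord g w := by
  simp [evalWord]

theorem map_evalLetter (f : G →* H) (g : ι → G) (c : ι × Bool) :
    f (evalLetter g c) = evalLetter (fun j => f (g j)) c := by
  rcases c with ⟨j, _ | _⟩ <;> simp [evalLetter]

theorem map_evalWord (f : G →* H) (g : ι → G) (w : List (ι × Bool)) :
    f (evalWord g w) = evalWord (fun j => f (g j)) w := by
  induction w with
  | nil => simp
  | cons c w ih => simp [ih, map_evalLetter]

theorem lift_mk_eq_evalWord (g : ι → G) (w : List (ι × Bool)) :
    FreeGroup.lift g (FreeGroup.mk w) = evalWord g w :=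
  FreeGroup.lift_mk

end Evaluation

section StripPaths

variable {ι G : Type*} [Group G]

/-- `StripPath g φ s a b x` says that `x` is represented by a word spelling a path from height `a`
to height `b` all of whose vertices have height in `s`. -/
inductive StripPath (g : ι → G) (φ : ι → ℤ) (s : Set ℤ) : ℤ → ℤ → G → Prop
  | nil {a : ℤ} (ha : a ∈ s) : StripPath g φ s a a 1
  | cons {a b : ℤ} (c : ι × Bool) {x : G} (ha : a ∈ s)
      (tail : StripPath g φ s (a + letterHeight φ c) b x) :
      StripPath g φ s a b (evalLetter g c * x)

namespace StripPath

variable {g : ι → G} {φ : ι → ℤ} {s s' : Set ℤ} {a b c : ℤ} {x y : G}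

theorem left_mem (h : StripPath g φ s a b x) : a ∈ s := by
  cases h <;> assumption

theorem trans (h : StripPath g φ s a b x) (h' : StripPath g φ s b c y) :
    StripPath g φ s a c (x * y) := by
  induction h with
  | nil => simpa using h'
  | cons l ha _ ih => rw [mul_assoc]; exact cons l ha (ih h')

theorem symm (h : StripPath g φ s a b x) : StripPath g φ s b a x⁻¹ := by
  induction h with
  | nil ha => simpa using nil ha
  | @cons a b l x ha tail ih =>
    have hback : StripPath g φ s (a + letterHeight φ l) a (evalLetter g (invLetter l) * 1) :=
      cons _ tail.left_mem (by simpa using nil ha)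
    simpa using ih.trans hback

theorem shift (h : StripPath g φ s a b x) {d : ℤ} (hd : ∀ k ∈ s, k + d ∈ s') :
    StripPath g φ s' (a + d) (b + d) x := by
  induction h with
  | nil ha => exact nil (hd _ ha)
  | cons l ha _ ih => exact cons l (hd _ ha) (by rwa [add_right_comm])

theorem mono (h : StripPath g φ s a b x) (hs : s ⊆ s') : StripPath g φ s' a b x := by
  simpa using h.shift (d := 0) fun k hk => by simpa using hs hk

theorem of_staysIn {w : List (ι × Bool)} (h : StaysIn φ s a w) :
    StripPath g φ s a (a + height φ w) (evalWord g w) := by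
  induction w generalizing a with
  | nil => simpa using nil (staysIn_nil.1 h)
  | cons l w ih =>
    obtain ⟨ha, hw⟩ := staysIn_cons.1 h
    simpa [add_assoc] using cons l ha (ih hw)

theorem exists_word (h : StripPath g φ s a b x) :
    ∃ w, evalWord g w = x ∧ a + height φ w = b := by
  induction h with
  | nil => exact ⟨[], by simp⟩
  | cons l _ _ ih =>
    obtain ⟨w, rfl, rfl⟩ := ih
    exact ⟨l :: w, by simp [add_assoc]⟩

end StripPath

/-- The subgroup of `G` represented by loops at height `0` with all heights in `s`. -/
def loopSubgroup (g : ι → G) (φ : ι → ℤ) (s : Set ℤ) (hs : 0 ∈ s) : Subgroup G where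
  carrier := {x | StripPath g φ s 0 0 x}
  mul_mem' := StripPath.trans
  one_mem' := StripPath.nil hs
  inv_mem' := StripPath.symm

variable {g : ι → G} {φ : ι → ℤ} {s : Set ℤ} {hs : 0 ∈ s}

theorem mem_loopSubgroup {x : G} : x ∈ loopSubgroup g φ s hs ↔ StripPath g φ s 0 0 x := Iff.rfl

/-- The Schreier generators of the loops at height `b` with heights in `s`, where `p k` is thought
of as a chosen path from height `k` to height `b`. -/
def schreierGenerators (g : ι → G) (φ : ι → ℤ) (s : Set ℤ) (b : ℤ) (p : ℤ → G) : Set G :=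
  {y | ∃ k ∈ s, ∃ c : ι × Bool, y = (p k)⁻¹ * evalLetter g c * p (k + letterHeight φ c) ∧
    ∃ z, StripPath g φ s (k + letterHeight φ c) b z}

theorem finite_schreierGenerators [Finite ι] (hfin : s.Finite) (b : ℤ) (p : ℤ → G) :
    (schreierGenerators g φ s b p).Finite := by
  refine (hfin.image2 (fun k c => (p k)⁻¹ * evalLetter g c * p (k + letterHeight φ c))
    (Set.finite_univ (α := ι × Bool))).subset ?_
  rintro _ ⟨k, hk, c, rfl, -⟩
  exact ⟨k, hk, c, trivial, rfl⟩

theorem StripPath.mem_closure_schreierGenerators {a b : ℤ} {x : G} (h : StripPath g φ s a b x)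
    (p : ℤ → G) : (p a)⁻¹ * x * p b ∈ Subgroup.closure (schreierGenerators g φ s b p) := by
  induction h with
  | nil => simp
  | @cons a b c x ha tail ih =>
    have hsplit : (p a)⁻¹ * (evalLetter g c * x) * p b =
        (p a)⁻¹ * evalLetter g c * p (a + letterHeight φ c) *
          ((p (a + letterHeight φ c))⁻¹ * x * p b) := by group
    rw [hsplit]
    exact Subgroup.mul_mem _ (Subgroup.subset_closure ⟨a, ha, c, rfl, x, tail⟩) ih

theorem loopSubgroup_fg [Finite ι] (hfin : s.Finite) : (loopSubgroup g φ s hs).FG := by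
  have hreturn : ∀ k, ∃ p : G, (∃ z, StripPath g φ s k 0 z) → StripPath g φ s k 0 p := fun k => by
    by_cases hk : ∃ z, StripPath g φ s k 0 z
    · exact hk.imp fun z hz _ => hz
    · exact ⟨1, fun h => absurd h hk⟩
  choose p hp using hreturn
  set S := schreierGenerators g φ s 0 p
  have hp0 : StripPath g φ s 0 0 (p 0) := hp 0 ⟨1, .nil hs⟩
  have hSle : S ⊆ loopSubgroup g φ s hs := by
    rintro _ ⟨k, hk, c, rfl, z, hz⟩
    rw [mul_assoc]
    exact (hp k ⟨_, .cons c hk hz⟩).symm.trans (.cons c hk (hp _ ⟨z, hz⟩))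
  refine (Subgroup.fg_iff _).2 ⟨insert (p 0) S, le_antisymm ?_ fun x hx => ?_,
    (finite_schreierGenerators hfin 0 p).insert _⟩
  · exact (Subgroup.closure_le _).2 (Set.insert_subset hp0 hSle)
  · have hp0mem : p 0 ∈ Subgroup.closure (insert (p 0) S) :=
      Subgroup.subset_closure (Set.mem_insert _ _)
    have hxmem := Subgroup.closure_mono (Set.subset_insert (p 0) S)
      (StripPath.mem_closure_schreierGenerators hx p)
    rwa [Subgroup.mul_mem_cancel_right _ hp0mem,
      Subgroup.mul_mem_cancel_left _ (Subgroup.inv_mem _ hp0mem)] at hxmem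

end StripPaths

section Detours

variable {ι : Type*}

/-- The word `s [s, z⁻¹] s⁻¹`, whose abelianisation is trivial. -/
def singleDetour (s z : ι × Bool) : List (ι × Bool) :=
  [s, s, invLetter z, invLetter s, z, invLetter s]

/-- The word `s [s, z⁻¹]² s⁻¹`, whose abelianisation is trivial. -/
def doubleDetour (s z : ι × Bool) : List (ι × Bool) :=
  [s, s, invLetter z, invLetter s, z, s, invLetter z, invLetter s, z, invLetter s]

/-- The letter `x_j` or `x_j⁻¹` along which the height does not decrease; it is `x_j` if
`φ j = 0`. -/
def upLetter (φ : ι → ℤ) (j : ι) : ι × Bool := (j, decide (0 ≤ φ j))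

/-- The path spelled by `A ++ B` reaches its maximal height at the end of `A`. -/
def IsPeak (φ : ι → ℤ) (A B : List (ι × Bool)) : Prop :=
  StaysIn φ (Set.Iic (height φ A)) 0 A ∧ StaysIn φ (Set.Iic 0) 0 B

/-- The word `w` has height `0` and makes a single detour along the `j`-th generator above its
highest point, which is reached by ascending letters of the `m`-th generator. -/
def HasPeakDetour (φ : ι → ℤ) (m j : ι) (w : List (ι × Bool)) : Prop :=
  ∃ A B, IsPeak φ A B ∧ height φ (A ++ B) = 0 ∧
    w = A ++ singleDetour (upLetter φ m) (upLetter φ j) ++ B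

/-- The word `w` has height `0` and makes a double detour along the `j`-th generator below its
lowest point, which is a highest point for `-φ`. -/
def HasValleyDetour (φ : ι → ℤ) (m j : ι) (w : List (ι × Bool)) : Prop :=
  ∃ A B, IsPeak (-φ) A B ∧ height φ (A ++ B) = 0 ∧
    w = A ++ doubleDetour (invLetter (upLetter φ m)) (invLetter (upLetter φ j)) ++ B

@[simp] theorem letterHeight_upLetter (φ : ι → ℤ) (j : ι) :
    letterHeight φ (upLetter φ j) = |φ j| := by
  rcases le_or_gt 0 (φ j) with h | h
  · simp [letterHeight, upLetter, h, abs_of_nonneg]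
  · simp [letterHeight, upLetter, h.not_ge, abs_of_neg h]

theorem eq_upLetter_or_eq_invLetter_upLetter (φ : ι → ℤ) (c : ι × Bool) :
    c = upLetter φ c.1 ∨ c = invLetter (upLetter φ c.1) := by
  rcases c with ⟨j, b⟩
  cases b <;> by_cases h : 0 ≤ φ j <;> simp [upLetter, invLetter, h]

theorem eq_upLetter_of_letterHeight_pos {φ : ι → ℤ} {c : ι × Bool} (h : 0 < letterHeight φ c) :
    c = upLetter φ c.1 := by
  refine (eq_upLetter_or_eq_invLetter_upLetter φ c).resolve_right fun hc => ?_
  rw [hc, letterHeight_invLetter, letterHeight_upLetter] at h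
  exact (neg_nonpos.2 (abs_nonneg _)).not_gt h

theorem IsPeak.staysIn_Iio_left {φ : ι → ℤ} {A B : List (ι × Bool)} (h : IsPeak φ A B) {top : ℤ}
    (htop : height φ A < top) : StaysIn φ (Set.Iio top) 0 A :=
  fun u hu => (h.1 u hu).trans_lt htop

theorem IsPeak.staysIn_Iio_right {φ : ι → ℤ} {A B : List (ι × Bool)} (h : IsPeak φ A B) {top : ℤ}
    (htop : height φ A < top) : StaysIn φ (Set.Iio top) (height φ A) B := by
  simpa using h.2.map (d := height φ A) (t := Set.Iio top) fun x hx => by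
    simp only [Set.mem_Iic, Set.mem_Iio] at hx ⊢
    omega

end Detours

section Stabilisation

open Filter

variable {ι G : Type*} [Group G] {g : ι → G} {φ : ι → ℤ}

theorem eventually_stripPath_of_relator {P E Q : List (ι × Bool)} {top : ℤ}
    (hrel : evalWord g (P ++ E ++ Q) = 1) (hheight : height φ (P ++ E ++ Q) = 0)
    (hP : StaysIn φ (Set.Iio top) 0 P) (hQ : StaysIn φ (Set.Iio top) (height φ (P ++ E)) Q) :
    ∀ᶠ M : ℤ in atTop, StripPath g φ (Set.Icc 0 M) (height φ P + (M + 1 - top))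
      (height φ (P ++ E) + (M + 1 - top)) (evalWord g E) := by
  obtain ⟨lo, hlo⟩ := exists_staysIn_Ici φ 0 P
  obtain ⟨lo', hlo'⟩ := exists_staysIn_Ici φ (height φ (P ++ E)) Q
  set s := Set.Ico (min lo lo') top
  have pathP : StripPath g φ s 0 (height φ P) (evalWord g P) := by
    have hstay : StaysIn φ s 0 P := fun u hu => ⟨(min_le_left lo lo').trans (hlo u hu), hP u hu⟩
    simpa using StripPath.of_staysIn (g := g) hstay
  have pathQ : StripPath g φ s (height φ (P ++ E)) 0 (evalWord g Q) := by
    have hstay : StaysIn φ s (height φ (P ++ E)) Q := fun u hu =>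
      ⟨(min_le_right lo lo').trans (hlo' u hu), hQ u hu⟩
    simpa only [← height_append, hheight] using StripPath.of_staysIn (g := g) hstay
  have hE : evalWord g E = (evalWord g P)⁻¹ * (evalWord g Q)⁻¹ := by
    rw [eq_mul_inv_iff_mul_eq, eq_inv_iff_mul_eq_one, mul_eq_one_comm]
    simpa [mul_assoc] using hrel
  filter_upwards [eventually_ge_atTop (top - 1 - min lo lo')] with M hM
  rw [hE]
  refine (pathP.symm.trans pathQ.symm).shift fun k hk => ?_
  simp only [s, Set.mem_Ico, Set.mem_Icc] at hk ⊢
  omega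

/-- The relator is cut at the ends of the subword `t y⁻¹` passing through its highest vertex. -/
theorem eventually_stripPath_of_letterHeight_pos {t y : ι × Bool}
    {A B : List (ι × Bool)} (hpeak : IsPeak φ A B) (hheight : height φ (A ++ B) = 0)
    (hrel : evalWord g (A ++ singleDetour t y ++ B) = 1) (hy : 0 < letterHeight φ y)
    (hyt : letterHeight φ y ≤ letterHeight φ t) :
    ∀ᶠ M : ℤ in atTop, StripPath g φ (Set.Icc 0 M) (M + 1 - letterHeight φ y)
      (M + 1 - letterHeight φ t) (evalLetter g y * (evalLetter g t)⁻¹) := by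
  have htop : height φ A < height φ A + 2 * letterHeight φ t := by omega
  have hpath := eventually_stripPath_of_relator (g := g) (φ := φ) (P := A ++ [t])
    (E := [t, invLetter y]) (Q := [invLetter t, y, invLetter t] ++ B)
    (by simpa [singleDetour] using hrel)
    (by
      rw [← hheight]
      simp only [height_append, height_cons, height_nil, letterHeight_invLetter]
      ring)
    (staysIn_append.2 ⟨hpeak.staysIn_Iio_left htop, by
      simp only [staysIn_cons, staysIn_nil, Set.mem_Iio]
      omega⟩)
    (staysIn_append.2 ⟨by simp only [height_append, height_cons, height_nil, letterHeight_invLetter,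
      staysIn_cons, staysIn_nil, Set.mem_Iio]; omega, by
      convert hpeak.staysIn_Iio_right htop using 1
      simp only [height_append, height_cons, height_nil, letterHeight_invLetter]
      ring⟩)
  filter_upwards [hpath] with M hM
  convert hM.symm using 1
  · simp only [height_append, height_cons, height_nil, letterHeight_invLetter]
    ring
  · simp only [height_append, height_cons, height_nil]
    ring
  · simp

/-- The relator is cut at the ends of the subword `t y⁻¹ t⁻¹` containing its highest edge. -/
theorem eventually_stripPath_of_letterHeight_eq_zero {t y : ι × Bool}
    {A B : List (ι × Bool)} (hpeak : IsPeak φ A B) (hheight : height φ (A ++ B) = 0)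
    (hrel : evalWord g (A ++ singleDetour t y ++ B) = 1) (hy : letterHeight φ y = 0)
    (ht : 0 < letterHeight φ t) :
    ∀ᶠ M : ℤ in atTop, StripPath g φ (Set.Icc 0 M) (M + 1 - letterHeight φ t)
      (M + 1 - letterHeight φ t) (evalLetter g t * evalLetter g y * (evalLetter g t)⁻¹) := by
  have htop : height φ A < height φ A + 2 * letterHeight φ t := by omega
  have hpath := eventually_stripPath_of_relator (g := g) (φ := φ) (P := A ++ [t])
    (E := [t, invLetter y, invLetter t]) (Q := [y, invLetter t] ++ B)
    (by simpa [singleDetour] using hrel)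
    (by
      rw [← hheight]
      simp only [height_append, height_cons, height_nil, letterHeight_invLetter]
      ring)
    (staysIn_append.2 ⟨hpeak.staysIn_Iio_left htop, by
      simp only [staysIn_cons, staysIn_nil, Set.mem_Iio]
      omega⟩)
    (staysIn_append.2 ⟨by simp only [height_append, height_cons, height_nil, letterHeight_invLetter,
      staysIn_cons, staysIn_nil, Set.mem_Iio]; omega, by
      convert hpeak.staysIn_Iio_right htop using 1; simp [hy]⟩)
  filter_upwards [hpath] with M hM
  convert hM.symm using 1
  · simp only [height_append, height_cons, height_nil, letterHeight_invLetter, hy]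
    ring
  · simp only [height_append, height_cons, height_nil]
    ring
  · simp [mul_assoc]

/-- A path visiting height `M + 1` is rerouted below it by reading every vertex `v` at height
`M + 1` as `v t⁻¹`. -/
theorem StripPath.lower {M a b : ℤ} {t : ι × Bool} {x : G}
    (hup : ∀ c, 0 < letterHeight φ c → StripPath g φ (Set.Icc 0 M) (M + 1 - letterHeight φ c)
      (M + 1 - letterHeight φ t) (evalLetter g c * (evalLetter g t)⁻¹))
    (hflat : ∀ c, letterHeight φ c = 0 → StripPath g φ (Set.Icc 0 M) (M + 1 - letterHeight φ t)
      (M + 1 - letterHeight φ t) (evalLetter g t * evalLetter g c * (evalLetter g t)⁻¹))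
    (h : StripPath g φ (Set.Icc 0 (M + 1)) a b x) (hb : b ≤ M) :
    (a ≤ M → StripPath g φ (Set.Icc 0 M) a b x) ∧
      (a = M + 1 → StripPath g φ (Set.Icc 0 M) (M + 1 - letterHeight φ t) b
        (evalLetter g t * x)) := by
  induction h with
  | nil ha => exact ⟨fun haM => .nil ⟨ha.1, haM⟩, fun haM => by omega⟩
  | @cons a b c x ha tail ih =>
    obtain ⟨ihlow, ihtop⟩ := ih hb
    have hnext : a + letterHeight φ c ≤ M + 1 := tail.left_mem.2
    constructor
    · intro haM
      rcases hnext.lt_or_eq with hlt | heq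
      · exact .cons c ⟨ha.1, haM⟩ (ihlow (by omega))
      · have hc := (hup c (by omega)).trans (ihtop heq)
        rw [← heq, add_sub_cancel_right] at hc
        simpa [mul_assoc] using hc
    · rintro rfl
      rcases (show letterHeight φ c ≤ 0 by omega).lt_or_eq with hneg | hzero
      · have hc := (hup (invLetter c) (by simpa using hneg)).symm
        simp only [letterHeight_invLetter, sub_neg_eq_add, evalLetter_invLetter] at hc
        simpa [mul_assoc] using hc.trans (ihlow (by omega))
      · simpa [mul_assoc] using (hflat c hzero).trans (ihtop (by omega))

/-- For every generator other than the `m`-th, `G` satisfies a relation with a peak detour along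
that generator. -/
def HasPeakRelations (g : ι → G) (φ : ι → ℤ) (m : ι) : Prop :=
  ∀ j ≠ m, ∃ w, HasPeakDetour φ m j w ∧ evalWord g w = 1

variable [Finite ι] {m : ι}

theorem eventually_forall_stripPath_up (hmax : ∀ j, |φ j| ≤ |φ m|) (hrel : HasPeakRelations g φ m) :
    ∀ᶠ M : ℤ in atTop, ∀ c, 0 < letterHeight φ c →
      StripPath g φ (Set.Icc 0 M) (M + 1 - letterHeight φ c)
        (M + 1 - letterHeight φ (upLetter φ m))
        (evalLetter g c * (evalLetter g (upLetter φ m))⁻¹) := by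
  refine eventually_all.2 fun c => eventually_imp_distrib_left.2 fun hc => ?_
  have hup := eq_upLetter_of_letterHeight_pos hc
  rcases eq_or_ne c.1 m with hcm | hcm
  · rw [hcm] at hup
    subst hup
    filter_upwards [eventually_ge_atTop |φ m|] with M hM
    rw [mul_inv_cancel]
    rw [letterHeight_upLetter] at hc ⊢
    exact .nil ⟨by omega, by omega⟩
  · obtain ⟨_, ⟨A, B, hpeak, hheight, rfl⟩, hAB⟩ := hrel c.1 hcm
    rw [hup] at hc ⊢
    exact eventually_stripPath_of_letterHeight_pos hpeak hheight hAB hc (by simpa using hmax c.1)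

theorem eventually_forall_stripPath_flat (hm : φ m ≠ 0) (hrel : HasPeakRelations g φ m) :
    ∀ᶠ M : ℤ in atTop, ∀ c, letterHeight φ c = 0 →
      StripPath g φ (Set.Icc 0 M) (M + 1 - letterHeight φ (upLetter φ m))
        (M + 1 - letterHeight φ (upLetter φ m))
        (evalLetter g (upLetter φ m) * evalLetter g c * (evalLetter g (upLetter φ m))⁻¹) := by
  refine eventually_all.2 fun c => eventually_imp_distrib_left.2 fun hc => ?_
  have hupc : letterHeight φ (upLetter φ c.1) = 0 := by
    rw [letterHeight_upLetter]
    rcases c with ⟨j, _ | _⟩ <;> simpa [letterHeight] using hc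
  have hcm : c.1 ≠ m := fun h => hm (by simpa [h] using hupc)
  obtain ⟨_, ⟨A, B, hpeak, hheight, rfl⟩, hAB⟩ := hrel c.1 hcm
  have hpath := eventually_stripPath_of_letterHeight_eq_zero hpeak hheight hAB hupc (by simpa)
  rcases eq_upLetter_or_eq_invLetter_upLetter φ c with hup | hdown
  · rwa [← hup] at hpath
  · filter_upwards [hpath] with M hM
    rw [hdown]
    simpa [mul_assoc] using hM.symm

theorem exists_forall_stripPath_Icc (hm : φ m ≠ 0) (hmax : ∀ j, |φ j| ≤ |φ m|)
    (hrel : HasPeakRelations g φ m) :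
    ∃ M₀ : ℤ, 0 ≤ M₀ ∧ ∀ M x, StripPath g φ (Set.Icc 0 M) 0 0 x →
      StripPath g φ (Set.Icc 0 M₀) 0 0 x := by
  obtain ⟨M₀, hM₀⟩ := eventually_atTop.1
    ((eventually_forall_stripPath_up hmax hrel).and
      ((eventually_forall_stripPath_flat hm hrel).and (eventually_ge_atTop 0)))
  have hdescend : ∀ M, M₀ ≤ M → ∀ x, StripPath g φ (Set.Icc 0 M) 0 0 x →
      StripPath g φ (Set.Icc 0 M₀) 0 0 x := by
    refine Int.leInduction (fun x hx => hx) fun M hM ih x hx => ih x ?_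
    obtain ⟨hup, hflat, hpos⟩ := hM₀ M hM
    exact (hx.lower hup hflat hpos).1 hpos
  refine ⟨M₀, (hM₀ M₀ le_rfl).2.2, fun M x hx => hdescend (max M M₀) (le_max_right _ _) x ?_⟩
  exact hx.mono (Set.Icc_subset_Icc_right (le_max_left _ _))

end Stabilisation

section Translations

variable {G L : Type*} [Group G] [Field L] {K : Subgroup G} {ρ : G →* Equiv.Perm L}

/-- The translation lengths `ρ x 0` of the elements `x` of `K` form a nonzero finitely generated
`ℤ`-module stable under `β⁻¹`. -/
theorem isIntegral_inv_of_conj_mem (hK : K.FG) (htrans : ∀ x ∈ K, ∀ v, ρ x v = v + ρ x 0) {t : G}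
    {β : L} (ht : ∀ v, ρ t v = β * v) (hconj : ∀ x ∈ K, t⁻¹ * x * t ∈ K) {x : G} (hx : x ∈ K)
    (hx0 : ρ x 0 ≠ 0) : IsIntegral ℤ β⁻¹ := by
  have hβ : β ≠ 0 := fun h => one_ne_zero ((ρ t).injective (by rw [ht, ht, h, zero_mul, zero_mul]))
  have htinv : ∀ v, ρ t⁻¹ v = β⁻¹ * v := fun v => by
    rw [map_inv, Equiv.Perm.inv_eq_iff_eq, ht, mul_inv_cancel_left₀ hβ]
  let τ : Additive K →+ L := AddMonoidHom.mk' (fun y => ρ y.toMul 0) fun y z => by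
    rw [toMul_add, Subgroup.coe_mul, map_mul, Equiv.Perm.mul_apply, htrans _ y.toMul.2, add_comm]
  let T : Submodule ℤ L := AddSubgroup.toIntSubmodule τ.range
  have hmem : ∀ {v}, v ∈ T ↔ ∃ y ∈ K, ρ y 0 = v := fun {v} =>
    ⟨fun ⟨y, hy⟩ => ⟨_, y.toMul.2, hy⟩, fun ⟨y, hyK, hy⟩ => ⟨Additive.ofMul ⟨y, hyK⟩, hy⟩⟩
  have hTfg : T.FG := by
    have : Group.FG K := (Group.fg_iff_subgroup_fg K).2 hK
    rw [Submodule.fg_iff_addSubgroup_fg]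
    exact (AddGroup.fg_iff_addSubgroup_fg _).1 (AddGroup.fg_range τ)
  have hTne : T ≠ ⊥ := fun hbot => hx0 <| by
    simpa [hbot] using hmem.2 ⟨x, hx, rfl⟩
  refine isIntegral_of_smul_mem_submodule T hTne hTfg β⁻¹ fun v hv => ?_
  obtain ⟨y, hy, rfl⟩ := hmem.1 hv
  exact hmem.2 ⟨_, hconj y hy, by
    rw [map_mul, map_mul, Equiv.Perm.mul_apply, Equiv.Perm.mul_apply, ht, mul_zero, htinv,
      smul_eq_mul]⟩

end Translations

section FoxCalculus

open Polynomial

variable {ι : Type*} {φ : ι → ℤ} {j k : ι} {a : ℤ}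

/-- The Fox derivative in the direction of `upLetter φ j` of a letter read from height `a`, with
group elements recorded by `X` to the power of their height. Heights are supposed to be
nonnegative; a negative height is read as `0`. -/
noncomputable def foxLetter (φ : ι → ℤ) (j : ι) (a : ℤ) (c : ι × Bool) : ℤ[X] :=
  if c = upLetter φ j then X ^ a.toNat
  else if c = invLetter (upLetter φ j) then -X ^ (a + letterHeight φ c).toNat else 0

/-- The Fox derivative in the direction of `upLetter φ j` of a word read from height `a`. -/
noncomputable def fox (φ : ι → ℤ) (j : ι) : ℤ → List (ι × Bool) → ℤ[X]
  | _, [] => 0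
  | a, c :: w => foxLetter φ j a c + fox φ j (a + letterHeight φ c) w

theorem upLetter_eq_upLetter : upLetter φ k = upLetter φ j ↔ k = j :=
  ⟨congrArg Prod.fst, congrArg _⟩

theorem invLetter_upLetter_ne (φ : ι → ℤ) (j k : ι) : invLetter (upLetter φ k) ≠ upLetter φ j := by
  intro h
  obtain rfl : k = j := congrArg Prod.fst h
  simpa using congrArg Prod.snd h

theorem foxLetter_upLetter :
    foxLetter φ j a (upLetter φ k) = if k = j then X ^ a.toNat else 0 := by
  simp [foxLetter, upLetter_eq_upLetter, (invLetter_upLetter_ne φ k j).symm]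

theorem foxLetter_invLetter_upLetter :
    foxLetter φ j a (invLetter (upLetter φ k)) =
      if k = j then -X ^ (a - |φ k|).toNat else 0 := by
  have hinj : invLetter (upLetter φ k) = invLetter (upLetter φ j) ↔ k = j :=
    ⟨congrArg Prod.fst, fun h => by rw [h]⟩
  simp [foxLetter, invLetter_upLetter_ne, hinj, sub_eq_add_neg]

theorem fox_append (φ : ι → ℤ) (j : ι) (a : ℤ) (u w : List (ι × Bool)) :
    fox φ j a (u ++ w) = fox φ j a u + fox φ j (a + height φ u) w := by
  induction u generalizing a with
  | nil => simp [fox]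
  | cons c u ih => simp [fox, ih, add_assoc]

theorem coeff_zero_fox_of_staysIn_Ioi {w : List (ι × Bool)} (h : StaysIn φ (Set.Ioi 0) a w) :
    (fox φ j a w).coeff 0 = 0 := by
  induction w generalizing a with
  | nil => simp [fox]
  | cons c w ih =>
    obtain ⟨ha, hw⟩ := staysIn_cons.1 h
    have hpow : ∀ {b : ℤ}, b ∈ Set.Ioi 0 → (X ^ b.toNat : ℤ[X]).coeff 0 = 0 := fun {b} hb => by
      rw [coeff_X_pow, if_neg (by rw [Set.mem_Ioi] at hb; omega)]
    rw [fox, coeff_add, ih hw, add_zero, foxLetter]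
    split_ifs
    · exact hpow ha
    · rw [coeff_neg, hpow hw.left_mem, neg_zero]
    · simp

/-- The two passages of the detour through height `0` are along the generator `k`, and both
contribute `X ^ 0`. -/
theorem coeff_zero_fox_doubleDetour {m : ι} (hm : φ m ≠ 0) (hj : j ≠ m) (k : ι) :
    (fox φ j (2 * |φ m|)
      (doubleDetour (invLetter (upLetter φ m)) (invLetter (upLetter φ k)))).coeff 0 =
      if k = j then 2 else 0 := by
  have hpos : 0 < |φ m| := abs_pos.2 hm
  have hbottom : (2 * |φ m| - |φ m| - |φ m|).toNat = 0 := by omega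
  rcases eq_or_ne k j with rfl | hkj
  · have hreturn : ∀ b : ℤ, b + |φ k| + |φ m| - |φ k| = b + |φ m| := fun b => by ring
    have hmiddle : 0 ≠ (2 * |φ m| - |φ m|).toNat := by omega
    simp [doubleDetour, fox, foxLetter_upLetter, foxLetter_invLetter_upLetter, hj.symm,
      ← sub_eq_add_neg, hreturn, hbottom, coeff_X_pow, hmiddle]
  · simp [doubleDetour, fox, foxLetter_upLetter, foxLetter_invLetter_upLetter, hkj, hj.symm]

end FoxCalculus

section ValleyDetours

open Polynomial

variable {ι : Type*} {φ : ι → ℤ} {m k : ι} {w : List (ι × Bool)}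

theorem height_singleDetour (φ : ι → ℤ) (s z : ι × Bool) : height φ (singleDetour s z) = 0 := by
  simp only [singleDetour, height_cons, height_nil, letterHeight_invLetter]
  ring

@[simp] theorem height_doubleDetour (φ : ι → ℤ) (s z : ι × Bool) :
    height φ (doubleDetour s z) = 0 := by
  simp only [doubleDetour, height_cons, height_nil, letterHeight_invLetter]
  ring

theorem HasValleyDetour.height_eq_zero (h : HasValleyDetour φ m k w) : height φ w = 0 := by
  obtain ⟨A, B, -, hheight, rfl⟩ := h
  simpa using hheight

theorem staysIn_doubleDetour (φ : ι → ℤ) (m k : ι) : StaysIn φ (Set.Ici 0) (2 * |φ m|)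
    (doubleDetour (invLetter (upLetter φ m)) (invLetter (upLetter φ k))) := by
  have hm := abs_nonneg (φ m)
  have hk := abs_nonneg (φ k)
  simp only [doubleDetour, invLetter_invLetter, staysIn_cons, staysIn_nil, letterHeight_invLetter,
    letterHeight_upLetter, Set.mem_Ici]
  omega

/-- Read from the height which puts the bottom of the detour at `0`, the word is above `0` outside
the detour. -/
theorem HasValleyDetour.exists_coeff_zero_fox (h : HasValleyDetour φ m k w) (hm : φ m ≠ 0) :
    ∃ a, StaysIn φ (Set.Ici 0) a w ∧
      ∀ j ≠ m, (fox φ j a w).coeff 0 = if k = j then 2 else 0 := by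
  obtain ⟨A, B, ⟨hA, hB⟩, -, rfl⟩ := h
  have hpos : 0 < |φ m| := abs_pos.2 hm
  have hAabove : StaysIn φ (Set.Ioi 0) (2 * |φ m| - height φ A) A := by
    convert (staysIn_neg.1 hA).map (d := 2 * |φ m| - height φ A) (t := Set.Ioi 0) fun x hx => ?_
      using 1
    · ring
    · simp only [height_neg, Set.mem_neg, Set.mem_Iic, Set.mem_Ioi] at hx ⊢
      omega
  have hBabove : StaysIn φ (Set.Ioi 0) (2 * |φ m|) B := by
    convert (staysIn_neg.1 hB).map (d := 2 * |φ m|) (t := Set.Ioi 0) fun x hx => ?_ using 1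
    · ring
    · simp only [Set.mem_neg, Set.mem_Iic, Set.mem_Ioi] at hx ⊢
      omega
  refine ⟨2 * |φ m| - height φ A, ?_, fun j hj => ?_⟩
  · simp only [staysIn_append, height_append, height_doubleDetour, add_zero, sub_add_cancel]
    exact ⟨⟨fun u hu => Set.Ioi_subset_Ici_self (hAabove u hu), staysIn_doubleDetour φ m k⟩,
      fun u hu => Set.Ioi_subset_Ici_self (hBabove u hu)⟩
  · simp only [fox_append, height_append, height_doubleDetour, add_zero, sub_add_cancel, coeff_add,
      coeff_zero_fox_of_staysIn_Ioi hAabove, coeff_zero_fox_of_staysIn_Ioi hBabove, zero_add,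
      coeff_zero_fox_doubleDetour hm hj]

theorem coeff_zero_det_of_forall_coeff_zero {R κ : Type*} [CommRing R] [Fintype κ] [DecidableEq κ]
    {P : Matrix κ κ R[X]} {d : R} (hP : ∀ i j, (P i j).coeff 0 = if i = j then d else 0) :
    P.det.coeff 0 = d ^ Fintype.card κ := by
  have hconst : (constantCoeff : R[X] →+* R).mapMatrix P = Matrix.diagonal fun _ => d := by
    ext i j
    simpa [Matrix.diagonal_apply] using hP i j
  rw [← constantCoeff_apply, RingHom.map_det, hconst, Matrix.det_diagonal, Finset.prod_const,
    Finset.card_univ]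

end ValleyDetours

section AffineRepresentations

open Polynomial

variable {ι L : Type*} [Field L] {φ : ι → ℤ} {α : Lˣ} {δ : ι → L}

/-- The affine transformation `v ↦ α ^ k * v + d` of the line over `L`. -/
def affinePerm (α : Lˣ) (k : ℤ) (d : L) : Equiv.Perm L :=
  (MulAction.toPerm (α ^ k)).trans (Equiv.addRight d)

@[simp] theorem affinePerm_apply (α : Lˣ) (k : ℤ) (d v : L) :
    affinePerm α k d v = (α : L) ^ k * v + d := by
  simp [affinePerm, Units.smul_def]

@[simp] theorem affinePerm_inv_apply (α : Lˣ) (k : ℤ) (d v : L) :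
    (affinePerm α k d)⁻¹ v = (α : L) ^ (-k) * (v - d) := by
  rw [Equiv.Perm.inv_eq_iff_eq, affinePerm_apply, ← mul_assoc, ← zpow_add₀ α.ne_zero]
  simp

/-- The affine images of the generators for which every letter of height `k` has linear part
`α ^ k` and `upLetter φ j` sends `0` to `δ j`. -/
def affineGen (φ : ι → ℤ) (α : Lˣ) (δ : ι → L) (j : ι) : Equiv.Perm L :=
  if 0 ≤ φ j then affinePerm α |φ j| (δ j) else (affinePerm α |φ j| (δ j))⁻¹

@[simp] theorem evalLetter_affineGen_upLetter (φ : ι → ℤ) (α : Lˣ) (δ : ι → L) (j : ι) :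
    evalLetter (affineGen φ α δ) (upLetter φ j) = affinePerm α |φ j| (δ j) := by
  by_cases h : 0 ≤ φ j <;> simp [evalLetter, upLetter, affineGen, h]

theorem evalLetter_affineGen (φ : ι → ℤ) (α : Lˣ) (δ : ι → L) (c : ι × Bool) (v : L) :
    evalLetter (affineGen φ α δ) c v =
      (α : L) ^ letterHeight φ c * v + evalLetter (affineGen φ α δ) c 0 := by
  rcases eq_upLetter_or_eq_invLetter_upLetter φ c with hc | hc <;> rw [hc]
  · simp
  · simp [mul_add, sub_eq_add_neg]

theorem evalWord_affineGen (φ : ι → ℤ) (α : Lˣ) (δ : ι → L) (w : List (ι × Bool)) (v : L) :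
    evalWord (affineGen φ α δ) w v =
      (α : L) ^ height φ w * v + evalWord (affineGen φ α δ) w 0 := by
  induction w generalizing v with
  | nil => simp
  | cons c w ih =>
    simp only [evalWord_cons, Equiv.Perm.mul_apply, height_cons]
    rw [evalLetter_affineGen, ih v,
      evalLetter_affineGen φ α δ c (evalWord (affineGen φ α δ) w 0), zpow_add₀ α.ne_zero]
    ring

theorem evalWord_affineGen_commutator {m : ι} (hδ : δ m = 0) (j : ι) :
    evalWord (affineGen φ α δ)
      [upLetter φ m, upLetter φ j, invLetter (upLetter φ m), invLetter (upLetter φ j)] 0 =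
      ((α : L) ^ |φ m| - 1) * δ j := by
  simp only [evalWord_cons, evalWord_nil, evalLetter_invLetter, mul_one, Equiv.Perm.mul_apply,
    evalLetter_affineGen_upLetter, affinePerm_inv_apply, affinePerm_apply, hδ, zpow_neg]
  field_simp
  ring

variable [Fintype ι] {a : ℤ}

theorem zpow_mul_evalLetter_affineGen {c : ι × Bool} (ha : 0 ≤ a) (hac : 0 ≤ a + letterHeight φ c) :
    (α : L) ^ a * evalLetter (affineGen φ α δ) c 0 =
      ∑ j, aeval (α : L) (foxLetter φ j a c) * δ j := by
  have hpow : ∀ {b : ℤ}, 0 ≤ b → aeval (α : L) (X ^ b.toNat : ℤ[X]) = (α : L) ^ b :=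
    fun {b} hb => by rw [map_pow, aeval_X, ← zpow_natCast, Int.toNat_of_nonneg hb]
  rcases eq_upLetter_or_eq_invLetter_upLetter φ c with hc | hc <;> rw [hc] at hac ⊢
  · simp [foxLetter_upLetter, apply_ite (aeval (α : L)), ite_mul, hpow ha, -map_pow]
  · simp only [letterHeight_invLetter, letterHeight_upLetter] at hac
    simp [foxLetter_invLetter_upLetter, apply_ite (aeval (α : L)), ite_mul, hpow hac, -map_pow,
      zpow_add₀ α.ne_zero, sub_eq_add_neg, mul_assoc]

/-- The fundamental formula of Fox calculus. -/
theorem zpow_mul_evalWord_affineGen {w : List (ι × Bool)} (h : StaysIn φ (Set.Ici 0) a w) :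
    (α : L) ^ a * evalWord (affineGen φ α δ) w 0 = ∑ j, aeval (α : L) (fox φ j a w) * δ j := by
  induction w generalizing a with
  | nil => simp [fox]
  | cons c w ih =>
    obtain ⟨ha, hw⟩ := staysIn_cons.1 h
    simp only [evalWord_cons, Equiv.Perm.mul_apply, fox, map_add, add_mul, Finset.sum_add_distrib]
    rw [evalLetter_affineGen, mul_add, zpow_mul_evalLetter_affineGen ha hw.left_mem, ← ih hw,
      zpow_add₀ α.ne_zero]
    ring

end AffineRepresentations

section NotSubgroupSeparable

open Polynomial

variable {ι : Type*} [Finite ι] {φ : ι → ℤ} {m : ι}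

/-- The translation parts solve the linear system given by the Fox derivatives of the relators; its
determinant has constant coefficient `2 ^ card {j // j ≠ m}`, hence a root `α` with `α⁻¹` not
integral. -/
theorem exists_affineGen_forall_evalWord_eq_one [Nonempty {j // j ≠ m}] (hm : φ m ≠ 0)
    {r : {j // j ≠ m} → List (ι × Bool)}
    (hr : ∀ j : {j // j ≠ m}, HasValleyDetour φ m j (r j)) :
    ∃ (L : Type) (_ : Field L) (α : Lˣ) (δ : ι → L), ¬IsIntegral ℤ (α⁻¹ : L) ∧ δ m = 0 ∧ δ ≠ 0 ∧
      ∀ j, evalWord (affineGen φ α δ) (r j) = 1 := by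
  cases nonempty_fintype ι
  choose a hstay hcoeff using fun j => (hr j).exists_coeff_zero_fox hm
  let P : Matrix {j // j ≠ m} {j // j ≠ m} ℤ[X] := fun i j => fox φ j (a i) (r i)
  have hdet : P.det.coeff 0 = 2 ^ Fintype.card {j // j ≠ m} :=
    coeff_zero_det_of_forall_coeff_zero fun i j => by simp [P, hcoeff i j j.2, Subtype.ext_iff]
  obtain ⟨L, _, α, hroot, hα⟩ := exists_root_inv_not_isIntegral (P := P.det)
    (by rw [hdet]; positivity)
    (by rw [hdet, isUnit_pow_iff Fintype.card_ne_zero, Int.isUnit_iff]; norm_num)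
  have hdetα : ((aeval (α : L)).toRingHom.mapMatrix P).det = 0 := by
    rw [← RingHom.map_det]
    exact hroot
  obtain ⟨δ, hδ, hPδ⟩ := Matrix.exists_mulVec_eq_zero_iff.2 hdetα
  let δ' : ι → L := fun j => if h : j ≠ m then δ ⟨j, h⟩ else 0
  have hδ' : ∀ j : {j // j ≠ m}, δ' j = δ j := fun j => dif_pos j.2
  have hδm : δ' m = 0 := dif_neg (not_not.2 rfl)
  refine ⟨L, _, α, δ', hα, hδm, fun h => hδ ?_, fun i => Equiv.ext fun v => ?_⟩
  · ext j
    rw [← hδ', h, Pi.zero_apply, Pi.zero_apply]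
  · have hsum : ∑ j, aeval (α : L) (fox φ j (a i) (r i)) * δ' j = 0 := by
      rw [← Fintype.sum_of_injective _ Subtype.val_injective
        (fun j => aeval (α : L) (P i j) * δ j) _ (fun j hj => ?_) fun j => by rw [hδ']]
      · exact congrFun hPδ i
      · obtain rfl : j = m := by simpa using hj
        rw [hδm, mul_zero]
    have h0 : evalWord (affineGen φ α δ') (r i) 0 = 0 := by
      simpa [hsum, zpow_ne_zero] using zpow_mul_evalWord_affineGen (α := α) (δ := δ') (hstay i)
    rw [evalWord_affineGen, h0, (hr i).height_eq_zero]
    simp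

variable {G : Type*} [Group G] {g : ι → G}

theorem exists_fg_conj_mem (hm : φ m ≠ 0) (hmax : ∀ j, |φ j| ≤ |φ m|)
    (hrel : HasPeakRelations g φ m) :
    ∃ K : Subgroup G, K.FG ∧ (∀ x ∈ K, ∃ w, evalWord g w = x ∧ height φ w = 0) ∧
      (∀ w M, StaysIn φ (Set.Icc 0 M) 0 w → height φ w = 0 → evalWord g w ∈ K) ∧
      ∀ x ∈ K, evalLetter g (upLetter φ m) * x * (evalLetter g (upLetter φ m))⁻¹ ∈ K := by
  obtain ⟨M₀, hM₀, hstable⟩ := exists_forall_stripPath_Icc hm hmax hrel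
  have hmem : (0 : ℤ) ∈ Set.Icc 0 M₀ := ⟨le_rfl, hM₀⟩
  refine ⟨loopSubgroup g φ (Set.Icc 0 M₀) hmem, loopSubgroup_fg (Set.finite_Icc 0 M₀),
    fun x hx => ?_, fun w M hw h0 => hstable M _ ?_, fun x hx => hstable (M₀ + |φ m|) _ ?_⟩
  · simpa using (mem_loopSubgroup.1 hx).exists_word
  · simpa [h0] using StripPath.of_staysIn (g := g) hw
  · have hpos := abs_nonneg (φ m)
    have hup : StripPath g φ (Set.Icc 0 (M₀ + |φ m|)) 0 |φ m| (evalLetter g (upLetter φ m)) := by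
      simpa using StripPath.of_staysIn (g := g) (φ := φ) (s := Set.Icc 0 (M₀ + |φ m|)) (a := 0)
        (w := [upLetter φ m]) (by
          simp only [staysIn_cons, staysIn_nil, letterHeight_upLetter, Set.mem_Icc]
          omega)
    have hshift : StripPath g φ (Set.Icc 0 (M₀ + |φ m|)) (0 + |φ m|) (0 + |φ m|) x :=
      (mem_loopSubgroup.1 hx).shift fun k hk => by rw [Set.mem_Icc] at hk ⊢; omega
    rw [zero_add] at hshift
    exact (hup.trans hshift).trans hup.symm

theorem not_subgroupSeparable_of_affineGen {L : Type*} [Field L] {α : Lˣ} {δ : ι → L}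
    (hm : φ m ≠ 0) (hmax : ∀ j, |φ j| ≤ |φ m|) (hrel : HasPeakRelations g φ m)
    (ρ : G →* Equiv.Perm L) (hρ : ∀ j, ρ (g j) = affineGen φ α δ j)
    (hα : ¬IsIntegral ℤ (α⁻¹ : L)) (hδm : δ m = 0) (hδ : δ ≠ 0) : ¬SubgroupSeparable G := by
  intro hG
  obtain ⟨K, hK, hKword, hwordK, hconj⟩ := exists_fg_conj_mem hm hmax hrel
  have hρword : ∀ w, ρ (evalWord g w) = evalWord (affineGen φ α δ) w := fun w => by
    rw [map_evalWord, funext hρ]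
  have hρletter : ∀ c, ρ (evalLetter g c) = evalLetter (affineGen φ α δ) c := fun c => by
    rw [map_evalLetter, funext hρ]
  have htrans : ∀ x ∈ K, ∀ v, ρ x v = v + ρ x 0 := fun x hx v => by
    obtain ⟨w, rfl, hw⟩ := hKword x hx
    rw [hρword, evalWord_affineGen, hw, zpow_zero, one_mul]
  have hαpow : ¬IsIntegral ℤ ((α : L) ^ |φ m|)⁻¹ := fun hint => by
    rw [← Int.natCast_natAbs, zpow_natCast, ← inv_pow] at hint
    exact hα (hint.of_pow (Int.natAbs_pos.2 hm))
  obtain ⟨j, hj⟩ := Function.ne_iff.1 hδ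
  let w : List (ι × Bool) :=
    [upLetter φ m, upLetter φ j, invLetter (upLetter φ m), invLetter (upLetter φ j)]
  have hwK : evalWord g w ∈ K := by
    have hm0 := abs_nonneg (φ m)
    have hj0 := abs_nonneg (φ j)
    refine hwordK w (|φ m| + |φ j|) ?_ (by simp [w])
    simp only [w, staysIn_cons, staysIn_nil, letterHeight_invLetter, letterHeight_upLetter,
      Set.mem_Icc]
    omega
  have hw0 : ρ (evalWord g w) 0 = ((α : L) ^ |φ m| - 1) * δ j := by
    rw [hρword, evalWord_affineGen_commutator hδm]
  have hne : (α : L) ^ |φ m| - 1 ≠ 0 := fun h => hαpow <| by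
    rw [sub_eq_zero.1 h, inv_one]
    exact isIntegral_one
  exact hαpow (isIntegral_inv_of_conj_mem hK htrans (t := evalLetter g (upLetter φ m))
    (fun v => by simp [hρletter, hδm])
    (fun x hx => inv_mul_mul_mem_of_subgroupSeparable hG hK hconj hx) hwK
    (hw0 ▸ mul_ne_zero hne hj))

end NotSubgroupSeparable

section PresentedGroups

variable {n : ℕ} {φ : Fin (n + 1) → ℤ} {m : Fin (n + 1)} {r : Fin n → RWord n}

theorem evalWord_presentedGroup_of (r : Fin n → RWord n) (i : Fin n) :
    evalWord (PresentedGroup.of : Fin (n + 1) → PresentedGroup (relsOf r)) (r i) = 1 := by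
  have hmk : FreeGroup.lift PresentedGroup.of = PresentedGroup.mk (relsOf r) :=
    FreeGroup.ext_hom _ _ fun j => by rw [FreeGroup.lift_apply_of, PresentedGroup.of]
  rw [← lift_mk_eq_evalWord, hmk]
  exact PresentedGroup.one_of_mem ⟨i, rfl⟩

/-- The relators are matched with the generators other than the `m`-th through `m.succAbove`. -/
theorem not_subgroupSeparable_presentedGroup (hn : 1 ≤ n) (hm : φ m ≠ 0)
    (hmax : ∀ j, |φ j| ≤ |φ m|) (hpeak : ∀ i, HasPeakDetour φ m (m.succAbove i) (r i))
    (hvalley : ∀ i, HasValleyDetour φ m (m.succAbove i) (r i)) :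
    ¬SubgroupSeparable (PresentedGroup (relsOf r)) := by
  have : NeZero n := ⟨by omega⟩
  let e := finSuccAboveEquiv m
  have : Nonempty {j // j ≠ m} := ⟨e 0⟩
  have he : ∀ j : {j // j ≠ m}, m.succAbove (e.symm j) = j := fun j =>
    congrArg Subtype.val (e.apply_symm_apply j)
  obtain ⟨L, _, α, δ, hα, hδm, hδ, hone⟩ := exists_affineGen_forall_evalWord_eq_one hm
    (r := fun j => r (e.symm j)) fun j => by
      simpa only [he] using hvalley (e.symm j)
  have hlift : ∀ x ∈ relsOf r, FreeGroup.lift (affineGen φ α δ) x = 1 := by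
    rintro _ ⟨i, rfl⟩
    rw [lift_mk_eq_evalWord]
    simpa using hone (e i)
  refine not_subgroupSeparable_of_affineGen (g := PresentedGroup.of) hm hmax (fun j hj => ?_)
    (PresentedGroup.toGroup hlift) (fun j => PresentedGroup.toGroup.of hlift) hα hδm hδ
  obtain ⟨i, rfl⟩ := Fin.exists_succAbove_eq hj
  exact ⟨r i, hpeak i, evalWord_presentedGroup_of r i⟩

end PresentedGroups

section FirstPeaks

variable {ι : Type*} {φ : ι → ℤ} {A B P Q D : List (ι × Bool)}

/-- The path spelled by `A ++ B` reaches its maximal height for the first time at the end of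
`A`. -/
def IsFirstPeak (φ : ι → ℤ) (A B : List (ι × Bool)) : Prop :=
  (∀ u, u <+: A → u ≠ A → height φ u < height φ A) ∧ StaysIn φ (Set.Iic 0) 0 B

theorem IsFirstPeak.isPeak (h : IsFirstPeak φ A B) : IsPeak φ A B := by
  refine ⟨fun u hu => ?_, h.2⟩
  rcases eq_or_ne u A with rfl | hne
  · simp
  · simpa using (h.1 u hu hne).le

theorem IsFirstPeak.height_nonneg (h : IsFirstPeak φ A B) : 0 ≤ height φ A := by
  simpa using h.isPeak.1.left_mem

theorem IsFirstPeak.eq_left_of_isPrefix {A' B' : List (ι × Bool)} (h : IsFirstPeak φ A B)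
    (h' : IsFirstPeak φ A' B') (hAB : A ++ B = A' ++ B') (hA : A <+: A') : A = A' := by
  by_contra hne
  obtain ⟨C, rfl⟩ := hA
  rw [List.append_assoc, List.append_cancel_left_eq] at hAB
  have hlt := h'.1 A (List.prefix_append _ _) hne
  have hC := h.2 C (hAB ▸ List.prefix_append _ _)
  simp only [height_append, Set.mem_Iic] at hlt hC
  omega

theorem IsFirstPeak.eq_left {A' B' : List (ι × Bool)} (h : IsFirstPeak φ A B)
    (h' : IsFirstPeak φ A' B') (hAB : A ++ B = A' ++ B') : A = A' := by
  rcases List.prefix_or_prefix_of_prefix (List.prefix_append A B) (hAB ▸ List.prefix_append A' B')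
    with hA | hA
  · exact h.eq_left_of_isPrefix h' hAB hA
  · exact (h'.eq_left_of_isPrefix h hAB.symm hA).symm

theorem IsFirstPeak.insert (h : IsFirstPeak φ A B) (hD : IsFirstPeak φ P Q)
    (h0 : height φ (P ++ Q) = 0) : IsFirstPeak φ (A ++ P) (Q ++ B) := by
  have hP := hD.height_nonneg
  rw [height_append] at h0
  refine ⟨fun u hu hne => ?_, staysIn_append.2 ⟨hD.2, fun u hu => ?_⟩⟩
  · rw [height_append]
    rcases List.prefix_or_prefix_of_prefix hu (List.prefix_append A P) with huA | ⟨v, rfl⟩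
    · rcases eq_or_ne u A with rfl | huA'
      · have := hD.1 [] List.nil_prefix (by rintro rfl; simp at hne)
        rw [height_nil] at this
        omega
      · have := h.1 u huA huA'
        omega
    · have := hD.1 v ((List.prefix_append_right_inj A).1 hu) (by rintro rfl; exact hne rfl)
      rw [height_append]
      omega
  · have := h.2 u hu
    simp only [Set.mem_Iic] at this ⊢
    omega

/-- The decomposition of a word at its first highest point. -/
def splitAtPeak (φ : ι → ℤ) : List (ι × Bool) → List (ι × Bool) × List (ι × Bool)
  | [] => ([], [])
  | c :: w =>
    if 0 < letterHeight φ c + height φ (splitAtPeak φ w).1 then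
      (c :: (splitAtPeak φ w).1, (splitAtPeak φ w).2)
    else ([], c :: w)

theorem splitAtPeak_append (φ : ι → ℤ) (w : List (ι × Bool)) :
    (splitAtPeak φ w).1 ++ (splitAtPeak φ w).2 = w := by
  induction w with
  | nil => rfl
  | cons c w ih => rw [splitAtPeak]; split_ifs <;> simp [ih]

theorem isFirstPeak_splitAtPeak (φ : ι → ℤ) (w : List (ι × Bool)) :
    IsFirstPeak φ (splitAtPeak φ w).1 (splitAtPeak φ w).2 := by
  induction w with
  | nil => simp [splitAtPeak, IsFirstPeak]
  | cons c w ih =>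
    rw [splitAtPeak]
    split_ifs with h
    · refine ⟨fun u hu hne => ?_, ih.2⟩
      rcases List.prefix_cons_iff.1 hu with rfl | ⟨v, rfl, hv⟩
      · simpa using h
      · simpa using ih.1 v hv (by rintro rfl; exact hne rfl)
    · refine ⟨by simp, staysIn_cons.2 ⟨by simp, ?_⟩⟩
      rw [← splitAtPeak_append φ w, staysIn_append]
      refine ⟨fun u hu => ?_, fun u hu => ?_⟩
      · have := ih.isPeak.1 u hu
        simp only [Set.mem_Iic] at this ⊢
        omega
      · have := ih.2 u hu
        simp only [Set.mem_Iic] at this ⊢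
        omega

/-- The word obtained by inserting `D` at the first highest point of `w`. -/
def insertAtPeak (φ : ι → ℤ) (D w : List (ι × Bool)) : List (ι × Bool) :=
  (splitAtPeak φ w).1 ++ D ++ (splitAtPeak φ w).2

theorem length_insertAtPeak (φ : ι → ℤ) (D w : List (ι × Bool)) :
    (insertAtPeak φ D w).length = w.length + D.length := by
  conv_rhs => rw [← splitAtPeak_append φ w]
  simp only [insertAtPeak, List.length_append]
  omega

theorem height_insertAtPeak {ψ : ι → ℤ} (hD : height ψ D = 0) (φ : ι → ℤ) (w : List (ι × Bool)) :
    height ψ (insertAtPeak φ D w) = height ψ w := by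
  conv_rhs => rw [← splitAtPeak_append φ w]
  simp [insertAtPeak, hD]

/-- After the insertion, the first highest point is that of the inserted word. -/
theorem insertAtPeak_injective (hPQ : IsFirstPeak φ P Q) (h0 : height φ (P ++ Q) = 0) :
    Function.Injective (insertAtPeak φ (P ++ Q)) := by
  intro w w' hw
  have hsplit : ∀ v, IsFirstPeak φ ((splitAtPeak φ v).1 ++ P) (Q ++ (splitAtPeak φ v).2) := fun v =>
    (isFirstPeak_splitAtPeak φ v).insert hPQ h0
  have hins : ((splitAtPeak φ w).1 ++ P) ++ (Q ++ (splitAtPeak φ w).2) =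
      ((splitAtPeak φ w').1 ++ P) ++ (Q ++ (splitAtPeak φ w').2) := by
    simpa [insertAtPeak] using hw
  have hleft := (hsplit w).eq_left (hsplit w') hins
  rw [hleft, List.append_cancel_left_eq, List.append_cancel_left_eq] at hins
  rw [List.append_cancel_right_eq] at hleft
  rw [← splitAtPeak_append φ w, ← splitAtPeak_append φ w', hleft, hins]

end FirstPeaks

section Insertion

variable {ι : Type*} {φ : ι → ℤ} {A B D S w : List (ι × Bool)} {m j : ι}

/-- The properties of a word which make its insertion at the first highest point of a word
reversible and compatible with cyclic reducedness. -/
structure IsDetour (φ : ι → ℤ) (D : List (ι × Bool)) : Prop where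
  isReduced : FreeGroup.IsReduced D
  height_eq_zero : height φ D = 0
  staysIn : StaysIn φ (Set.Ici 0) 0 D
  exists_isFirstPeak : ∃ P Q, D = P ++ Q ∧ IsFirstPeak φ P Q
  exists_eq_cons_append : ∃ s E, 0 < letterHeight φ s ∧ D = s :: E ++ [invLetter s]

theorem isFirstPeak_pair {s : ι × Bool} {Q : List (ι × Bool)} (hs : 0 < letterHeight φ s)
    (hQ : StaysIn φ (Set.Iic 0) 0 Q) : IsFirstPeak φ [s, s] Q := by
  refine ⟨fun u hu hne => ?_, hQ⟩
  simp only [List.prefix_cons_iff, List.prefix_nil] at hu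
  rcases hu with rfl | ⟨_, rfl, rfl | ⟨_, rfl, rfl⟩⟩
  · simpa using hs
  · simpa using hs
  · exact absurd rfl hne

theorem isDetour_singleDetour {s z : ι × Bool} (hs : 0 < letterHeight φ s)
    (hz : 0 ≤ letterHeight φ z) (hzs : letterHeight φ z ≤ letterHeight φ s) (hne : s.1 ≠ z.1) :
    IsDetour φ (singleDetour s z) where
  isReduced := by simp [singleDetour, FreeGroup.IsReduced, hne, hne.symm]
  height_eq_zero := height_singleDetour φ s z
  staysIn := by
    simp only [singleDetour, staysIn_cons, staysIn_nil, letterHeight_invLetter, Set.mem_Ici]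
    omega
  exists_isFirstPeak := ⟨[s, s], _, rfl, isFirstPeak_pair hs (by
    simp only [staysIn_cons, staysIn_nil, letterHeight_invLetter, Set.mem_Iic]
    omega)⟩
  exists_eq_cons_append := ⟨s, [s, invLetter z, invLetter s, z], hs, rfl⟩

theorem isDetour_doubleDetour {s z : ι × Bool} (hs : 0 < letterHeight φ s)
    (hz : 0 ≤ letterHeight φ z) (hzs : letterHeight φ z ≤ letterHeight φ s) (hne : s.1 ≠ z.1) :
    IsDetour φ (doubleDetour s z) where
  isReduced := by simp [doubleDetour, FreeGroup.IsReduced, hne, hne.symm]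
  height_eq_zero := height_doubleDetour φ s z
  staysIn := by
    simp only [doubleDetour, staysIn_cons, staysIn_nil, letterHeight_invLetter, Set.mem_Ici]
    omega
  exists_isFirstPeak := ⟨[s, s], _, rfl, isFirstPeak_pair hs (by
    simp only [staysIn_cons, staysIn_nil, letterHeight_invLetter, Set.mem_Iic]
    omega)⟩
  exists_eq_cons_append :=
    ⟨s, [s, invLetter z, invLetter s, z, s, invLetter z, invLetter s, z], hs, rfl⟩

theorem IsDetour.insertAtPeak_injective (hD : IsDetour φ D) :
    Function.Injective (insertAtPeak φ D) := by
  obtain ⟨P, Q, rfl, hPQ⟩ := hD.exists_isFirstPeak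
  exact RandomDeficiencyOne.insertAtPeak_injective hPQ hD.height_eq_zero

theorem hasPeakDetour_insertAtPeak (hw : height φ w = 0) :
    HasPeakDetour φ m j (insertAtPeak φ (singleDetour (upLetter φ m) (upLetter φ j)) w) :=
  ⟨_, _, (isFirstPeak_splitAtPeak φ w).isPeak, by rw [splitAtPeak_append, hw], rfl⟩

theorem hasValleyDetour_insertAtPeak (hw : height φ w = 0) :
    HasValleyDetour φ m j (insertAtPeak (-φ)
      (doubleDetour (invLetter (upLetter φ m)) (invLetter (upLetter φ j))) w) :=
  ⟨_, _, (isFirstPeak_splitAtPeak (-φ) w).isPeak, by rw [splitAtPeak_append, hw], rfl⟩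

theorem StaysIn.insert_Iic {a b : ℤ} {X Y : List (ι × Bool)}
    (h : StaysIn φ (Set.Iic b) a (X ++ Y)) (hD : StaysIn φ (Set.Iic 0) 0 D)
    (h0 : height φ D = 0) : StaysIn φ (Set.Iic b) a (X ++ D ++ Y) := by
  obtain ⟨hX, hY⟩ := staysIn_append.1 h
  refine staysIn_append.2 ⟨staysIn_append.2 ⟨hX, fun u hu => ?_⟩, by simpa [h0] using hY⟩
  have hu0 := hD u hu
  have hXb := hX.right_mem
  simp only [Set.mem_Iic] at hu0 hXb ⊢
  omega

/-- The first lowest point of `A ++ S ++ B` is not inside `S`, which starts at its lowest point. -/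
theorem IsPeak.exists_insert {A' B' : List (ι × Bool)} (h : IsPeak φ A B)
    (hS : StaysIn φ (Set.Ici 0) 0 S) (h' : IsFirstPeak (-φ) A' B') (heq : A' ++ B' = A ++ S ++ B)
    (hD : StaysIn φ (Set.Iic 0) 0 D) (h0 : height φ D = 0) :
    ∃ A₁ B₁, IsPeak φ A₁ B₁ ∧ height φ (A₁ ++ B₁) = height φ (A ++ B) ∧
      A' ++ D ++ B' = A₁ ++ S ++ B₁ := by
  have hleft : ∀ C, A = A' ++ C → B' = C ++ (S ++ B) → ∃ A₁ B₁, IsPeak φ A₁ B₁ ∧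
      height φ (A₁ ++ B₁) = height φ (A ++ B) ∧ A' ++ D ++ B' = A₁ ++ S ++ B₁ := by
    rintro C rfl rfl
    refine ⟨A' ++ D ++ C, B, ⟨?_, h.2⟩, by simp [h0], by simp⟩
    simpa [h0] using h.1.insert_Iic hD h0
  rw [List.append_assoc] at heq
  rcases List.append_eq_append_iff.1 heq with ⟨C, hA, hB'⟩ | ⟨U, rfl, hU⟩
  · exact hleft C hA hB'
  rcases List.append_eq_append_iff.1 hU with ⟨C, rfl, rfl⟩ | ⟨C, rfl, rfl⟩
  · exact ⟨A, C ++ D ++ B', ⟨h.1, h.2.insert_Iic hD h0⟩, by simp [h0], by simp⟩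
  · rcases eq_or_ne U [] with rfl | hne
    · exact hleft [] (by simp) (by simp)
    · have hlt := h'.1 A (List.prefix_append A U) (by simpa using hne)
      have hle := hS U (List.prefix_append U C)
      simp only [height_neg, height_append, Set.mem_Ici] at hlt hle
      omega

theorem HasPeakDetour.insertAtPeak_neg (h : HasPeakDetour φ m j w) (hm : |φ j| ≤ |φ m|)
    (hD : IsDetour (-φ) D) : HasPeakDetour φ m j (insertAtPeak (-φ) D w) := by
  obtain ⟨A, B, hAB, hheight, rfl⟩ := h
  have hS : StaysIn φ (Set.Ici 0) 0 (singleDetour (upLetter φ m) (upLetter φ j)) := by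
    have hj0 := abs_nonneg (φ j)
    simp only [singleDetour, staysIn_cons, staysIn_nil, letterHeight_invLetter,
      letterHeight_upLetter, Set.mem_Ici]
    omega
  have hDneg : StaysIn φ (Set.Iic 0) 0 D := by
    simpa using staysIn_neg.1 hD.staysIn
  obtain ⟨A₁, B₁, hpeak, hheight₁, hw⟩ := hAB.exists_insert hS (isFirstPeak_splitAtPeak (-φ) _)
    (splitAtPeak_append (-φ) _) hDneg (by simpa using hD.height_eq_zero)
  exact ⟨A₁, B₁, hpeak, hheight₁.trans hheight, hw⟩

end Insertion

section CyclicReduction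

variable {ι : Type*} {φ : ι → ℤ} {A B D w : List (ι × Bool)}

theorem snd_eq_of_letterHeight {s x : ι × Bool} (hs : 0 < letterHeight φ s)
    (hx : 0 ≤ letterHeight φ x) (hsx : x.1 = s.1) : x.2 = s.2 := by
  by_contra hne
  obtain rfl : x = invLetter s := Prod.ext hsx (Bool.eq_not_of_ne hne)
  rw [letterHeight_invLetter] at hx
  omega

theorem letterHeight_nonpos_of_mem_head? {c : ι × Bool} (h : StaysIn φ (Set.Iic 0) 0 w)
    (hc : c ∈ w.head?) : letterHeight φ c ≤ 0 := by
  rw [List.eq_cons_of_mem_head? hc, staysIn_cons] at h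
  simpa using h.2.left_mem

theorem letterHeight_nonneg_of_mem_getLast? {c : ι × Bool} (h : StaysIn φ (Set.Iic 0) 0 w)
    (h0 : height φ w = 0) (hc : c ∈ w.getLast?) : 0 ≤ letterHeight φ c := by
  have hw := List.dropLast_append_getLast? c hc
  have hle := h _ (List.dropLast_prefix w)
  rw [← hw, height_append, height_cons, height_nil] at h0
  rw [Set.mem_Iic] at hle
  omega

theorem IsPeak.staysIn_rotate (hAB : IsPeak φ A B) (h0 : height φ (A ++ B) = 0) :
    StaysIn φ (Set.Iic 0) 0 (B ++ A) := by
  rw [height_append] at h0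
  refine staysIn_append.2 ⟨hAB.2, fun u hu => ?_⟩
  have := hAB.1 u hu
  simp only [Set.mem_Iic] at this ⊢
  omega

theorem IsDetour.isReduced_append (hD : IsDetour φ D) (hw : StaysIn φ (Set.Iic 0) 0 w)
    (h0 : height φ w = 0) (hred : FreeGroup.IsReduced w) : FreeGroup.IsReduced (w ++ D) := by
  obtain ⟨s, E, hs, hDeq⟩ := hD.exists_eq_cons_append
  refine List.isChain_append.2 ⟨hred, hD.isReduced, fun x hx y hy => ?_⟩
  obtain rfl : s = y := by simpa [hDeq] using hy
  exact snd_eq_of_letterHeight hs (letterHeight_nonneg_of_mem_getLast? hw h0 hx)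

theorem IsDetour.isReduced_append_right (hD : IsDetour φ D) (hw : StaysIn φ (Set.Iic 0) 0 w)
    (hred : FreeGroup.IsReduced w) : FreeGroup.IsReduced (D ++ w) := by
  obtain ⟨s, E, hs, hDeq⟩ := hD.exists_eq_cons_append
  refine List.isChain_append.2 ⟨hD.isReduced, hred, fun x hx y hy hxy => ?_⟩
  obtain rfl : invLetter s = x := by
    rw [hDeq, List.getLast?_concat] at hx
    exact Option.some.inj hx
  have hy0 : 0 ≤ letterHeight φ (invLetter y) := by
    simpa using letterHeight_nonpos_of_mem_head? hw hy
  simpa using (congrArg (! ·) (snd_eq_of_letterHeight hs hy0 hxy.symm)).symm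

/-- The square of `A ++ D ++ B` is a subword of `C ++ D ++ C ++ D ++ C` with `C = B ++ A`. -/
theorem IsDetour.isReduced_insert (hD : IsDetour φ D) (hAB : IsPeak φ A B)
    (h0 : height φ (A ++ B) = 0) (hne : A ++ B ≠ [])
    (hred : FreeGroup.IsReduced ((A ++ B) ++ (A ++ B))) :
    FreeGroup.IsReduced ((A ++ D ++ B) ++ (A ++ D ++ B)) := by
  have hC : FreeGroup.IsReduced (B ++ A) := hred.infix ⟨A, B, by simp⟩
  have hC0 : height φ (B ++ A) = 0 := by rw [height_append, add_comm, ← height_append, h0]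
  have hCne : B ++ A ≠ [] := by simpa [and_comm] using hne
  have hDne : D ≠ [] := by
    obtain ⟨s, E, -, rfl⟩ := hD.exists_eq_cons_append
    simp
  have hCD : FreeGroup.IsReduced (B ++ A ++ D) :=
    hD.isReduced_append (hAB.staysIn_rotate h0) hC0 hC
  have hDC : FreeGroup.IsReduced (D ++ (B ++ A)) :=
    hD.isReduced_append_right (hAB.staysIn_rotate h0) hC
  have hCDC : FreeGroup.IsReduced (B ++ A ++ (D ++ (B ++ A))) := by
    simpa using hCD.append_overlap hDC hDne
  exact ((hCD.append_overlap hDC hDne).append_overlap hCDC hCne).infix ⟨B, A, by simp⟩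

end CyclicReduction

section Pinching

variable {ι : Type*} {φ : ι → ℤ} {m j : ι} {w : List (ι × Bool)}

/-- The word obtained from `w` by a single detour along the `j`-th generator above its first highest
point and a double detour below the first lowest point of the result. -/
def pinch (φ : ι → ℤ) (m j : ι) (w : List (ι × Bool)) : List (ι × Bool) :=
  insertAtPeak (-φ) (doubleDetour (invLetter (upLetter φ m)) (invLetter (upLetter φ j)))
    (insertAtPeak φ (singleDetour (upLetter φ m) (upLetter φ j)) w)

theorem length_pinch (φ : ι → ℤ) (m j : ι) (w : List (ι × Bool)) :
    (pinch φ m j w).length = w.length + 16 := by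
  simp [pinch, length_insertAtPeak, singleDetour, doubleDetour]

theorem height_pinch (ψ φ : ι → ℤ) (m j : ι) (w : List (ι × Bool)) :
    height ψ (pinch φ m j w) = height ψ w := by
  rw [pinch, height_insertAtPeak (height_doubleDetour ψ _ _),
    height_insertAtPeak (height_singleDetour ψ _ _)]

theorem isDetour_singleDetour_upLetter (hm : φ m ≠ 0) (hle : |φ j| ≤ |φ m|) (hne : m ≠ j) :
    IsDetour φ (singleDetour (upLetter φ m) (upLetter φ j)) :=
  isDetour_singleDetour (by simpa using hm) (by simp) (by simpa using hle) hne

theorem isDetour_doubleDetour_upLetter (hm : φ m ≠ 0) (hle : |φ j| ≤ |φ m|) (hne : m ≠ j) :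
    IsDetour (-φ) (doubleDetour (invLetter (upLetter φ m)) (invLetter (upLetter φ j))) :=
  isDetour_doubleDetour (by simpa using hm) (by simp) (by simpa using hle) hne

theorem pinch_injective (hm : φ m ≠ 0) (hle : |φ j| ≤ |φ m|) (hne : m ≠ j) :
    Function.Injective (pinch φ m j) :=
  (isDetour_doubleDetour_upLetter hm hle hne).insertAtPeak_injective.comp
    (isDetour_singleDetour_upLetter hm hle hne).insertAtPeak_injective

theorem hasPeakDetour_pinch (hm : φ m ≠ 0) (hle : |φ j| ≤ |φ m|) (hne : m ≠ j)
    (h0 : height φ w = 0) : HasPeakDetour φ m j (pinch φ m j w) :=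
  (hasPeakDetour_insertAtPeak h0).insertAtPeak_neg hle (isDetour_doubleDetour_upLetter hm hle hne)

theorem hasValleyDetour_pinch (h0 : height φ w = 0) :
    HasValleyDetour φ m j (pinch φ m j w) :=
  hasValleyDetour_insertAtPeak (by rw [height_insertAtPeak (height_singleDetour _ _ _), h0])

end Pinching

section CyclicallyReducedWords

variable {n : ℕ} {φ : Fin (n + 1) → ℤ} {m j : Fin (n + 1)}

theorem cyclicallyReduced_iff {w : RWord n} :
    CyclicallyReduced w ↔ FreeGroup.IsReduced (w ++ w) :=
  FreeGroup.isReduced_iff_reduce_eq.symm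

theorem cyclicallyReduced_insertAtPeak {D w : RWord n} (hD : IsDetour φ D) (hne : w ≠ [])
    (h0 : height φ w = 0) (hw : CyclicallyReduced w) :
    CyclicallyReduced (insertAtPeak φ D w) := by
  rw [← splitAtPeak_append φ w] at hne h0
  rw [cyclicallyReduced_iff, ← splitAtPeak_append φ w] at hw
  exact cyclicallyReduced_iff.2
    (hD.isReduced_insert (isFirstPeak_splitAtPeak φ w).isPeak h0 hne hw)

theorem cyclicallyReduced_pinch {w : RWord n} (hm : φ m ≠ 0) (hle : |φ j| ≤ |φ m|) (hne : m ≠ j)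
    (hnil : w ≠ []) (h0 : height φ w = 0) (hw : CyclicallyReduced w) :
    CyclicallyReduced (pinch φ m j w) := by
  refine cyclicallyReduced_insertAtPeak (isDetour_doubleDetour_upLetter hm hle hne) ?_ ?_
    (cyclicallyReduced_insertAtPeak (isDetour_singleDetour_upLetter hm hle hne) hnil h0 hw)
  · simp [insertAtPeak, singleDetour]
  · rw [height_insertAtPeak (height_singleDetour _ _ _), height_neg, h0, neg_zero]

end CyclicallyReducedWords

section ExponentSums

variable {n : ℕ}

theorem height_eq_sum {ι : Type*} [Fintype ι] [DecidableEq ι] (φ : ι → ℤ) (w : List (ι × Bool)) :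
    height φ w = ∑ j, height (Pi.single j 1) w * φ j := by
  induction w with
  | nil => simp
  | cons c w ih =>
    simp only [height_cons, add_mul, Finset.sum_add_distrib, ← ih, add_left_inj]
    rcases c with ⟨i, _ | _⟩ <;> simp [letterHeight, Pi.single_apply]

/-- The matrix of exponent sums of the generators in a tuple of words. -/
def exponentMatrix (r : Fin n → RWord n) : Matrix (Fin n) (Fin (n + 1)) ℤ :=
  fun i j => height (Pi.single j 1) (r i)

theorem exists_mulVec_eq_zero {R κ ι : Type*} [CommRing R] [Nontrivial R] [Fintype κ] [Fintype ι]
    (hcard : Fintype.card κ < Fintype.card ι) (M : Matrix κ ι R) :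
    ∃ φ : ι → R, φ ≠ 0 ∧ M.mulVec φ = 0 := by
  by_contra! h
  have hinj : Function.Injective M.mulVecLin := by
    rw [← LinearMap.ker_eq_bot, LinearMap.ker_eq_bot']
    exact fun φ hφ => by_contra fun hne => h φ hne hφ
  exact (card_le_of_injective R M.mulVecLin hinj).not_gt hcard

theorem exists_abs_maximal_mulVec_eq_zero (M : Matrix (Fin n) (Fin (n + 1)) ℤ) :
    ∃ φ : Fin (n + 1) → ℤ, ∃ m, φ m ≠ 0 ∧ (∀ j, |φ j| ≤ |φ m|) ∧ M.mulVec φ = 0 := by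
  obtain ⟨φ, hne, hφ⟩ := exists_mulVec_eq_zero (by simp) M
  obtain ⟨m, hm⟩ := Finite.exists_max fun j => |φ j|
  exact ⟨φ, m, fun h0 => hne (funext fun j => by simpa [h0] using hm j), hm, hφ⟩

/-- The insertions do not change the exponent sums, so `φ` and `m` can be recovered from the
modified tuple. -/
theorem exists_injective_not_subgroupSeparable (hn : 1 ≤ n) :
    ∃ f : (Fin n → RWord n) → Fin n → RWord n, Function.Injective f ∧
      (∀ l, Set.MapsTo f (Rtuples n l) (Rtuples n (l + 16))) ∧
      ∀ r, ¬SubgroupSeparable (PresentedGroup (relsOf (f r))) := by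
  choose φ m hm hmax hker using exists_abs_maximal_mulVec_eq_zero (n := n)
  have hheight (r : Fin n → RWord n) (i : Fin n) : height (φ (exponentMatrix r)) (r i) = 0 :=
    (height_eq_sum _ _).trans (congrFun (hker (exponentMatrix r)) i)
  let f (r : Fin n → RWord n) (i : Fin n) : RWord n :=
    pinch (φ (exponentMatrix r)) (m (exponentMatrix r)) ((m (exponentMatrix r)).succAbove i) (r i)
  have hne (M : Matrix (Fin n) (Fin (n + 1)) ℤ) (i : Fin n) : m M ≠ (m M).succAbove i :=
    (Fin.succAbove_ne _ i).symm
  have hmatrix (r : Fin n → RWord n) : exponentMatrix (f r) = exponentMatrix r := by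
    ext i j
    exact height_pinch _ _ _ _ _
  refine ⟨f, fun r r' h => funext fun i => ?_, fun l r hr i => ?_, fun r => ?_⟩
  · have hM : exponentMatrix r = exponentMatrix r' := by rw [← hmatrix r, h, hmatrix r']
    have hi := congrFun h i
    simp only [f, hM] at hi
    exact pinch_injective (hm _) (hmax _ _) (hne _ i) hi
  · obtain ⟨hnil, hlen, hred⟩ := hr i
    have hlength : (f r i).length = (r i).length + 16 := length_pinch _ _ _ _
    exact ⟨List.ne_nil_of_length_pos (by omega), by omega,
      cyclicallyReduced_pinch (hm _) (hmax _ _) (hne _ i) hnil (hheight r i) hred⟩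
  · exact not_subgroupSeparable_presentedGroup hn (hm (exponentMatrix r)) (hmax _)
      (fun i => hasPeakDetour_pinch (hm _) (hmax _ _) (hne _ i) (hheight r i))
      fun i => hasValleyDetour_pinch (hheight r i)

end ExponentSums

section Growth

open Filter

variable {n l : ℕ}

theorem exists_letter_between {ι : Type*} [Nontrivial ι] (x a : ι × Bool) :
    ∃ e : ι × Bool, (x.1 = e.1 → x.2 = e.2) ∧ (e.1 = a.1 → e.2 = a.2) := by
  by_cases hxa : x.1 = a.1 → x.2 = a.2
  · exact ⟨a, hxa, fun _ => rfl⟩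
  · obtain ⟨j, hj⟩ := exists_ne a.1
    exact ⟨(j, true), fun h => absurd (h.symm.trans (Classical.not_imp.1 hxa).1) hj,
      fun h => absurd h hj⟩

theorem exists_cyclicallyReduced_append_singleton (hn : 1 ≤ n) {v : RWord n} (hne : v ≠ [])
    (hv : FreeGroup.IsReduced v) : ∃ e, CyclicallyReduced (v ++ [e]) := by
  have : Nontrivial (Fin (n + 1)) := Fin.nontrivial_iff_two_le.2 (by omega)
  obtain ⟨e, hlast, hhead⟩ := exists_letter_between (v.getLast hne) (v.head hne)
  have hchain : FreeGroup.IsReduced (v ++ [e]) :=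
    List.isChain_append.2 ⟨hv, List.isChain_singleton _, by
      simpa [List.getLast?_eq_some_getLast hne] using hlast⟩
  exact ⟨e, cyclicallyReduced_iff.2 (List.isChain_append.2 ⟨hchain, hchain, by
    simpa [List.head?_append, List.head?_eq_some_head hne] using hhead⟩)⟩

/-- A long word is cut short and its cyclic reducedness is restored by a new last letter. -/
theorem exists_dropLast_append_eq (hn : 1 ≤ n) (hl : 2 ≤ l) {k : ℕ} {w : RWord n}
    (hne : w ≠ []) (hlen : w.length ≤ l + k) (hw : CyclicallyReduced w) :
    ∃ v : RWord n, (v ≠ [] ∧ v.length ≤ l ∧ CyclicallyReduced v) ∧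
      ∃ s : RWord n, s.length ≤ k + 1 ∧ v.dropLast ++ s = w := by
  rcases le_or_gt w.length l with hshort | hlong
  · exact ⟨w, ⟨hne, hshort, hw⟩, [w.getLast hne], by simp, List.dropLast_append_getLast hne⟩
  · have hreduced : FreeGroup.IsReduced (w.take (l - 1)) :=
      (cyclicallyReduced_iff.1 hw).infix ((List.take_prefix _ w).trans
        (List.prefix_append w w)).isInfix
    have hlength : (w.take (l - 1)).length = l - 1 := List.length_take_of_le (by omega)
    obtain ⟨e, he⟩ := exists_cyclicallyReduced_append_singleton hn
      (List.ne_nil_of_length_pos (by omega)) hreduced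
    refine ⟨w.take (l - 1) ++ [e], ⟨by simp, ?_, he⟩, w.drop (l - 1), ?_, ?_⟩
    · rw [List.length_append, hlength, List.length_singleton]
      omega
    · rw [List.length_drop]
      omega
    · rw [List.dropLast_concat, List.take_append_drop]

theorem finite_Rtuples (n l : ℕ) : (Rtuples n l).Finite :=
  (Set.Finite.pi' fun _ => List.finite_length_le (Fin (n + 1) × Bool) l).subset
    fun _ hr i => (hr i).2.1

theorem exists_card_Rtuples_add_le (hn : 1 ≤ n) (k : ℕ) : ∃ C : ℕ, 0 < C ∧ ∀ l, 2 ≤ l →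
    Nat.card (Rtuples n (l + k)) ≤ C * Nat.card (Rtuples n l) := by
  let tails := Fin n → {s : RWord n | s.length ≤ k + 1}
  have : Finite {s : RWord n | s.length ≤ k + 1} := List.finite_length_le _ _
  have : Nonempty tails := ⟨fun _ => ⟨[], by simp⟩⟩
  refine ⟨Nat.card tails, Nat.card_pos, fun l hl => ?_⟩
  have := (finite_Rtuples n l).to_subtype
  have hcut : ∀ r : Rtuples n (l + k), ∃ p : tails × Rtuples n l,
      (fun i => (p.2.1 i).dropLast ++ (p.1 i).1) = r.1 := fun r => by
    choose v hv s hs heq using fun i =>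
      exists_dropLast_append_eq hn hl (r.2 i).1 (r.2 i).2.1 (r.2 i).2.2
    exact ⟨(fun i => ⟨s i, hs i⟩, ⟨v, hv⟩), funext heq⟩
  choose cut hcut using hcut
  rw [← Nat.card_prod]
  exact Nat.card_le_card_of_injective cut fun r r' h => Subtype.ext (by rw [← hcut r, h, hcut r'])

theorem card_Rtuples_pos (n : ℕ) (hl : 1 ≤ l) : 0 < Nat.card (Rtuples n l) := by
  have := (finite_Rtuples n l).to_subtype
  have : Nonempty (Rtuples n l) := ⟨fun _ => [(0, true)], fun _ =>
    ⟨by simp, by simpa using hl, cyclicallyReduced_iff.2 (by simp [FreeGroup.IsReduced])⟩⟩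
  exact Nat.card_pos

theorem tupleRatio_le_one (Pr : (Fin n → RWord n) → Prop) (l : ℕ) : tupleRatio n Pr l ≤ 1 :=
  div_le_one_of_le₀ (Nat.cast_le.2 (Nat.card_mono (finite_Rtuples n l) fun _ hr => hr.1))
    (Nat.cast_nonneg _)

theorem card_Rtuples_le_of_injective {k : ℕ} {Pr : (Fin n → RWord n) → Prop}
    {f : (Fin n → RWord n) → Fin n → RWord n} (hf : Function.Injective f)
    (hmaps : Set.MapsTo f (Rtuples n l) (Rtuples n (l + k))) (hPr : ∀ r, Pr (f r)) :
    Nat.card (Rtuples n l) ≤ Nat.card {r // r ∈ Rtuples n (l + k) ∧ Pr r} := by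
  have : Finite {r // r ∈ Rtuples n (l + k) ∧ Pr r} :=
    ((finite_Rtuples n (l + k)).subset fun _ hr => hr.1).to_subtype
  exact Nat.card_le_card_of_injective
    (fun r : Rtuples n l => ⟨f r, hmaps r.2, hPr r⟩)
    fun r r' h => Subtype.ext (hf (congrArg Subtype.val h))

theorem liminf_tupleRatio_pos_of_injective (hn : 1 ≤ n) {k : ℕ} {Pr : (Fin n → RWord n) → Prop}
    {f : (Fin n → RWord n) → Fin n → RWord n} (hf : Function.Injective f)
    (hmaps : ∀ l, Set.MapsTo f (Rtuples n l) (Rtuples n (l + k))) (hPr : ∀ r, Pr (f r)) :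
    0 < liminf (tupleRatio n Pr) atTop := by
  obtain ⟨C, hC, hgrowth⟩ := exists_card_Rtuples_add_le hn k
  have hlower : ∀ᶠ l in atTop, (C : ℝ)⁻¹ ≤ tupleRatio n Pr l := by
    filter_upwards [eventually_ge_atTop (k + 2)] with l hl
    obtain ⟨l, rfl⟩ := Nat.exists_eq_add_of_le' (show k ≤ l by omega)
    have hcard : Nat.card (Rtuples n (l + k)) ≤
        C * Nat.card {r // r ∈ Rtuples n (l + k) ∧ Pr r} :=
      (hgrowth l (by omega)).trans
        (Nat.mul_le_mul_left C (card_Rtuples_le_of_injective hf (hmaps l) hPr))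
    have hpos : (0 : ℝ) < Nat.card (Rtuples n (l + k)) :=
      Nat.cast_pos.2 (card_Rtuples_pos n (by omega))
    rw [tupleRatio, le_div_iff₀ hpos, inv_mul_le_iff₀ (Nat.cast_pos.2 hC)]
    exact_mod_cast hcard
  have hbounded : IsBoundedUnder (· ≤ ·) atTop (tupleRatio n Pr) :=
    isBoundedUnder_of ⟨1, tupleRatio_le_one Pr⟩
  exact (inv_pos.2 (Nat.cast_pos.2 hC)).trans_le
    (le_liminf_of_le hbounded.isCoboundedUnder_ge hlower)

end Growth

end RandomDeficiencyOne

/-- With positive asymptotic probability, a random deficiency 1 group in the few-relator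
model is not subgroup separable. -/
theorem random_def1_not_subgroupSeparable (n : ℕ) (hn : 1 ≤ n) :
    0 < Filter.liminf
      (tupleRatio n fun r => ¬SubgroupSeparable (PresentedGroup (relsOf r)))
      Filter.atTop := by
  obtain ⟨f, hinj, hmaps, hnot⟩ :=
    RandomDeficiencyOne.exists_injective_not_subgroupSeparable hn
  exact RandomDeficiencyOne.liminf_tupleRatio_pos_of_injective hn hinj hmaps hnot
end

section
/- Fix n ≥ 1 and for l ≥ 1 let p_l be the proportion of tuples (r₁, …, r_n) ∈ 𝓡_l for which the group G = ⟨x₁, …, x_{n+1} ∣ r₁, …, r_n⟩ is free-by-cyclic, i.e. admits a normal subgroup N which is a finitely generated free group with G/N ≅ ℤ. Then liminf_{l→∞} p_l > 0 and limsup_{l→∞} p_l < 1. (That is, a random deficiency 1 group in the few-relator model is free-by-cyclic with asymptotic probability that is positive and bounded away from 1.) -/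
open scoped Classical

/-- A group is free-by-cyclic if it has a normal subgroup `N` which is a finitely generated
free group such that `G/N ≅ ℤ` (witnessed by a surjection `G → ℤ` with kernel `N`). -/
def FreeByCyclic (G : Type*) [Group G] : Prop :=
  ∃ N : Subgroup G, N.Normal ∧ IsFreeGroup N ∧ Group.FG N ∧
    ∃ ψ : G →* Multiplicative ℤ, Function.Surjective ψ ∧ ψ.ker = N

/-!
If the exponent sum matrix of the relators has full rank, then up to sign there is only one
surjection of `G` onto `ℤ`; it is given by weights `a` of the generators. Its kernel is the
fundamental group of the infinite cyclic cover of the presentation complex. Suppose that in the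
lift of the relator `r i` the highest edge off the generator `0` lies over the generator `i + 1`,
and likewise the lowest one, and that both are traversed once. Then all but finitely many edges of
the cover can be eliminated, upwards from the highest and downwards from the lowest edges, so the
kernel is free of finite rank. If instead the highest edges are traversed twice, always in the same
direction, then the Alexander polynomial has constant coefficient `±1` and leading coefficient
`±2 ^ n`, so it has a root `z` which is not an algebraic integer. A null vector of the Alexander
matrix at `z` gives a nonzero homomorphism from the kernel to `ℂ` whose image is closed under
multiplication by `z` and hence not finitely generated.

Every tuple of relators can be brought into either form: prefixing powers of generators makes the
rank full, and inserting commutators with the generator `0` at a highest and a lowest point of the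
relators does not change the exponent sums and produces the required extremal edges. The tuple can
be recovered up to finitely many choices and its length grows by a constant `C`, while
`|𝓡_{l + C}|` is at most a constant times `|𝓡_l|`. Hence both forms have positive lower density.
-/

namespace FewRelator

/-! ### Words and their values -/

section Words

variable {ι G H : Type*} [Group G] [Group H]

/-- The value `f i` or `(f i)⁻¹` of a letter `i^{±1}` under an assignment `f` of the generators. -/
@[to_additive letterStep]
def letterVal (f : ι → G) (x : ι × Bool) : G := cond x.2 (f x.1) (f x.1)⁻¹

/-- The value of a word under an assignment `f` of the generators; by definition it is
`FreeGroup.lift f (FreeGroup.mk w)`. -/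
@[to_additive]
def wordProd (f : ι → G) (w : List (ι × Bool)) : G := (w.map (letterVal f)).prod

lemma lift_mk_eq_wordProd (f : ι → G) (w : List (ι × Bool)) :
    FreeGroup.lift f (FreeGroup.mk w) = wordProd f w := rfl

@[to_additive]
lemma wordProd_nil (f : ι → G) : wordProd f [] = 1 := rfl

@[to_additive]
lemma wordProd_cons (f : ι → G) (x : ι × Bool) (w : List (ι × Bool)) :
    wordProd f (x :: w) = letterVal f x * wordProd f w := List.prod_cons

@[to_additive]
lemma wordProd_append (f : ι → G) (u w : List (ι × Bool)) :
    wordProd f (u ++ w) = wordProd f u * wordProd f w := by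
  rw [wordProd, List.map_append, List.prod_append, wordProd, wordProd]

attribute [simp] wordProd_nil wordSum_nil wordProd_cons wordSum_cons wordProd_append wordSum_append

@[to_additive]
lemma wordProd_congr {f g : ι → G} {w : List (ι × Bool)} (h : ∀ x ∈ w, f x.1 = g x.1) :
    wordProd f w = wordProd g w :=
  congrArg List.prod <| List.map_congr_left fun x hx => by rw [letterVal, letterVal, h x hx]

@[to_additive]
lemma wordProd_map {κ : Type*} (φ : κ → ι) (f : ι → G) (w : List (κ × Bool)) :
    wordProd f (w.map fun x => (φ x.1, x.2)) = wordProd (fun i => f (φ i)) w := by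
  rw [wordProd, List.map_map]
  rfl

@[to_additive]
lemma wordProd_filter {f : ι → G} {w : List (ι × Bool)} (p : ι × Bool → Bool)
    (h : ∀ x ∈ w, p x = false → f x.1 = 1) : wordProd f (w.filter p) = wordProd f w := by
  induction w with
  | nil => rfl
  | cons x w ih =>
    rw [List.forall_mem_cons] at h
    rw [List.filter_cons, wordProd_cons, ← ih h.2]
    split_ifs with hx
    · rw [wordProd_cons]
    · rw [letterVal, h.1 (Bool.eq_false_of_not_eq_true hx), inv_one, Bool.cond_self, one_mul]

@[to_additive]
lemma wordProd_replicate (f : ι → G) (m : ℕ) (x : ι × Bool) :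
    wordProd f (List.replicate m x) = letterVal f x ^ m := by
  rw [wordProd, List.map_replicate, List.prod_replicate]

@[to_additive map_letterStep]
lemma map_letterVal {F : Type*} [FunLike F G H] [MonoidHomClass F G H] (φ : F) (f : ι → G)
    (x : ι × Bool) : φ (letterVal f x) = letterVal (fun i => φ (f i)) x := by
  rcases x with ⟨i, _ | _⟩ <;> simp [letterVal]

@[to_additive]
lemma map_wordProd {F : Type*} [FunLike F G H] [MonoidHomClass F G H] (φ : F) (f : ι → G)
    (w : List (ι × Bool)) : φ (wordProd f w) = wordProd (fun i => φ (f i)) w := by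
  rw [wordProd, map_list_prod, List.map_map]
  exact congrArg List.prod <| List.map_congr_left fun x _ => map_letterVal φ f x

lemma wordProd_ofAdd {A : Type*} [AddGroup A] (f : ι → A) (w : List (ι × Bool)) :
    wordProd (fun i => Multiplicative.ofAdd (f i)) w = Multiplicative.ofAdd (wordSum f w) := by
  induction w with
  | nil => rfl
  | cons x w ih =>
    rw [wordProd_cons, wordSum_cons, ih, ofAdd_add]
    rcases x with ⟨j, _ | _⟩ <;> rfl

end Words

/-! ### Lifts of words to the infinite cyclic cover -/

section Lifts

variable {ι : Type*} (a : ι → ℤ)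

/-- The lift to the infinite cyclic cover of the path spelled by a word, starting at height `h`.
The generator `j` raises the height by `a j`, and `(j, k)` denotes the edge over `j` which runs
from height `k` to height `k + a j`. -/
def liftWord : ℤ → List (ι × Bool) → List ((ι × ℤ) × Bool)
  | _, [] => []
  | h, x :: w => ((x.1, cond x.2 h (h - a x.1)), x.2) :: liftWord (h + letterStep a x) w

/-- The larger of the heights of the two ends of an edge of the infinite cyclic cover. -/
def top (e : ι × ℤ) : ℤ := e.2 + max 0 (a e.1)

/-- The smaller of the heights of the two ends of an edge of the infinite cyclic cover. -/
def bot (e : ι × ℤ) : ℤ := e.2 + min 0 (a e.1)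

@[simp]
lemma liftWord_nil (h : ℤ) : liftWord a h [] = [] := rfl

lemma liftWord_cons (h : ℤ) (x : ι × Bool) (w : List (ι × Bool)) :
    liftWord a h (x :: w) =
      ((x.1, cond x.2 h (h - a x.1)), x.2) :: liftWord a (h + letterStep a x) w := rfl

lemma liftWord_append (h : ℤ) (u w : List (ι × Bool)) :
    liftWord a h (u ++ w) = liftWord a h u ++ liftWord a (h + wordSum a u) w := by
  induction u generalizing h with
  | nil => simp
  | cons x u ih => simp [liftWord_cons, ih, add_assoc]

lemma liftWord_add (h k : ℤ) (w : List (ι × Bool)) :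
    liftWord a (h + k) w = (liftWord a h w).map fun x => ((x.1.1, x.1.2 + k), x.2) := by
  induction w generalizing h with
  | nil => simp
  | cons x w ih =>
    rw [liftWord_cons, liftWord_cons, List.map_cons, ← ih, add_right_comm]
    rcases x with ⟨j, _ | _⟩ <;> simp [sub_add_eq_add_sub]

lemma wordSum_neg (w : List (ι × Bool)) : wordSum (-a) w = -wordSum a w :=
  (map_wordSum (negAddMonoidHom : ℤ →+ ℤ) a w).symm

lemma letterStep_neg (x : ι × Bool) : letterStep (-a) x = -letterStep a x :=
  (map_letterStep (negAddMonoidHom : ℤ →+ ℤ) a x).symm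

lemma liftWord_neg (h : ℤ) (w : List (ι × Bool)) :
    liftWord (-a) (-h) w = (liftWord a h w).map fun x => ((x.1.1, -x.1.2), x.2) := by
  induction w generalizing h with
  | nil => simp
  | cons x w ih =>
    rw [liftWord_cons, liftWord_cons, List.map_cons, ← ih, letterStep_neg, neg_add]
    rcases x with ⟨j, _ | _⟩ <;> simp [sub_eq_add_neg, add_comm]

lemma top_neg (j : ι) (k : ℤ) : top (-a) (j, -k) = -bot a (j, k) := by
  simp only [top, bot, Pi.neg_apply]
  lia

end Lifts

/-! ### Triangular systems of equations over a group -/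

section Triangular

variable {I α : Type*}

/-- A system of equations `L e = 1`, one for each unknown `e ∉ W`, is triangular for the rank
function `μ` if the unknown `e` occurs exactly once in `L e` and all the other unknowns of `L e`
have smaller rank. -/
def IsTriangular [LT α] (μ : I → α) (W : Set I) (L : I → List (I × Bool)) : Prop :=
  ∀ e ∉ W, ∃ A s B, L e = A ++ (e, s) :: B ∧ ∀ x ∈ A ++ B, μ x.1 < μ e

namespace IsTriangular

variable [LT α] [WellFoundedLT α] {μ : I → α} {W : Set I} {L : I → List (I × Bool)}
  {H : Type*} [Group H]

lemma eq_of_eqOn (hL : IsTriangular μ W L) {η ζ : I → H} (hη : ∀ e ∉ W, wordProd η (L e) = 1)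
    (hζ : ∀ e ∉ W, wordProd ζ (L e) = 1) (hW : Set.EqOn η ζ W) : η = ζ := by
  funext e
  induction e using (InvImage.wf μ wellFounded_lt).induction with
  | _ e ih =>
    by_cases he : e ∈ W
    · exact hW he
    obtain ⟨A, s, B, hAB, hlt⟩ := hL e he
    have hA : wordProd η A = wordProd ζ A :=
      wordProd_congr fun x hx => ih x.1 (hlt x (List.mem_append_left B hx))
    have hB : wordProd η B = wordProd ζ B :=
      wordProd_congr fun x hx => ih x.1 (hlt x (List.mem_append_right A hx))
    have hletter := (hη e he).trans (hζ e he).symm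
    rw [hAB, wordProd_append, wordProd_cons, wordProd_append, wordProd_cons, hA, hB,
      mul_right_inj, mul_left_inj] at hletter
    cases s
    · exact inv_injective hletter
    · exact hletter

lemma exists_extension (hL : IsTriangular μ W L) (f : W → H) :
    ∃ η : I → H, (∀ w : W, η w = f w) ∧ ∀ e ∉ W, wordProd η (L e) = 1 := by
  choose! A s B hAB hlt using hL
  have wf : WellFounded (InvImage (· < ·) μ) := InvImage.wf μ wellFounded_lt
  let solve (e : I) (η : I → H) : H :=
    letterVal (fun _ : I => (wordProd η (A e))⁻¹ * (wordProd η (B e))⁻¹) (e, s e)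
  let η : I → H := wf.fix fun e rec =>
    if h : e ∈ W then f ⟨e, h⟩ else solve e fun x => if hx : μ x < μ e then rec x hx else 1
  have hη_mem (e : I) (he : e ∈ W) : η e = f ⟨e, he⟩ :=
    (wf.fix_eq _ e).trans (dif_pos he)
  have hη_notMem (e : I) (he : e ∉ W) : η e = solve e η := by
    have hrec : η e = solve e fun x => if μ x < μ e then η x else 1 :=
      (wf.fix_eq _ e).trans (dif_neg he)
    have hA : wordProd (fun x => if μ x < μ e then η x else 1) (A e) = wordProd η (A e) :=
      wordProd_congr fun x hx => if_pos (hlt e he x (List.mem_append_left _ hx))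
    have hB : wordProd (fun x => if μ x < μ e then η x else 1) (B e) = wordProd η (B e) :=
      wordProd_congr fun x hx => if_pos (hlt e he x (List.mem_append_right _ hx))
    simp only [hrec, solve, hA, hB]
  refine ⟨η, fun w => hη_mem w w.2, fun e he => ?_⟩
  rw [hAB e he, wordProd_append, wordProd_cons, letterVal]
  simp only [hη_notMem e he, solve, letterVal]
  cases s e <;> simp

end IsTriangular

end Triangular

/-! ### The infinite cyclic cover of a presentation -/

section Cover

variable {n : ℕ} {r : Fin n → RWord n} {H : Type*} [Group H]

lemma mk_mk_eq_wordProd {ι : Type*} (rels : Set (FreeGroup ι)) (w : List (ι × Bool)) :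
    PresentedGroup.mk rels (FreeGroup.mk w) = wordProd PresentedGroup.of w := by
  have hw : FreeGroup.mk w = wordProd FreeGroup.of w :=
    (DFunLike.congr_fun (FreeGroup.lift_of_eq_id ι) (FreeGroup.mk w)).symm
  rw [hw, map_wordProd]
  rfl

lemma exists_wordProd_of_eq {ι : Type*} {rels : Set (FreeGroup ι)} (g : PresentedGroup rels) :
    ∃ w : List (ι × Bool), wordProd PresentedGroup.of w = g := by
  obtain ⟨x, rfl⟩ := PresentedGroup.mk_surjective _ g
  exact ⟨x.toWord, by rw [← mk_mk_eq_wordProd, FreeGroup.mk_toWord]⟩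

lemma wordProd_of_relator (i : Fin n) :
    wordProd (PresentedGroup.of (rels := relsOf r)) (r i) = 1 := by
  rw [← mk_mk_eq_wordProd]
  exact PresentedGroup.one_of_mem ⟨i, rfl⟩

/-- The homomorphism out of `⟨x₁, …, x_{n+1} ∣ r₁, …, r_n⟩` determined by the images of the
generators. -/
def presentedLift (f : Fin (n + 1) → H) (hf : ∀ i, wordProd f (r i) = 1) :
    PresentedGroup (relsOf r) →* H :=
  PresentedGroup.toGroup (f := f) (by rintro _ ⟨i, rfl⟩; exact hf i)

lemma presentedLift_of (f : Fin (n + 1) → H) (hf : ∀ i, wordProd f (r i) = 1) (j : Fin (n + 1)) :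
    presentedLift f hf (PresentedGroup.of j) = f j :=
  PresentedGroup.toGroup.of _

lemma presentedLift_wordProd (f : Fin (n + 1) → H) (hf : ∀ i, wordProd f (r i) = 1)
    (w : RWord n) : presentedLift f hf (wordProd PresentedGroup.of w) = wordProd f w := by
  simp only [map_wordProd, presentedLift_of]

variable {a : Fin (n + 1) → ℤ}

/-- The homomorphism to `ℤ` with `x_j ↦ a j`, for weights `a` in which every relator has
height `0`. -/
def heightHom (hr : ∀ i, wordSum a (r i) = 0) :
    PresentedGroup (relsOf r) →* Multiplicative ℤ :=
  presentedLift (fun j => Multiplicative.ofAdd (a j)) fun i => by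
    rw [wordProd_ofAdd, hr, ofAdd_zero]

lemma heightHom_of (hr : ∀ i, wordSum a (r i) = 0) (j : Fin (n + 1)) :
    heightHom hr (PresentedGroup.of j) = Multiplicative.ofAdd (a j) :=
  presentedLift_of _ _ j

lemma heightHom_wordProd (hr : ∀ i, wordSum a (r i) = 0) (w : RWord n) :
    heightHom hr (wordProd PresentedGroup.of w) = Multiplicative.ofAdd (wordSum a w) :=
  (presentedLift_wordProd _ _ w).trans (wordProd_ofAdd a w)

lemma exists_wordSum_eq {m : ℕ} {a : Fin m → ℤ} (ha : ∃ g, g ⬝ᵥ a = 1) (k : ℤ) :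
    ∃ w : List (Fin m × Bool), wordSum a w = k := by
  obtain ⟨g, hg⟩ := ha
  let φ : FreeGroup (Fin m) →* Multiplicative ℤ :=
    FreeGroup.lift fun j => Multiplicative.ofAdd (a j)
  let x : FreeGroup (Fin m) := (List.ofFn fun j => FreeGroup.of j ^ g j).prod
  have hx : φ x = Multiplicative.ofAdd 1 := by
    rw [← hg, dotProduct, ofAdd_sum, map_list_prod, List.map_ofFn, List.prod_ofFn]
    refine Finset.prod_congr rfl fun j _ => ?_
    rw [Function.comp_apply, map_zpow, FreeGroup.lift_apply_of, ← ofAdd_zsmul, smul_eq_mul]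
  refine ⟨(x ^ k).toWord, Multiplicative.ofAdd.injective ?_⟩
  rw [← wordProd_ofAdd, ← lift_mk_eq_wordProd, FreeGroup.mk_toWord, map_zpow]
  exact (congrArg (· ^ k) hx).trans (by rw [← ofAdd_zsmul, smul_eq_mul, mul_one])

lemma heightHom_surjective (hr : ∀ i, wordSum a (r i) = 0) (ha : ∃ g, g ⬝ᵥ a = 1) :
    Function.Surjective (heightHom hr) := by
  intro k
  obtain ⟨w, hw⟩ := exists_wordSum_eq ha k.toAdd
  exact ⟨wordProd PresentedGroup.of w, by rw [heightHom_wordProd, hw, ofAdd_toAdd]⟩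

/-- Magnus-type images of the generators in the wreath product with `ℤ`, for a labelling `E` of
the edges of the cover: the value at `x` of the left component of a word is the label of its lift
starting at height `-x`. -/
def wreathLabel {ι : Type*} (a : ι → ℤ) (E : ι × ℤ → H) (j : ι) : H ≀ᵣ Multiplicative ℤ :=
  ⟨fun x => E (j, -x.toAdd), Multiplicative.ofAdd (a j)⟩

lemma wordProd_wreathLabel {ι : Type*} (a : ι → ℤ) (E : ι × ℤ → H) (w : List (ι × Bool)) :
    wordProd (wreathLabel a E) w =
      ⟨fun x => wordProd E (liftWord a (-x.toAdd) w), Multiplicative.ofAdd (wordSum a w)⟩ := by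
  induction w with
  | nil => rfl
  | cons y w ih =>
    rw [wordProd_cons, ih]
    refine RegularWreathProduct.ext (funext fun x => ?_) ?_ <;> rcases y with ⟨j, _ | _⟩ <;>
      simp [letterVal, letterStep, wreathLabel, liftWord_cons, sub_eq_add_neg, add_comm, mul_comm]

/-- The homomorphism from the kernel of the height homomorphism which reads off the label of a loop
in the cover based at height `0`, for a labelling `E` of the edges of the cover in which every lift
of a relator has trivial label. -/
def kerLabelHom (hr : ∀ i, wordSum a (r i) = 0) (E : Fin (n + 1) × ℤ → H)
    (hE : ∀ i k, wordProd E (liftWord a k (r i)) = 1) : (heightHom hr).ker →* H :=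
  have hwreath (i : Fin n) : wordProd (wreathLabel a E) (r i) = 1 := by
    rw [wordProd_wreathLabel, hr]
    exact RegularWreathProduct.ext (funext fun x => hE i _) rfl
  have hright : RegularWreathProduct.rightHom.comp (presentedLift (wreathLabel a E) hwreath) =
      heightHom hr := PresentedGroup.ext fun j => by
    rw [MonoidHom.comp_apply, presentedLift_of, heightHom_of]
    rfl
  { toFun g := (presentedLift (wreathLabel a E) hwreath g).left 1
    map_one' := by rw [Subgroup.coe_one, map_one]; rfl
    map_mul' g g' := by
      have hg : (presentedLift (wreathLabel a E) hwreath g).right = 1 :=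
        (DFunLike.congr_fun hright (g : PresentedGroup (relsOf r))).trans g.2
      rw [Subgroup.coe_mul, map_mul, RegularWreathProduct.mul_left, hg]
      simp only [inv_one, one_mul, Pi.mul_apply] }

lemma kerLabelHom_wordProd (hr : ∀ i, wordSum a (r i) = 0) (E : Fin (n + 1) × ℤ → H)
    (hE : ∀ i k, wordProd E (liftWord a k (r i)) = 1) (w : RWord n)
    (hw : wordProd PresentedGroup.of w ∈ (heightHom hr).ker) :
    kerLabelHom hr E hE ⟨_, hw⟩ = wordProd E (liftWord a 0 w) := by
  change (presentedLift (wreathLabel a E) _ (wordProd PresentedGroup.of w)).left 1 = _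
  rw [presentedLift_wordProd, wordProd_wreathLabel]
  simp

end Cover

/-! ### Schreier generators for the kernel of a homomorphism to the integers -/

section Schreier

variable {ι G : Type*} [Group G]

/-- The Schreier generators `τ k * x j * (τ (k + a j))⁻¹` of the kernel of a homomorphism to `ℤ`
with `x j ↦ a j`, for a transversal `τ`, as a labelling of the edges of the infinite cyclic
cover. -/
def schreierLabel (a : ι → ℤ) (x : ι → G) (τ : ℤ → G) (e : ι × ℤ) : G :=
  τ e.2 * x e.1 * (τ (e.2 + a e.1))⁻¹

lemma wordProd_schreierLabel (a : ι → ℤ) (x : ι → G) (τ : ℤ → G) (h : ℤ) (w : List (ι × Bool)) :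
    wordProd (schreierLabel a x τ) (liftWord a h w) =
      τ h * wordProd x w * (τ (h + wordSum a w))⁻¹ := by
  induction w generalizing h with
  | nil => simp
  | cons y w ih =>
    rw [liftWord_cons, wordProd_cons, ih, wordProd_cons, wordSum_cons, ← add_assoc]
    rcases y with ⟨j, _ | _⟩ <;>
      simp [schreierLabel, letterVal, letterStep, mul_assoc, sub_eq_add_neg]

lemma exists_transversal {ψ : G →* Multiplicative ℤ} (hψ : Function.Surjective ψ) {x : G} {m : ℤ}
    (hx : ψ x = Multiplicative.ofAdd m) (hm : m ≠ 0) :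
    ∃ τ : ℤ → G, τ 0 = 1 ∧ (∀ k, ψ (τ k) = Multiplicative.ofAdd k) ∧
      ∀ k, τ k * x = τ (k + m) := by
  choose s hs using fun k : ℤ => hψ (Multiplicative.ofAdd k)
  let s' : ℤ → G := Function.update s 0 1
  have hs' (k : ℤ) : ψ (s' k) = Multiplicative.ofAdd k := by
    rcases eq_or_ne k 0 with rfl | hk
    · simp [s']
    · simp [s', hk, hs]
  refine ⟨fun k => s' (k % m) * x ^ (k / m), by simp [s'], fun k => ?_, fun k => ?_⟩
  · rw [map_mul, hs', map_zpow, hx, ← ofAdd_zsmul, ← ofAdd_add, smul_eq_mul, mul_comm (k / m),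
      Int.emod_add_mul_ediv]
  · simp only [Int.add_emod_right]
    rw [Int.add_ediv_of_dvd_right dvd_rfl, Int.ediv_self hm, zpow_add, zpow_one, mul_assoc]

end Schreier

/-! ### Relators with a unique highest and a unique lowest edge -/

section UniversalLabel

variable {n : ℕ} {a : Fin (n + 1) → ℤ}

/-- The edges of the lift of a word at height `0` which do not lie over the generator `0` and which
reach height `T`. -/
def topEdges (a : Fin (n + 1) → ℤ) (T : ℤ) (w : RWord n) : List ((Fin (n + 1) × ℤ) × Bool) :=
  (liftWord a 0 w).filter fun x => x.1.1 ≠ 0 ∧ T ≤ top a x.1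

/-- Among the edges not over the generator `0`, the highest ones in the lift of `w` are `e` copies
of a single edge over `y`, all traversed in the same direction. -/
def HasTopPower (a : Fin (n + 1) → ℤ) (e : ℕ) (y : Fin (n + 1)) (w : RWord n) : Prop :=
  ∃ β s, topEdges a (top a (y, β)) w = List.replicate e ((y, β), s)

/-- In each lift of `w` the edge over `y`, in the position which is `(y, β)` for the lift at
height `0`, occurs once and is the strict maximum of `f` among the edges not over the
generator `0`. -/
def IsUniqueMax (a : Fin (n + 1) → ℤ) (f : Fin (n + 1) × ℤ → ℤ) (w : RWord n) (y : Fin (n + 1))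
    (β : ℤ) : Prop :=
  ∀ k, ∃ A s B, liftWord a (k - β) w = A ++ ((y, k), s) :: B ∧
    ∀ x ∈ A ++ B, x.1.1 ≠ 0 → f x.1 < f (y, k)

lemma top_add {ι : Type*} (a : ι → ℤ) (j : ι) (k l : ℤ) : top a (j, k + l) = top a (j, k) + l :=
  add_right_comm k l _

lemma bot_le_top {ι : Type*} (a : ι → ℤ) (e : ι × ℤ) : bot a e ≤ top a e :=
  add_le_add_right ((min_le_left _ _).trans (le_max_left _ _)) _

lemma HasTopPower.exists_isUniqueMax {y : Fin (n + 1)} {w : RWord n} (h : HasTopPower a 1 y w) :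
    ∃ β, IsUniqueMax a (top a) w y β := by
  obtain ⟨β, s, hβ⟩ := h
  rw [List.replicate_one, topEdges, List.filter_eq_cons_iff] at hβ
  obtain ⟨A, B, hAB, hA, -, hB⟩ := hβ
  have hlt : ∀ x ∈ A ++ B, x.1.1 ≠ 0 → top a x.1 < top a (y, β) := by
    rw [List.filter_eq_nil_iff] at hB
    intro x hx hx0
    rcases List.mem_append.1 hx with hx | hx
    · simpa [hx0] using hA x hx
    · simpa [hx0] using hB x hx
  refine ⟨β, fun k => ?_⟩
  let shift : (Fin (n + 1) × ℤ) × Bool → (Fin (n + 1) × ℤ) × Bool :=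
    fun x => ((x.1.1, x.1.2 + (k - β)), x.2)
  refine ⟨A.map shift, s, B.map shift, ?_, ?_⟩
  · rw [← zero_add (k - β), liftWord_add, hAB, List.map_append, List.map_cons]
    simp [shift]
  · rw [← List.map_append, List.forall_mem_map]
    intro x hx hx0
    have hk : (y, k) = (y, β + (k - β)) := by rw [add_sub_cancel]
    rw [hk, top_add, top_add]
    exact add_lt_add_left (hlt x hx hx0) _

lemma IsUniqueMax.neg_bot {y : Fin (n + 1)} {w : RWord n} {β : ℤ}
    (h : IsUniqueMax (-a) (top (-a)) w y β) : IsUniqueMax a (fun e => -bot a e) w y (-β) := by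
  intro k
  obtain ⟨A, s, B, hAB, hlt⟩ := h (-k)
  have hlift := liftWord_neg (-a) (-k - β) w
  rw [neg_neg, hAB, List.map_append, List.map_cons, neg_sub, sub_neg_eq_add, add_comm β] at hlift
  refine ⟨_, s, _, by simpa using hlift, ?_⟩
  rw [← List.map_append, List.forall_mem_map]
  intro x hx hx0
  simpa only [← top_neg, neg_neg] using hlt x hx hx0

lemma IsUniqueMax.le {f : Fin (n + 1) × ℤ → ℤ} {y : Fin (n + 1)} {w : RWord n} {β h : ℤ}
    (hβ : IsUniqueMax a f w y β) {x : (Fin (n + 1) × ℤ) × Bool} (hx : x ∈ liftWord a h w)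
    (hx0 : x.1.1 ≠ 0) : f x.1 ≤ f (y, β + h) := by
  obtain ⟨A, s, B, hAB, hlt⟩ := hβ (β + h)
  rw [add_sub_cancel_left] at hAB
  rw [hAB, List.mem_append, List.mem_cons] at hx
  rcases hx with hx | rfl | hx
  · exact (hlt x (List.mem_append_left _ hx) hx0).le
  · exact le_rfl
  · exact (hlt x (List.mem_append_right _ hx) hx0).le

/-- A well-founded rank on the edges of the cover: the edges over the generator `0` come first, then
the edges above height `0` going up, then the remaining edges going down. -/
def edgeRank (a : Fin (n + 1) → ℤ) (e : Fin (n + 1) × ℤ) : ℕ ×ₗ ℕ :=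
  if e.1 = 0 then toLex (0, 0) else
    if 0 ≤ bot a e then toLex (1, (top a e).toNat) else toLex (2, (-bot a e).toNat)

lemma edgeRank_lt_of_top_lt {e e' : Fin (n + 1) × ℤ} (he0 : e.1 ≠ 0) (he : 0 ≤ bot a e)
    (he' : e'.1 ≠ 0 → 0 ≤ bot a e' ∧ top a e' < top a e) : edgeRank a e' < edgeRank a e := by
  have hbt := bot_le_top a e'
  rw [edgeRank, edgeRank, if_neg he0, if_pos he]
  split_ifs with h0 hb <;> simp only [Prod.Lex.toLex_lt_toLex] <;> grind

lemma edgeRank_lt_of_bot_lt {e e' : Fin (n + 1) × ℤ} (he0 : e.1 ≠ 0) (he : bot a e < 0)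
    (he' : e'.1 ≠ 0 → bot a e < bot a e') : edgeRank a e' < edgeRank a e := by
  rw [edgeRank, edgeRank, if_neg he0, if_neg he.not_ge]
  split_ifs with h0 hb <;> simp only [Prod.Lex.toLex_lt_toLex] <;> grind

variable {r : Fin n → RWord n} {β γ : Fin n → ℤ}

/-- The edges which generate the fundamental group of the cover freely, when `(i + 1, β i)` and
`(i + 1, γ i)` are the highest and the lowest edge of the `i`-th relator: those over `i + 1` above
height `0` for which the lift of the relator with that highest edge reaches below height `0`. -/
def freeEdges (a : Fin (n + 1) → ℤ) (β γ : Fin n → ℤ) : Set (Fin (n + 1) × ℤ) :=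
  {e | 0 ≤ bot a e ∧ ∃ i : Fin n, e.1 = i.succ ∧ bot a (i.succ, γ i + (e.2 - β i)) < 0}

/-- The equation which determines the label of an edge not in `freeEdges`: edges over the
generator `0` have trivial label, an edge above height `0` is eliminated as the highest edge of a
lift of a relator and any other edge as the lowest edge of one. -/
def definingWord (a : Fin (n + 1) → ℤ) (r : Fin n → RWord n) (β γ : Fin n → ℤ)
    (e : Fin (n + 1) × ℤ) : List ((Fin (n + 1) × ℤ) × Bool) :=
  Fin.cases (motive := fun _ => List ((Fin (n + 1) × ℤ) × Bool)) [(e, true)]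
    (fun i => liftWord a (e.2 - if 0 ≤ bot a e then β i else γ i) (r i)) e.1

lemma finite_freeEdges : (freeEdges a β γ).Finite := by
  have hsub : freeEdges a β γ ⊆ ⋃ i : Fin n, (fun k => (i.succ, k)) ''
      Set.Icc (-min 0 (a i.succ)) (β i - γ i - min 0 (a i.succ)) := by
    rintro ⟨j, k⟩ ⟨hb, i, rfl, hk⟩
    simp only [bot] at hb hk
    exact Set.mem_iUnion.2 ⟨i, k, ⟨by linarith, by linarith⟩, rfl⟩
  exact (Set.finite_iUnion fun i => (Set.finite_Icc _ _).image _).subset hsub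

lemma isTriangular_definingWord (hβ : ∀ i, IsUniqueMax a (top a) (r i) i.succ (β i))
    (hγ : ∀ i, IsUniqueMax a (fun e => -bot a e) (r i) i.succ (γ i)) :
    IsTriangular (edgeRank a) (freeEdges a β γ) (definingWord a r β γ) := by
  rintro ⟨j, k⟩ he
  induction j using Fin.cases with
  | zero => exact ⟨[], true, [], rfl, by simp⟩
  | succ i =>
    have hword : definingWord a r β γ (i.succ, k) =
      liftWord a (k - if 0 ≤ bot a (i.succ, k) then β i else γ i) (r i) := rfl
    rw [hword]
    split_ifs with hb
    · obtain ⟨A, s, B, hAB, hlt⟩ := hβ i k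
      refine ⟨A, s, B, hAB, fun x hx => edgeRank_lt_of_top_lt i.succ_ne_zero hb fun hx0 => ?_⟩
      have hmem : x ∈ liftWord a (k - β i) (r i) := by
        rw [hAB]
        exact (List.append_sublist_append_left A).2 (List.sublist_cons_self _ B) |>.mem hx
      have hlow : -bot a x.1 ≤ -bot a (i.succ, γ i + (k - β i)) := (hγ i).le hmem hx0
      have hnonneg : 0 ≤ bot a (i.succ, γ i + (k - β i)) :=
        not_lt.1 fun hneg => he ⟨hb, i, rfl, hneg⟩
      exact ⟨by lia, hlt x hx hx0⟩
    · obtain ⟨A, s, B, hAB, hlt⟩ := hγ i k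
      exact ⟨A, s, B, hAB, fun x hx => edgeRank_lt_of_bot_lt i.succ_ne_zero (not_le.1 hb)
        fun hx0 => neg_lt_neg_iff.1 (hlt x hx hx0)⟩

lemma wordProd_liftWord_relator {H : Type*} [Group H] {E : Fin (n + 1) × ℤ → H}
    (hβ : ∀ i, IsUniqueMax a (top a) (r i) i.succ (β i))
    (hγ : ∀ i, IsUniqueMax a (fun e => -bot a e) (r i) i.succ (γ i))
    (hE : ∀ e ∉ freeEdges a β γ, wordProd E (definingWord a r β γ e) = 1) (i : Fin n) (k : ℤ) :
    wordProd E (liftWord a k (r i)) = 1 := by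
  have hword (l : ℤ) : definingWord a r β γ (i.succ, l) =
    liftWord a (l - if 0 ≤ bot a (i.succ, l) then β i else γ i) (r i) := rfl
  by_cases hk : 0 ≤ bot a (i.succ, γ i + k)
  · have hb : 0 ≤ bot a (i.succ, β i + k) := by
      obtain ⟨A, s, B, hAB, -⟩ := hβ i (β i + k)
      have hmem : ((i.succ, β i + k), s) ∈ liftWord a k (r i) := by
        rw [add_sub_cancel_left] at hAB
        simp [hAB]
      have hlow : -bot a (i.succ, β i + k) ≤ -bot a (i.succ, γ i + k) :=
        (hγ i).le hmem i.succ_ne_zero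
      lia
    have hnotMem : (i.succ, β i + k) ∉ freeEdges a β γ := by
      rintro ⟨-, i', hi, hneg⟩
      obtain rfl := Fin.succ_injective n hi
      rw [add_sub_cancel_left] at hneg
      exact hneg.not_ge hk
    simpa [hword, hb] using hE _ hnotMem
  · have hnotMem : (i.succ, γ i + k) ∉ freeEdges a β γ := fun h => hk h.1
    simpa [hword, hk] using hE _ hnotMem

lemma exists_universal_label (hβ : ∀ i, IsUniqueMax a (top a) (r i) i.succ (β i))
    (hγ : ∀ i, IsUniqueMax a (fun e => -bot a e) (r i) i.succ (γ i)) :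
    ∃ E : Fin (n + 1) × ℤ → FreeGroup (freeEdges a β γ),
      (∀ i k, wordProd E (liftWord a k (r i)) = 1) ∧
      ∀ {H : Type} [Group H] (η : Fin (n + 1) × ℤ → H), (∀ k, η (0, k) = 1) →
        (∀ i k, wordProd η (liftWord a k (r i)) = 1) →
        ∀ e, FreeGroup.lift (fun w : freeEdges a β γ => η w) (E e) = η e := by
  have htri := isTriangular_definingWord hβ hγ
  obtain ⟨E, hE_free, hE⟩ := htri.exists_extension (FreeGroup.of (α := freeEdges a β γ))
  refine ⟨E, wordProd_liftWord_relator hβ hγ hE, fun {H} _ η hη0 hη => ?_⟩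
  let φ : FreeGroup (freeEdges a β γ) →* H := FreeGroup.lift fun w => η w
  suffices (fun e => φ (E e)) = η from congrFun this
  refine htri.eq_of_eqOn (fun e he => ?_) (fun e _ => ?_) fun e he => ?_
  · rw [← map_wordProd, hE e he, map_one]
  · rcases e with ⟨j, k⟩
    induction j using Fin.cases with
    | zero => simp [definingWord, letterVal, hη0]
    | succ i => exact hη i _
  · simp only [hE_free ⟨e, he⟩, φ, FreeGroup.lift_apply_of]

end UniversalLabel

/-! ### A criterion for being free-by-cyclic -/

section Criterion

variable {n : ℕ} {a : Fin (n + 1) → ℤ} {r : Fin n → RWord n}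

lemma isFreeGroup_of_injective {G H : Type*} [Group G] [Group H] [IsFreeGroup H] (f : G →* H)
    (hf : Function.Injective f) : IsFreeGroup G :=
  IsFreeGroup.ofMulEquiv (MonoidHom.ofInjective hf).symm

theorem freeByCyclic_of_hasTopPower_one (ha0 : a 0 ≠ 0) (ha : ∃ g, g ⬝ᵥ a = 1)
    (hr : ∀ i, wordSum a (r i) = 0) (htop : ∀ i, HasTopPower a 1 i.succ (r i))
    (hbot : ∀ i, HasTopPower (-a) 1 i.succ (r i)) :
    FreeByCyclic (PresentedGroup (relsOf r)) := by
  choose β hβ using fun i => (htop i).exists_isUniqueMax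
  choose γ hγ using fun i => (hbot i).exists_isUniqueMax
  obtain ⟨E, hE, huniv⟩ := exists_universal_label hβ fun i => (hγ i).neg_bot
  obtain ⟨τ, hτ0, hτ, hτx⟩ :=
    exists_transversal (heightHom_surjective hr ha) (heightHom_of hr 0) ha0
  set η := schreierLabel a (PresentedGroup.of (rels := relsOf r)) τ
  have hη_lift (w : RWord n) (k : ℤ) : wordProd η (liftWord a k w) =
      τ k * wordProd PresentedGroup.of w * (τ (k + wordSum a w))⁻¹ :=
    wordProd_schreierLabel _ _ _ _ _
  have hη0 (k : ℤ) : η (0, k) = 1 := by simp [η, schreierLabel, hτx]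
  have hη (i : Fin n) (k : ℤ) : wordProd η (liftWord a k (r i)) = 1 := by
    simp [hη_lift, hr, wordProd_of_relator]
  let incl : FreeGroup (freeEdges a β (-γ)) →* PresentedGroup (relsOf r) :=
    FreeGroup.lift fun w => η w
  have hincl_label (g : (heightHom hr).ker) : incl (kerLabelHom hr E hE g) = g := by
    obtain ⟨g, hg⟩ := g
    obtain ⟨w, rfl⟩ := exists_wordProd_of_eq g
    have hw : wordSum a w = 0 := by
      rwa [MonoidHom.mem_ker, heightHom_wordProd, ofAdd_eq_one] at hg
    rw [kerLabelHom_wordProd, map_wordProd, wordProd_congr fun x _ => huniv η hη0 hη x.1, hη_lift,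
      hw, add_zero, hτ0, one_mul, inv_one, mul_one]
  have hrange : incl.range = (heightHom hr).ker := by
    refine le_antisymm ?_ fun g hg => ⟨_, hincl_label ⟨g, hg⟩⟩
    rw [FreeGroup.range_lift_eq_closure, Subgroup.closure_le]
    rintro _ ⟨w, rfl⟩
    simp [η, schreierLabel, hτ, heightHom_of, MonoidHom.mem_ker]
  refine ⟨(heightHom hr).ker, inferInstance, ?_, ?_, heightHom hr, heightHom_surjective hr ha, rfl⟩
  · refine isFreeGroup_of_injective (kerLabelHom hr E hE) fun g g' h => Subtype.ext ?_
    rw [← hincl_label g, ← hincl_label g', h]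
  · have : Finite (freeEdges a β (-γ)) := finite_freeEdges
    rw [← hrange]
    exact Group.fg_range incl

end Criterion

/-! ### Leading coefficients, constant coefficients and non-integral roots -/

section Polynomials

open Polynomial LaurentPolynomial

lemma eq_of_toLaurent_eq_T_mul {R : Type*} [CommRing R] {p q : R[X]} (hp : p.coeff 0 ≠ 0)
    (hq : q.coeff 0 ≠ 0) {N : ℤ} (h : toLaurent q = T N * toLaurent p) : q = p := by
  have of_natCast {p q : R[X]} (hq : q.coeff 0 ≠ 0) (m : ℕ)
      (h : toLaurent q = T m * toLaurent p) : q = p := by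
    rw [← toLaurent_X_pow, ← map_mul] at h
    obtain rfl := toLaurent_injective h
    have hm : m = 0 := by
      by_contra hm
      exact hq (by rw [mul_coeff_zero, coeff_X_pow, if_neg (Ne.symm hm), zero_mul])
    rw [hm, pow_zero, one_mul]
  obtain ⟨m, rfl | rfl⟩ := N.eq_nat_or_neg
  · exact of_natCast hq m h
  · refine (of_natCast hp m ?_).symm
    rw [h, ← mul_assoc, ← T_add, add_neg_cancel, T_zero, one_mul]

lemma leadingCoeff_eq_coeff_zero_of_toLaurent_eq {R : Type*} [CommRing R] {p q : R[X]}
    (hp : p ≠ 0) (hq : q.coeff 0 ≠ 0) {N : ℤ} (h : toLaurent q = T N * invert (toLaurent p)) :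
    p.leadingCoeff = q.coeff 0 := by
  have hrev : invert (toLaurent p) = T (-p.natDegree) * toLaurent p.reverse := by
    rw [toLaurent_reverse, mul_left_comm, ← T_add, neg_add_cancel, T_zero, mul_one]
  rw [hrev, ← mul_assoc, ← T_add] at h
  have hp0 : p.reverse.coeff 0 ≠ 0 := by
    rwa [coeff_zero_reverse, Ne, leadingCoeff_eq_zero]
  rw [eq_of_toLaurent_eq_T_mul hp0 hq h, coeff_zero_reverse]

lemma leadingCoeff_dvd_coeff_zero {p : ℤ[X]} (h : ∀ z : ℂ, aeval z p = 0 → IsIntegral ℤ z) :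
    p.leadingCoeff ∣ p.coeff 0 := by
  rcases eq_or_ne p 0 with rfl | hp
  · simp
  have hinj : Function.Injective (algebraMap ℤ ℂ) := Int.cast_injective
  have hprod :=
    (IsAlgClosed.splits (p.map (algebraMap ℤ ℂ))).coeff_zero_eq_leadingCoeff_mul_prod_roots
  set R := (p.map (algebraMap ℤ ℂ)).roots
  rw [coeff_map, leadingCoeff_map_of_injective hinj, mul_right_comm] at hprod
  have hintegral : IsIntegral ℤ ((-1) ^ (p.map (algebraMap ℤ ℂ)).natDegree * R.prod) := by
    refine (isIntegral_one.neg.pow _).mul (IsIntegral.multiset_prod fun z hz => h z ?_)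
    rw [aeval_def, ← eval_map]
    exact (mem_roots'.1 hz).2
  have hquot : (-1) ^ (p.map (algebraMap ℤ ℂ)).natDegree * R.prod =
      algebraMap ℚ ℂ (p.coeff 0 / p.leadingCoeff) := by
    have hlead : (p.leadingCoeff : ℂ) ≠ 0 := Int.cast_ne_zero.2 (leadingCoeff_ne_zero.2 hp)
    rw [map_div₀, map_intCast, map_intCast, eq_div_iff hlead]
    exact hprod.symm
  rw [hquot, isIntegral_algebraMap_iff (algebraMap ℚ ℂ).injective,
    IsIntegrallyClosed.isIntegral_iff] at hintegral
  obtain ⟨k, hk⟩ := hintegral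
  have hlead : (p.leadingCoeff : ℚ) ≠ 0 := Int.cast_ne_zero.2 (leadingCoeff_ne_zero.2 hp)
  rw [eq_div_iff hlead, algebraMap_int_eq, eq_intCast] at hk
  exact ⟨k, by rw [mul_comm]; exact_mod_cast hk.symm⟩

end Polynomials

/-! ### The Alexander matrix -/

section Alexander

open Polynomial LaurentPolynomial

variable {n : ℕ} {a : Fin (n + 1) → ℤ} {r : Fin n → RWord n}

/-- The Alexander matrix of the presentation with respect to the weights `a`, with the column of
the generator `0` deleted: the Fox derivatives of the relators, as Laurent polynomials in the
generator of the deck group. -/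
noncomputable def alexanderMatrix (a : Fin (n + 1) → ℤ) (r : Fin n → RWord n) :
    Matrix (Fin n) (Fin n) ℤ[T;T⁻¹] :=
  Matrix.of fun i j =>
    wordSum (fun e => if e.1 = j.succ then T e.2 else 0) (liftWord a 0 (r i))

lemma alexanderMatrix_neg (a : Fin (n + 1) → ℤ) (r : Fin n → RWord n) :
    alexanderMatrix (-a) r = invert.mapMatrix (alexanderMatrix a r) := by
  ext1 i j
  have hlift := liftWord_neg a 0 (r i)
  rw [neg_zero] at hlift
  simp only [alexanderMatrix, AlgEquiv.mapMatrix_apply, Matrix.map_apply, Matrix.of_apply, hlift]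
  rw [wordSum_map (fun e : Fin (n + 1) × ℤ => (e.1, -e.2))]
  refine .trans (wordSum_congr fun x _ => ?_) (map_wordSum invert _ _).symm
  by_cases hx : x.1.1 = j.succ <;> simp [hx]

lemma det_alexanderMatrix_neg (a : Fin (n + 1) → ℤ) (r : Fin n → RWord n) :
    (alexanderMatrix (-a) r).det = invert (alexanderMatrix a r).det := by
  rw [alexanderMatrix_neg, AlgEquiv.map_det]

lemma top_le_of_topEdges_eq {w : RWord n} {m : ℕ} {y : Fin (n + 1)} {β : ℤ} {s : Bool}
    (h : topEdges a (top a (y, β)) w = List.replicate m ((y, β), s))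
    {x : (Fin (n + 1) × ℤ) × Bool} (hx : x ∈ liftWord a 0 w) (hx0 : x.1.1 ≠ 0) :
    top a x.1 ≤ top a (y, β) := by
  by_contra! hlt
  have hmem : x ∈ topEdges a (top a (y, β)) w :=
    List.mem_filter.2 ⟨hx, by simp [hx0, hlt.le]⟩
  rw [h] at hmem
  rw [List.eq_of_mem_replicate hmem] at hlt
  exact hlt.false

/-- The Alexander matrix with the variable inverted, with columns rescaled so that an edge
contributes according to its upper end and with the `i`-th row rescaled so that an edge with upper
end at height `t i` contributes to the constant coefficients. -/
noncomputable def topMatrix (a : Fin (n + 1) → ℤ) (r : Fin n → RWord n) (t : Fin n → ℤ) :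
    Matrix (Fin n) (Fin n) ℤ[X] :=
  Matrix.of fun i j =>
    wordSum (fun e => if e.1 = j.succ then X ^ (t i - top a e).toNat else 0) (liftWord a 0 (r i))

lemma toLaurent_topMatrix {t : Fin n → ℤ}
    (ht : ∀ i, ∀ x ∈ liftWord a 0 (r i), x.1.1 ≠ 0 → top a x.1 ≤ t i) (i j : Fin n) :
    toLaurent (topMatrix a r t i j) =
      T (t i) * (T (-max 0 (a j.succ)) * invert (alexanderMatrix a r i j)) := by
  rw [← mul_assoc, topMatrix, alexanderMatrix, Matrix.of_apply, Matrix.of_apply, map_wordSum,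
    map_wordSum, ← AddMonoidHom.coe_mulLeft, map_wordSum]
  refine wordSum_congr fun x hx => ?_
  by_cases hxj : x.1.1 = j.succ
  · have hle := ht i x hx (hxj ▸ j.succ_ne_zero)
    rw [if_pos hxj, if_pos hxj, AddMonoidHom.coe_mulLeft, toLaurent_X_pow,
      Int.toNat_of_nonneg (sub_nonneg.2 hle), invert_T, ← T_add, ← T_add, top, hxj]
    congr 1
    ring
  · rw [if_neg hxj, if_neg hxj, map_zero, map_zero, map_zero]

lemma exists_toLaurent_det_topMatrix {t : Fin n → ℤ}
    (ht : ∀ i, ∀ x ∈ liftWord a 0 (r i), x.1.1 ≠ 0 → top a x.1 ≤ t i) :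
    ∃ N, toLaurent (topMatrix a r t).det = T N * invert (alexanderMatrix a r).det := by
  have prod_T (f : Fin n → ℤ) : ∃ N, ∏ i, (T (f i) : ℤ[T;T⁻¹]) = T N :=
    Finset.prod_induction _ (fun q => ∃ N, q = T N)
      (by rintro _ _ ⟨N, rfl⟩ ⟨M, rfl⟩; exact ⟨N + M, (T_add N M).symm⟩) ⟨0, T_zero.symm⟩
      fun i _ => ⟨f i, rfl⟩
  obtain ⟨N, hN⟩ := prod_T t
  obtain ⟨M, hM⟩ := prod_T fun j => -max 0 (a j.succ)
  have hmatrix : toLaurent.mapMatrix (topMatrix a r t) =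
      Matrix.of fun i j => T (t i) * Matrix.of (fun i j => T (-max 0 (a j.succ)) *
        invert.mapMatrix (alexanderMatrix a r) i j) i j := by
    ext1 i j
    exact toLaurent_topMatrix ht i j
  refine ⟨N + M, ?_⟩
  rw [RingHom.map_det, hmatrix, Matrix.det_mul_column, Matrix.det_mul_row, hN, hM, ← mul_assoc,
    ← T_add, AlgEquiv.map_det]

lemma coeff_zero_topMatrix {m : ℕ} {β : Fin n → ℤ} {s : Fin n → Bool}
    (h : ∀ i, topEdges a (top a (i.succ, β i)) (r i) = List.replicate m ((i.succ, β i), s i)) :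
    constantCoeff.mapMatrix (topMatrix a r fun i => top a (i.succ, β i)) =
      Matrix.diagonal fun i => m • cond (s i) (1 : ℤ) (-1) := by
  ext1 i j
  have hmap : constantCoeff (topMatrix a r (fun i => top a (i.succ, β i)) i j) =
      wordSum (fun e => if e.1 = j.succ then 0 ^ (top a (i.succ, β i) - top a e).toNat else 0)
        (liftWord a 0 (r i)) := by
    refine (map_wordSum constantCoeff _ _).trans (wordSum_congr fun x _ => ?_)
    by_cases hx : x.1.1 = j.succ <;> simp [hx, zero_pow_eq, eq_comm]
  rw [RingHom.mapMatrix_apply, Matrix.map_apply, hmap, ← wordSum_filter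
    (fun x => x.1.1 ≠ 0 ∧ top a (i.succ, β i) ≤ top a x.1)]
  · rw [← topEdges, h, wordSum_replicate, Matrix.diagonal_apply, letterStep]
    by_cases hij : i = j <;> cases s i <;> simp [hij]
  · intro x _ hx
    split_ifs with hxj
    · have hlt : top a x.1 < top a (i.succ, β i) := by simpa [hxj] using hx
      exact zero_pow (by lia)
    · rfl

lemma exists_toLaurent_eq_det_of_hasTopPower {m : ℕ} (h : ∀ i, HasTopPower a m i.succ (r i)) :
    ∃ N p, toLaurent p = T N * invert (alexanderMatrix a r).det ∧ (p.coeff 0).natAbs = m ^ n := by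
  choose β s hβ using h
  obtain ⟨N, hN⟩ := exists_toLaurent_det_topMatrix fun i x => top_le_of_topEdges_eq (hβ i) (x := x)
  refine ⟨N, _, hN, ?_⟩
  rw [← constantCoeff_apply, RingHom.map_det, coeff_zero_topMatrix hβ, Matrix.det_diagonal,
    ← Int.natAbsHom_apply, map_prod, Finset.prod_congr rfl fun i _ => ?_, Fin.prod_const]
  cases s i <;> simp

lemma exists_nonintegral_root_det (hn : 1 ≤ n) (htop : ∀ i, HasTopPower a 2 i.succ (r i))
    (hbot : ∀ i, HasTopPower (-a) 1 i.succ (r i)) :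
    ∃ z : ℂˣ, ¬ IsIntegral ℤ (z : ℂ) ∧
      LaurentPolynomial.eval₂ (Int.castRingHom ℂ) z (alexanderMatrix a r).det = 0 := by
  obtain ⟨N, p, hp, hp0⟩ := exists_toLaurent_eq_det_of_hasTopPower htop
  obtain ⟨M, q, hq, hq0⟩ := exists_toLaurent_eq_det_of_hasTopPower hbot
  rw [det_alexanderMatrix_neg, involutive_invert] at hq
  have hpq : toLaurent p = T (N + M) * invert (toLaurent q) := by
    rw [hp, hq, map_mul, invert_T, ← mul_assoc, ← T_add, add_neg_cancel_right]
  have hq_coeff : q.coeff 0 ≠ 0 := by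
    rw [← Int.natAbs_ne_zero, hq0]
    exact pow_ne_zero n one_ne_zero
  have hp_coeff : p.coeff 0 ≠ 0 := by
    rw [← Int.natAbs_ne_zero, hp0]
    exact pow_ne_zero n two_ne_zero
  have hlead : q.leadingCoeff = p.coeff 0 :=
    leadingCoeff_eq_coeff_zero_of_toLaurent_eq (by rintro rfl; simp at hq_coeff) hp_coeff hpq
  obtain ⟨z, hzq, hz⟩ : ∃ z : ℂ, aeval z q = 0 ∧ ¬ IsIntegral ℤ z := by
    by_contra! hintegral
    have hdvd := Int.natAbs_dvd_natAbs.2 (leadingCoeff_dvd_coeff_zero hintegral)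
    rw [hlead, hp0, hq0, one_pow, Nat.dvd_one, Nat.pow_eq_one] at hdvd
    lia
  have hz0 : z ≠ 0 := by rintro rfl; exact hz isIntegral_zero
  refine ⟨Units.mk0 z hz0, hz, ?_⟩
  have heval := congrArg (LaurentPolynomial.eval₂ (Int.castRingHom ℂ) (Units.mk0 z hz0)) hq
  rw [eval₂_toLaurent, map_mul, eval₂_T] at heval
  exact (mul_eq_zero.1 (heval.symm.trans hzq)).resolve_left (Units.ne_zero _)

end Alexander

/-! ### A criterion for not being free-by-cyclic -/

section NonCriterion

open Polynomial LaurentPolynomial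

variable {n : ℕ} {a : Fin (n + 1) → ℤ} {r : Fin n → RWord n}

section EigenLabel

variable {K : Type*} [Field K]

/-- The labelling of the edges of the cover by elements of a field which is multiplied by `z` under
the deck transformation and takes the values `0, v 0, …, v (n - 1)` on the edges starting at
height `0`. -/
def eigenLabel (z : Kˣ) (v : Fin n → K) (e : Fin (n + 1) × ℤ) : K :=
  (z ^ e.2 : Kˣ) * (Fin.cons 0 v : Fin (n + 1) → K) e.1

lemma wordSum_eigenLabel_liftWord (z : Kˣ) (v : Fin n → K) (h : ℤ) (w : RWord n) :
    wordSum (eigenLabel z v) (liftWord a h w) =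
      (z ^ h : Kˣ) * wordSum (eigenLabel z v) (liftWord a 0 w) := by
  have hlift := liftWord_add a 0 h w
  rw [zero_add] at hlift
  rw [hlift, wordSum_map (fun e : Fin (n + 1) × ℤ => (e.1, e.2 + h)), ← AddMonoidHom.coe_mulLeft,
    map_wordSum]
  refine wordSum_congr fun x _ => ?_
  simp only [eigenLabel, AddMonoidHom.coe_mulLeft, add_comm x.1.2, zpow_add, Units.val_mul,
    mul_assoc]

lemma wordSum_eigenLabel_relator {z : Kˣ} {v : Fin n → K}
    (hv : ((LaurentPolynomial.eval₂ (Int.castRingHom K) z).mapMatrix (alexanderMatrix a r)).mulVec v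
      = 0) (i : Fin n) (h : ℤ) : wordSum (eigenLabel z v) (liftWord a h (r i)) = 0 := by
  let dotHom : (Fin n → K) →+ K := AddMonoidHom.mk' (· ⬝ᵥ v) fun x y => add_dotProduct x y v
  let edgeVec (e : Fin (n + 1) × ℤ) (j : Fin n) : K := if e.1 = j.succ then (z ^ e.2 : Kˣ) else 0
  have hlabel : eigenLabel z v = fun e => dotHom (edgeVec e) := by
    funext ⟨j, k⟩
    induction j using Fin.cases with
    | zero => simp [eigenLabel, dotHom, edgeVec, dotProduct, (Fin.succ_ne_zero _).symm]
    | succ i => simp [eigenLabel, dotHom, edgeVec, dotProduct]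
  have hrow : wordSum edgeVec (liftWord a 0 (r i)) =
      (LaurentPolynomial.eval₂ (Int.castRingHom K) z).mapMatrix (alexanderMatrix a r) i := by
    funext j
    rw [RingHom.mapMatrix_apply, Matrix.map_apply, alexanderMatrix, Matrix.of_apply, map_wordSum]
    refine (map_wordSum (Pi.evalAddMonoidHom _ j) edgeVec _).trans (wordSum_congr fun x _ => ?_)
    simp [edgeVec, apply_ite (LaurentPolynomial.eval₂ (Int.castRingHom K) z), eval₂_T]
  have hzero : wordSum (eigenLabel z v) (liftWord a 0 (r i)) = 0 := by
    rw [hlabel, ← map_wordSum, hrow]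
    exact congrFun hv i
  rw [wordSum_eigenLabel_liftWord, hzero, mul_zero]

/-- The labels of loops at height `0`, for a labelling of the edges. -/
def loopLabels (a : Fin (n + 1) → ℤ) (E : Fin (n + 1) × ℤ → K) : Set K :=
  {x | ∃ w : RWord n, wordSum a w = 0 ∧ wordSum E (liftWord a 0 w) = x}

lemma exists_fg_submodule_loopLabels (hr : ∀ i, wordSum a (r i) = 0) [Group.FG (heightHom hr).ker]
    {E : Fin (n + 1) × ℤ → K} (hE : ∀ i k, wordSum E (liftWord a k (r i)) = 0) :
    ∃ M : Submodule ℤ K, M.FG ∧ M = loopLabels a E := by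
  let φ : (heightHom hr).ker →* Multiplicative K :=
    kerLabelHom hr (fun e => Multiplicative.ofAdd (E e)) fun i k => by
      rw [wordProd_ofAdd, hE, ofAdd_zero]
  have hφ (w : RWord n) (hw : wordProd PresentedGroup.of w ∈ (heightHom hr).ker) :
      φ ⟨_, hw⟩ = Multiplicative.ofAdd (wordSum E (liftWord a 0 w)) := by
    rw [kerLabelHom_wordProd, wordProd_ofAdd]
  refine ⟨AddSubgroup.toIntSubmodule (Subgroup.toAddSubgroup' φ.range), ?_, ?_⟩
  · rw [Submodule.fg_iff_addSubgroup_fg, AddSubgroup.toIntSubmodule_toAddSubgroup,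
      AddSubgroup.fg_iff_mul_fg]
    exact (Group.fg_iff_subgroup_fg _).1 (Group.fg_range φ)
  · refine Set.Subset.antisymm ?_ ?_
    · rintro x ⟨⟨g, hg⟩, hgx⟩
      obtain ⟨w, rfl⟩ := exists_wordProd_of_eq g
      refine ⟨w, ?_, Multiplicative.ofAdd.injective ((hφ w hg).symm.trans hgx)⟩
      rwa [MonoidHom.mem_ker, heightHom_wordProd, ofAdd_eq_one] at hg
    · rintro _ ⟨w, hw, rfl⟩
      have hmem : wordProd PresentedGroup.of w ∈ (heightHom hr).ker := by
        rw [MonoidHom.mem_ker, heightHom_wordProd, hw, ofAdd_zero]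
      exact ⟨⟨_, hmem⟩, hφ w hmem⟩

lemma exists_ne_zero_mem_loopLabels_eigenLabel (a : Fin (n + 1) → ℤ) {z : Kˣ} (hz : z ^ a 0 ≠ 1)
    {v : Fin n → K} (hv : v ≠ 0) : ∃ x ∈ loopLabels a (eigenLabel z v), x ≠ 0 := by
  obtain ⟨j, hj⟩ := Function.ne_iff.1 hv
  let commutator : RWord n := [(0, true), (j.succ, true), (0, false), (j.succ, false)]
  have hlabel : wordSum (eigenLabel z v) (liftWord a 0 commutator) =
      (((z ^ a 0 : Kˣ) : K) - 1) * v j := by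
    simp only [liftWord_cons, zero_sub, cond_true, letterStep, zero_add, add_sub_cancel_left,
      cond_false, add_neg_cancel_comm, sub_self, add_neg_cancel, liftWord_nil, wordSum_cons,
      eigenLabel, zpow_ofNat, pow_zero, Units.val_one, Fin.cons_zero, mul_zero, neg_zero,
      Bool.cond_self, Units.val_zpow_eq_zpow_val, Fin.cons_succ, one_mul, wordSum_nil, add_zero,
      commutator]
    ring
  refine ⟨_, ⟨commutator, by simp [commutator, letterStep], hlabel⟩, mul_ne_zero ?_ hj⟩
  rwa [sub_ne_zero, Ne, Units.val_eq_one]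

lemma mul_loopLabels_eq_sub (ha : ∃ g, g ⬝ᵥ a = 1) (z : Kˣ) (v : Fin n → K)
    {x : K} (hx : x ∈ loopLabels a (eigenLabel z v)) :
    ∃ y ∈ loopLabels a (eigenLabel z v), ∃ y' ∈ loopLabels a (eigenLabel z v), z * x = y - y' := by
  obtain ⟨w, hw, rfl⟩ := hx
  obtain ⟨u, hu⟩ := exists_wordSum_eq ha 1
  obtain ⟨u', hu'⟩ := exists_wordSum_eq ha (-1)
  refine ⟨_, ⟨u ++ (w ++ u'), by simp [hu, hw, hu'], rfl⟩, _, ⟨u ++ u', by simp [hu, hu'], rfl⟩, ?_⟩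
  have hshift := wordSum_eigenLabel_liftWord (a := a) z v 1 w
  rw [zpow_one] at hshift
  simp only [liftWord_append, wordSum_append, hu, hw, zero_add, add_zero, hshift]
  ring

lemma isIntegral_of_fg_ker_heightHom (ha0 : a 0 ≠ 0) (ha : ∃ g, g ⬝ᵥ a = 1)
    (hr : ∀ i, wordSum a (r i) = 0) [Group.FG (heightHom hr).ker] {z : Kˣ}
    (hz : LaurentPolynomial.eval₂ (Int.castRingHom K) z (alexanderMatrix a r).det = 0) :
    IsIntegral ℤ (z : K) := by
  by_cases hz1 : z ^ a 0 = 1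
  · have hpow : (z : K) ^ (a 0).natAbs = 1 := by
      rw [← Units.val_pow_eq_pow_val, pow_natAbs_eq_one.2 hz1, Units.val_one]
    exact .of_pow (Int.natAbs_pos.2 ha0) (hpow ▸ isIntegral_one)
  rw [RingHom.map_det, ← Matrix.exists_mulVec_eq_zero_iff] at hz
  obtain ⟨v, hv0, hv⟩ := hz
  obtain ⟨M, hMfg, hM⟩ := exists_fg_submodule_loopLabels hr (wordSum_eigenLabel_relator hv)
  obtain ⟨x, hx, hx0⟩ := exists_ne_zero_mem_loopLabels_eigenLabel a hz1 hv0
  rw [← hM] at hx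
  refine isIntegral_of_smul_mem_submodule M (M.ne_bot_iff.2 ⟨x, hx, hx0⟩) hMfg _ fun x hx => ?_
  rw [← SetLike.mem_coe, hM] at hx
  obtain ⟨y, hy, y', hy', hxy⟩ := mul_loopLabels_eq_sub ha z v hx
  rw [← hM] at hy hy'
  rw [smul_eq_mul, hxy]
  exact M.sub_mem hy hy'

end EigenLabel

lemma ker_eq_ker_heightHom (ha0 : a 0 ≠ 0) (hr : ∀ i, wordSum a (r i) = 0)
    (hunique : ∀ a' : Fin (n + 1) → ℤ, (∀ i, wordSum a' (r i) = 0) → ∀ j, a 0 * a' j = a' 0 * a j)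
    {ψ : PresentedGroup (relsOf r) →* Multiplicative ℤ} (hψ : Function.Surjective ψ) :
    ψ.ker = (heightHom hr).ker := by
  set a' : Fin (n + 1) → ℤ := fun j => (ψ (PresentedGroup.of j)).toAdd
  have hr' (i : Fin n) : wordSum a' (r i) = 0 := by
    rw [← ofAdd_eq_one, ← wordProd_ofAdd, ← map_one ψ, ← wordProd_of_relator i, map_wordProd]
    rfl
  have hprop (g : PresentedGroup (relsOf r)) : ψ g ^ a 0 = heightHom hr g ^ a' 0 := by
    have hcomp : (zpowGroupHom (a 0)).comp ψ = (zpowGroupHom (a' 0)).comp (heightHom hr) := by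
      refine PresentedGroup.ext fun j => ?_
      simp only [MonoidHom.comp_apply, zpowGroupHom_apply, heightHom_of]
      exact congrArg Multiplicative.ofAdd (hunique a' hr' j)
    exact DFunLike.congr_fun hcomp g
  have ha'0 : a' 0 ≠ 0 := by
    intro h0
    obtain ⟨g, hg⟩ := hψ (Multiplicative.ofAdd 1)
    have hg0 := hprop g
    rw [h0, zpow_zero, hg, ← ofAdd_zsmul, ofAdd_eq_one] at hg0
    simp [ha0] at hg0
  ext g
  rw [MonoidHom.mem_ker, MonoidHom.mem_ker, ← IsMulTorsionFree.zpow_eq_one_iff_left ha0, hprop,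
    IsMulTorsionFree.zpow_eq_one_iff_left ha'0]

theorem not_freeByCyclic_of_hasTopPower_two (hn : 1 ≤ n) (ha0 : a 0 ≠ 0) (ha : ∃ g, g ⬝ᵥ a = 1)
    (hr : ∀ i, wordSum a (r i) = 0)
    (hunique : ∀ a' : Fin (n + 1) → ℤ, (∀ i, wordSum a' (r i) = 0) → ∀ j, a 0 * a' j = a' 0 * a j)
    (htop : ∀ i, HasTopPower a 2 i.succ (r i)) (hbot : ∀ i, HasTopPower (-a) 1 i.succ (r i)) :
    ¬ FreeByCyclic (PresentedGroup (relsOf r)) := by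
  rintro ⟨_, -, -, hfg, ψ, hψ, rfl⟩
  rw [ker_eq_ker_heightHom ha0 hr hunique hψ] at hfg
  obtain ⟨z, hz, hroot⟩ := exists_nonintegral_root_det hn htop hbot
  exact hz (isIntegral_of_fg_ker_heightHom ha0 ha hr hroot)

end NonCriterion

/-! ### Inserting blocks at a peak of a relator -/

section CyclicReduction

variable {n : ℕ} {A B P : RWord n}

lemma cyclicallyReduced_iff {w : RWord n} :
    CyclicallyReduced w ↔ FreeGroup.IsCyclicallyReduced w := by
  rw [CyclicallyReduced, ← FreeGroup.isReduced_iff_reduce_eq, FreeGroup.isCyclicallyReduced_iff,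
    FreeGroup.IsReduced, List.isChain_append]
  exact ⟨fun h => h.2, fun h => ⟨h.1, h⟩⟩

lemma cyclicallyReduced_append_comm (h : CyclicallyReduced (A ++ B)) :
    CyclicallyReduced (B ++ A) := by
  have hcube := ((cyclicallyReduced_iff.1 h).flatten_replicate 3).isReduced
  have hsplit : (List.replicate 3 (A ++ B)).flatten = A ++ ((B ++ A ++ (B ++ A)) ++ B) := by
    simp [List.replicate_succ]
  rw [CyclicallyReduced, ← FreeGroup.isReduced_iff_reduce_eq]
  rw [hsplit] at hcube
  exact hcube.right_of_append.left_of_append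

lemma cyclicallyReduced_insert (h : CyclicallyReduced (A ++ B)) (hB : B ≠ []) (hP₀ : P ≠ [])
    (hP : FreeGroup.IsReduced P)
    (hlast : ∀ x ∈ P.getLast?, ∀ z ∈ B.head?, x.1 = z.1 → x.2 = z.2)
    (hhead : ∀ x ∈ (B ++ A).getLast?, ∀ z ∈ P.head?, x.1 = z.1 → x.2 = z.2) :
    CyclicallyReduced (A ++ (P ++ B)) := by
  apply cyclicallyReduced_append_comm
  rw [List.append_assoc]
  have hBA := (cyclicallyReduced_iff.1 (cyclicallyReduced_append_comm h)).isReduced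
  rw [cyclicallyReduced_iff, FreeGroup.isCyclicallyReduced_iff, FreeGroup.IsReduced,
    List.isChain_append, List.getLast?_append_of_ne_nil _ (List.append_ne_nil_of_left_ne_nil hB A),
    List.head?_append_of_ne_nil _ hP₀, List.head?_append_of_ne_nil _ hB]
  exact ⟨⟨hP, hBA, hlast⟩, hhead⟩

end CyclicReduction

section Peaks

variable {n : ℕ} {a : Fin (n + 1) → ℤ} {A B : RWord n}

/-- The path spelled by `A ++ B` reaches its maximal height at the end of `A`. -/
def IsPeak (a : Fin (n + 1) → ℤ) (A B : RWord n) : Prop :=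
  ∀ C, C <+: A ++ B → wordSum a C ≤ wordSum a A

lemma exists_isPeak {w : RWord n} (hw : w ≠ []) (h0 : wordSum a w = 0) :
    ∃ A x B, w = A ++ x :: B ∧ IsPeak a A (x :: B) := by
  have hlen : 0 < w.length := List.length_pos_iff.2 hw
  obtain ⟨i, hi, hmax⟩ := Finset.exists_max_image (Finset.range w.length)
    (fun i => wordSum a (w.take i)) ⟨0, Finset.mem_range.2 hlen⟩
  simp only [Finset.mem_range] at hi hmax
  have hsplit : w = w.take i ++ w[i] :: w.drop (i + 1) := by
    rw [← List.drop_eq_getElem_cons hi, List.take_append_drop]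
  refine ⟨w.take i, w[i], w.drop (i + 1), hsplit, fun C hC => ?_⟩
  rw [← hsplit] at hC
  rw [List.prefix_iff_eq_take] at hC
  rcases lt_or_ge C.length w.length with hlt | hge
  · rw [hC]
    exact hmax _ hlt
  · rw [hC, List.take_of_length_le hge, h0]
    simpa using hmax 0 hlen

lemma length_liftWord (h : ℤ) (w : RWord n) : (liftWord a h w).length = w.length := by
  induction w generalizing h with
  | nil => rfl
  | cons x w ih => rw [liftWord_cons, List.length_cons, ih, List.length_cons]

lemma top_le_of_forall_prefix {H h : ℤ} {w : RWord n} (hw : ∀ C, C <+: w → h + wordSum a C ≤ H)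
    {x : (Fin (n + 1) × ℤ) × Bool} (hx : x ∈ liftWord a h w) : top a x.1 ≤ H := by
  induction w generalizing h with
  | nil => exact absurd hx List.not_mem_nil
  | cons u w ih =>
    rw [liftWord_cons, List.mem_cons] at hx
    rcases hx with rfl | hx
    · have hstart := hw [] List.nil_prefix
      have hend := hw [u] ⟨w, rfl⟩
      simp only [wordSum_nil, wordSum_cons, add_zero, top, letterStep] at hstart hend ⊢
      rcases u with ⟨j, _ | _⟩ <;> simp only [cond_true, cond_false] at hend ⊢ <;> lia
    · refine ih (fun C hC => ?_) hx
      have hu := hw (u :: C) (List.cons_prefix_cons.2 ⟨rfl, hC⟩)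
      rwa [wordSum_cons, ← add_assoc] at hu

lemma IsPeak.top_le_left (hp : IsPeak a A B) {x : (Fin (n + 1) × ℤ) × Bool}
    (hx : x ∈ liftWord a 0 A) : top a x.1 ≤ wordSum a A :=
  top_le_of_forall_prefix
    (fun C hC => by rw [zero_add]; exact hp C (hC.trans (List.prefix_append A B))) hx

lemma IsPeak.top_le_right (hp : IsPeak a A B) {x : (Fin (n + 1) × ℤ) × Bool}
    (hx : x ∈ liftWord a (wordSum a A) B) : top a x.1 ≤ wordSum a A :=
  top_le_of_forall_prefix (fun C hC => by
    rw [← wordSum_append]; exact hp _ ((List.prefix_append_right_inj A).2 hC)) hx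

lemma IsPeak.letterStep_getLast_nonneg (hp : IsPeak a A B) (h0 : wordSum a (A ++ B) = 0)
    {x : Fin (n + 1) × Bool} (hx : x ∈ (B ++ A).getLast?) : 0 ≤ letterStep a x := by
  rcases A.eq_nil_or_concat with rfl | ⟨A', u, rfl⟩
  · rw [List.append_nil] at hx
    obtain ⟨B', rfl⟩ := List.getLast?_eq_some_iff.1 hx
    have hB' := hp B' ⟨[x], rfl⟩
    simp only [List.nil_append, wordSum_append, wordSum_cons, wordSum_nil, add_zero] at h0 hB'
    lia
  · obtain rfl : u = x := by simpa using hx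
    have hA' := hp A' (by simp)
    simpa using hA'

end Peaks

section Blocks

variable {n : ℕ} (a : Fin (n + 1) → ℤ) (h : ℤ) (ε b : Bool) (y : Fin (n + 1))

/-- The commutator word `[x₀^ε, y^{-b}]`, with signs encoded as Booleans. -/
def block : RWord n := [(0, ε), (y, !b), (0, !ε), (y, b)]

/-- The `e`-th power of `block`. -/
def blocks (e : ℕ) : RWord n := (List.replicate e (block ε b y)).flatten

/-- The position of the first edge over `y` in the lift of `block` at height `h`. -/
def blockPos : ℤ := cond b (h + letterStep a (0, ε) - a y) (h + letterStep a (0, ε))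

lemma blocks_succ (e : ℕ) : blocks ε b y (e + 1) = block ε b y ++ blocks ε b y e := by
  rw [blocks, List.replicate_succ, List.flatten_cons, blocks]

lemma wordSum_block : wordSum a (block ε b y) = 0 := by
  cases ε <;> cases b <;> simp [block, letterStep]

lemma wordSum_blocks (e : ℕ) : wordSum a (blocks ε b y e) = 0 := by
  induction e with
  | zero => rfl
  | succ e ih => rw [blocks_succ, wordSum_append, wordSum_block, ih, add_zero]

lemma length_blocks (e : ℕ) : (blocks ε b y e).length = 4 * e := by
  simp [blocks, block, mul_comm]

lemma liftWord_blocks_succ (e : ℕ) : liftWord a h (blocks ε b y (e + 1)) =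
    liftWord a h (block ε b y) ++ liftWord a h (blocks ε b y e) := by
  rw [blocks_succ, liftWord_append, wordSum_block, add_zero]

lemma head?_blocks_succ (e : ℕ) : (blocks ε b y (e + 1)).head? = some (0, ε) := by
  rw [blocks_succ]
  rfl

lemma getLast?_blocks_succ (e : ℕ) : (blocks ε b y (e + 1)).getLast? = some (y, b) := by
  rw [blocks, List.replicate_succ', List.flatten_append, List.flatten_singleton,
    List.getLast?_append]
  rfl

variable {ε b y} in
lemma isReduced_blocks (hy : y ≠ 0) (e : ℕ) : FreeGroup.IsReduced (blocks ε b y e) := by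
  have hblock : FreeGroup.IsCyclicallyReduced (block ε b y) := by
    simp [FreeGroup.isCyclicallyReduced_iff, FreeGroup.IsReduced, block, hy, hy.symm]
  exact (hblock.flatten_replicate e).isReduced

lemma exists_liftWord_block : ∃ α γ, liftWord a h (block ε b y) =
    [((0, α), ε), ((y, blockPos a h ε b y), !b), ((0, γ), !ε),
      ((y, blockPos a h ε b y - letterStep a (0, ε)), b)] := by
  refine ⟨cond ε h (h - a 0), cond (!ε) (h + letterStep a (0, ε) + letterStep a (y, !b))
    (h + letterStep a (0, ε) + letterStep a (y, !b) - a 0), ?_⟩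
  cases ε <;> cases b <;>
    simp only [block, blockPos, liftWord_cons, liftWord_nil, letterStep, cond_true, cond_false,
      Bool.not_true, Bool.not_false, List.cons.injEq, Prod.mk.injEq, true_and, and_true] <;>
    ring_nf

lemma top_blockPos : top a (y, blockPos a h ε b y) =
    h + letterStep a (0, ε) + max 0 (letterStep a (y, !b)) := by
  simp only [top, blockPos, letterStep]
  cases b <;> simp only [cond_true, cond_false, Bool.not_true, Bool.not_false]
  lia

lemma abs_letterStep (x : Fin (n + 1) × Bool) : |letterStep a x| = |a x.1| := by
  rcases x with ⟨j, _ | _⟩ <;> simp [letterStep]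

lemma letterStep_not (j : Fin (n + 1)) (s : Bool) :
    letterStep a (j, !s) = -letterStep a (j, s) := by
  cases s <;> simp [letterStep]

variable {a h ε b y} in
lemma eq_or_eq_of_mem_liftWord_blocks {e : ℕ} {x : (Fin (n + 1) × ℤ) × Bool}
    (hx : x ∈ liftWord a h (blocks ε b y e)) (hx0 : x.1.1 ≠ 0) :
    x.1 = (y, blockPos a h ε b y) ∨ x.1 = (y, blockPos a h ε b y - letterStep a (0, ε)) := by
  induction e with
  | zero => exact absurd hx List.not_mem_nil
  | succ e ih =>
    obtain ⟨α, γ, hblock⟩ := exists_liftWord_block a h ε b y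
    rw [liftWord_blocks_succ, List.mem_append, hblock] at hx
    rcases hx with hx | hx
    · simp only [List.mem_cons, List.not_mem_nil, or_false] at hx
      rcases hx with rfl | rfl | rfl | rfl
      exacts [absurd rfl hx0, Or.inl rfl, absurd rfl hx0, Or.inr rfl]
    · exact ih hx

end Blocks

section TopRemoval

variable {n : ℕ}

/-- The position in `v` of the first among the highest edges which are not over the
generator `0`. -/
noncomputable def topIndex (a : Fin (n + 1) → ℤ) (v : RWord n) : ℕ :=
  (liftWord a 0 v).findIdx fun x =>
    x.1.1 ≠ 0 ∧ ∀ z ∈ liftWord a 0 v, z.1.1 ≠ 0 → top a z.1 ≤ top a x.1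

/-- Undoes the insertion of a power `blocks ε b y e` at a peak: the highest edge is the second
edge of the inserted word. -/
noncomputable def removeTop (a : Fin (n + 1) → ℤ) (e : ℕ) (v : RWord n) : RWord n :=
  v.take (topIndex a v - 1) ++ v.drop (topIndex a v - 1 + 4 * e)

lemma topIndex_eq_length {a : Fin (n + 1) → ℤ} {v : RWord n}
    {C D : List ((Fin (n + 1) × ℤ) × Bool)} {x : (Fin (n + 1) × ℤ) × Bool}
    (hv : liftWord a 0 v = C ++ x :: D) (hx : x.1.1 ≠ 0)
    (hC : ∀ z ∈ C, z.1.1 ≠ 0 → top a z.1 < top a x.1)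
    (hD : ∀ z ∈ D, z.1.1 ≠ 0 → top a z.1 ≤ top a x.1) : topIndex a v = C.length := by
  have hmax : ∀ z ∈ C ++ x :: D, z.1.1 ≠ 0 → top a z.1 ≤ top a x.1 := by
    simp only [List.mem_append, List.mem_cons]
    rintro z (hz | rfl | hz) hz0
    exacts [(hC z hz hz0).le, le_rfl, hD z hz hz0]
  rw [topIndex, hv, List.findIdx_append, List.findIdx_eq_length_of_false, if_neg (lt_irrefl _),
    List.findIdx_cons, decide_eq_true ⟨hx, hmax⟩, cond_true, zero_add]
  intro z hz
  rw [decide_eq_false_iff_not]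
  rintro ⟨hz0, hzmax⟩
  exact (hC z hz hz0).not_ge (hzmax x (List.mem_append_right _ List.mem_cons_self) hx)

end TopRemoval

section Insertion

variable {n : ℕ} {a : Fin (n + 1) → ℤ} {y : Fin (n + 1)} {e : ℕ} {ε b : Bool} {A B : RWord n}

/-- `HasTopPower`, with the additional requirement that some prefix of `w` ends so low that
inserting `blocks` there does not affect the highest edges. -/
def HasStableTopPower (a : Fin (n + 1) → ℤ) (e : ℕ) (y : Fin (n + 1)) (w : RWord n) : Prop :=
  ∃ β s, topEdges a (top a (y, β)) w = List.replicate e ((y, β), s) ∧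
    ∃ C, C <+: w ∧ wordSum a C + |a y| < top a (y, β)

lemma HasStableTopPower.hasTopPower {w : RWord n} (h : HasStableTopPower a e y w) :
    HasTopPower a e y w :=
  let ⟨β, s, hβ, _⟩ := h
  ⟨β, s, hβ⟩

lemma wordSum_insert_blocks (f : Fin (n + 1) → ℤ) :
    wordSum f (A ++ (blocks ε b y e ++ B)) = wordSum f (A ++ B) := by
  simp only [wordSum_append, wordSum_blocks, zero_add]

lemma liftWord_insert_blocks : liftWord a 0 (A ++ (blocks ε b y e ++ B)) = liftWord a 0 A ++
    (liftWord a (wordSum a A) (blocks ε b y e) ++ liftWord a (wordSum a A) B) := by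
  rw [liftWord_append, liftWord_append, wordSum_blocks, add_zero, zero_add]

lemma topEdges_insert_blocks (T : ℤ) : topEdges a T (A ++ (blocks ε b y e ++ B)) =
    topEdges a T A ++ ((liftWord a (wordSum a A) (blocks ε b y e)).filter
      (fun x => x.1.1 ≠ 0 ∧ T ≤ top a x.1) ++
      (liftWord a (wordSum a A) B).filter fun x => x.1.1 ≠ 0 ∧ T ≤ top a x.1) := by
  rw [topEdges, liftWord_insert_blocks, List.filter_append, List.filter_append, topEdges]

lemma exists_letterStep_eq_abs (a : Fin (n + 1) → ℤ) : ∃ ε, letterStep a (0, ε) = |a 0| := by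
  rcases abs_choice (a 0) with h | h
  exacts [⟨true, h.symm⟩, ⟨false, h.symm⟩]

lemma cyclicallyReduced_insert_blocks {z : Fin (n + 1)} (hp : IsPeak a A ((z, b) :: B))
    (h0 : wordSum a (A ++ (z, b) :: B) = 0) (hε : 0 < letterStep a (0, ε)) (hy : y ≠ 0)
    (hc : CyclicallyReduced (A ++ (z, b) :: B)) :
    CyclicallyReduced (A ++ (blocks ε b y (e + 1) ++ (z, b) :: B)) := by
  refine cyclicallyReduced_insert hc (List.cons_ne_nil _ _) (by simp [blocks_succ, block])
    (isReduced_blocks hy _) ?_ ?_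
  · simp [getLast?_blocks_succ]
  · rw [head?_blocks_succ]
    rintro ⟨j, s⟩ hj _ ⟨⟩ (rfl : j = 0)
    have hstep := hp.letterStep_getLast_nonneg h0 hj
    by_contra hs
    obtain rfl : s = !ε := Bool.eq_not.2 hs
    rw [letterStep_not] at hstep
    lia

lemma filter_liftWord_blocks (hy : y ≠ 0) (h : ℤ) (hε : 0 < letterStep a (0, ε)) (e : ℕ) :
    (liftWord a h (blocks ε b y e)).filter
      (fun x => x.1.1 ≠ 0 ∧ top a (y, blockPos a h ε b y) ≤ top a x.1) =
      List.replicate e ((y, blockPos a h ε b y), !b) := by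
  induction e with
  | zero => rfl
  | succ e ih =>
    obtain ⟨α, γ, hblock⟩ := exists_liftWord_block a h ε b y
    rw [liftWord_blocks_succ, List.filter_append, ih, hblock, List.replicate_succ]
    simp [hy, hε, sub_eq_add_neg, top_add]

lemma lt_top_blockPos {k h : ℤ} (hk : k ≤ h) (hε : 0 < letterStep a (0, ε)) :
    k < top a (y, blockPos a h ε b y) := by
  have hmax := le_max_left 0 (letterStep a (y, !b))
  rw [top_blockPos]
  lia

lemma IsPeak.topEdges_insert_blocks (hp : IsPeak a A B) (hy : y ≠ 0)
    (hε : 0 < letterStep a (0, ε)) :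
    topEdges a (top a (y, blockPos a (wordSum a A) ε b y)) (A ++ (blocks ε b y e ++ B)) =
      List.replicate e ((y, blockPos a (wordSum a A) ε b y), !b) := by
  have hfilter {L : List ((Fin (n + 1) × ℤ) × Bool)} (hL : ∀ x ∈ L, top a x.1 ≤ wordSum a A) :
      L.filter (fun x => x.1.1 ≠ 0 ∧ top a (y, blockPos a (wordSum a A) ε b y) ≤ top a x.1) =
        [] := by
    rw [List.filter_eq_nil_iff]
    intro x hx
    rw [decide_eq_true_iff]
    exact fun h => (lt_top_blockPos (hL x hx) hε).not_ge h.2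
  rw [FewRelator.topEdges_insert_blocks, topEdges, hfilter fun x => hp.top_le_left,
    hfilter fun x => hp.top_le_right, filter_liftWord_blocks hy _ hε, List.nil_append,
    List.append_nil]

lemma IsPeak.hasStableTopPower_insert_blocks (hp : IsPeak a A B) (hy : y ≠ 0)
    (hε : 0 < letterStep a (0, ε)) :
    HasStableTopPower a (e + 1) y (A ++ (blocks ε b y (e + 1) ++ B)) := by
  refine ⟨_, !b, hp.topEdges_insert_blocks hy hε, ?_⟩
  rw [top_blockPos]
  rcases le_total 0 (letterStep a (y, !b)) with hstep | hstep
  · refine ⟨A, List.prefix_append _ _, ?_⟩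
    rw [← abs_letterStep a (y, !b), abs_of_nonneg hstep, max_eq_right hstep]
    lia
  · refine ⟨A ++ [(0, ε), (y, !b), (0, !ε)], by simp [blocks_succ, block], ?_⟩
    rw [← abs_letterStep a (y, !b), abs_of_nonpos hstep, max_eq_left hstep]
    simp only [wordSum_append, wordSum_cons, wordSum_nil, letterStep_not a 0 ε]
    lia

lemma HasStableTopPower.insert_blocks {e' : ℕ} (h : HasStableTopPower a e' y (A ++ B))
    (hpit : ∀ C, C <+: A ++ B → wordSum a A ≤ wordSum a C) (hε : letterStep a (0, ε) ≤ 0) :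
    HasStableTopPower a e' y (A ++ (blocks ε b y e ++ B)) := by
  obtain ⟨β, s, hβ, C, hC, hlow⟩ := h
  have hAC := hpit C hC
  refine ⟨β, s, ?_, A, List.prefix_append _ _, by lia⟩
  rw [topEdges_insert_blocks, List.filter_eq_nil_iff.2, List.nil_append, ← hβ, topEdges, topEdges,
    liftWord_append, List.filter_append, zero_add]
  intro x hx
  rw [decide_eq_true_iff]
  rintro ⟨hx0, hle⟩
  have htop := top_blockPos a (wordSum a A) ε b y
  have hmax : max 0 (letterStep a (y, !b)) ≤ |a y| :=
    abs_letterStep a (y, !b) ▸ max_le (abs_nonneg _) (le_abs_self _)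
  rcases eq_or_eq_of_mem_liftWord_blocks hx hx0 with hx | hx
  · rw [hx] at hle
    lia
  · rw [hx, sub_eq_add_neg, top_add] at hle
    lia

lemma IsPeak.topIndex_insert_blocks (hp : IsPeak a A B) (hy : y ≠ 0)
    (hε : 0 < letterStep a (0, ε)) :
    topIndex a (A ++ (blocks ε b y (e + 1) ++ B)) = A.length + 1 := by
  obtain ⟨α, γ, hblock⟩ := exists_liftWord_block a (wordSum a A) ε b y
  let tail : List ((Fin (n + 1) × ℤ) × Bool) := ((0, γ), !ε) ::
    ((y, blockPos a (wordSum a A) ε b y - letterStep a (0, ε)), b) ::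
      (liftWord a (wordSum a A) (blocks ε b y e) ++ liftWord a (wordSum a A) B)
  have hlift : liftWord a 0 (A ++ (blocks ε b y (e + 1) ++ B)) = (liftWord a 0 A ++ [((0, α), ε)])
      ++ ((y, blockPos a (wordSum a A) ε b y), !b) :: tail := by
    rw [liftWord_insert_blocks, liftWord_blocks_succ, hblock]
    simp [tail]
  have hlower : top a (y, blockPos a (wordSum a A) ε b y - letterStep a (0, ε)) ≤
      top a (y, blockPos a (wordSum a A) ε b y) := by
    rw [sub_eq_add_neg, top_add]
    lia
  rw [topIndex_eq_length hlift hy, List.length_append, length_liftWord, List.length_singleton]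
  · intro x hx hx0
    rcases List.mem_append.1 hx with hx | hx
    · exact lt_top_blockPos (hp.top_le_left hx) hε
    · rw [List.mem_singleton.1 hx] at hx0
      exact absurd rfl hx0
  · simp only [tail, List.mem_cons, List.mem_append]
    rintro x (rfl | rfl | hx | hx) hx0
    · exact absurd rfl hx0
    · exact hlower
    · rcases eq_or_eq_of_mem_liftWord_blocks hx hx0 with hx | hx <;> rw [hx]
      exact hlower
    · exact (lt_top_blockPos (hp.top_le_right hx) hε).le

lemma IsPeak.removeTop_insert_blocks (hp : IsPeak a A B) (hy : y ≠ 0)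
    (hε : 0 < letterStep a (0, ε)) :
    removeTop a (e + 1) (A ++ (blocks ε b y (e + 1) ++ B)) = A ++ B := by
  rw [removeTop, hp.topIndex_insert_blocks hy hε, Nat.add_sub_cancel, List.take_left,
    ← List.drop_drop, List.drop_left, ← length_blocks ε b y, List.drop_left]

theorem exists_insert_top (ha : a 0 ≠ 0) (hy : y ≠ 0) (e : ℕ) {w : RWord n} (hw : w ≠ [])
    (hc : CyclicallyReduced w) (h0 : wordSum a w = 0) :
    ∃ w' : RWord n, w' ≠ [] ∧ CyclicallyReduced w' ∧ w'.length = w.length + 4 * (e + 1) ∧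
      (∀ f : Fin (n + 1) → ℤ, wordSum f w' = wordSum f w) ∧
      HasStableTopPower a (e + 1) y w' ∧ removeTop a (e + 1) w' = w ∧
      ∀ e', HasStableTopPower (-a) e' y w → HasStableTopPower (-a) e' y w' := by
  obtain ⟨A, ⟨z, b⟩, B, rfl, hp⟩ := exists_isPeak hw h0
  obtain ⟨ε, hε⟩ := exists_letterStep_eq_abs a
  replace hε : 0 < letterStep a (0, ε) := hε ▸ abs_pos.2 ha
  refine ⟨A ++ (blocks ε b y (e + 1) ++ (z, b) :: B), by simp,
    cyclicallyReduced_insert_blocks hp h0 hε hy hc, ?_, wordSum_insert_blocks,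
    hp.hasStableTopPower_insert_blocks hy hε, hp.removeTop_insert_blocks hy hε,
    fun e' h => h.insert_blocks (fun C hC => ?_) ?_⟩
  · rw [List.length_append, List.length_append, List.length_append, length_blocks]
    lia
  · rw [wordSum_neg, wordSum_neg]
    exact neg_le_neg (hp C hC)
  · rw [letterStep_neg]
    exact (neg_neg_of_pos hε).le

theorem exists_insert_top_bot (ha : a 0 ≠ 0) (hy : y ≠ 0) (e : ℕ) {w : RWord n} (hw : w ≠ [])
    (hc : CyclicallyReduced w) (h0 : wordSum a w = 0) :
    ∃ w' : RWord n, w' ≠ [] ∧ CyclicallyReduced w' ∧ w'.length = w.length + 4 * (e + 2) ∧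
      (∀ f : Fin (n + 1) → ℤ, wordSum f w' = wordSum f w) ∧
      HasTopPower a (e + 1) y w' ∧ HasTopPower (-a) 1 y w' ∧
      removeTop a (e + 1) (removeTop (-a) 1 w') = w := by
  obtain ⟨v, hv, hvc, hvlen, hvsum, hvtop, hvrem, -⟩ := exists_insert_top ha hy e hw hc h0
  obtain ⟨w', hw', hwc, hwlen, hwsum, hwtop, hwrem, hstable⟩ :=
    exists_insert_top (a := -a) (neg_ne_zero.2 ha) hy 0 hv hvc
      (by rw [wordSum_neg, hvsum, h0, neg_zero])
  rw [neg_neg] at hstable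
  exact ⟨w', hw', hwc, by lia, fun f => (hwsum f).trans (hvsum f),
    (hstable _ hvtop).hasTopPower, hwtop.hasTopPower, hwrem ▸ hvrem⟩

end Insertion

/-! ### The weight determined by the exponent sums -/

section ExponentMatrix

open Matrix

lemma exists_natCast_smul_add_det_ne_zero {m R : Type*} [Fintype m] [DecidableEq m] [CommRing R]
    [IsDomain R] [CharZero R] {D : Matrix m m R} (hD : D.det ≠ 0) (M : Matrix m m R) :
    ∃ c ≤ Fintype.card m, ((c : R) • D + M).det ≠ 0 := by
  by_contra! h
  have hpoly :
      ((Polynomial.X : Polynomial R) • D.map Polynomial.C + M.map Polynomial.C).det = 0 := by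
    refine Polynomial.eq_zero_of_natDegree_lt_card_of_eval_eq_zero _
      (f := fun c : Fin (Fintype.card m + 1) => (c.1 : R))
      (Nat.cast_injective.comp Fin.val_injective) (fun c => ?_) ?_
    · rw [← h c.1 (Nat.lt_succ_iff.1 c.2), ← Polynomial.coe_evalRingHom, RingHom.map_det]
      congr 1
      ext i j
      simp [mul_comm (D i j)]
    · rw [Fintype.card_fin]
      exact Nat.lt_succ_of_le (Polynomial.natDegree_det_X_add_C_le D M)
  exact hD (by rw [← Polynomial.coeff_det_X_add_C_card D M, hpoly, Polynomial.coeff_zero])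

lemma exists_primitive_of_ne_zero {ι : Type*} [Fintype ι] {b : ι → ℤ} (hb : b ≠ 0) :
    ∃ d : ℤ, d ≠ 0 ∧ ∃ a g : ι → ℤ, b = d • a ∧ g ⬝ᵥ a = 1 := by
  obtain ⟨j, -⟩ := Function.ne_iff.1 hb
  obtain ⟨a, hba, ha⟩ := Finset.extract_gcd b ⟨j, Finset.mem_univ j⟩
  obtain ⟨g, hg⟩ := Finset.gcd_eq_sum_mul Finset.univ a
  have hsmul : b = Finset.univ.gcd b • a := funext fun j => hba j (Finset.mem_univ j)
  refine ⟨Finset.univ.gcd b, fun h0 => hb ?_, a, g, hsmul, ?_⟩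
  · rw [hsmul, h0, zero_smul]
  · rw [dotProduct_comm, ← ha, hg]
    rfl

variable {n : ℕ}

/-- A primitive integral vector spanning the kernel of `M` over `ℚ`, with nonzero first
coordinate. -/
structure IsPrimitiveNull (M : Matrix (Fin n) (Fin (n + 1)) ℤ) (a : Fin (n + 1) → ℤ) : Prop where
  ne_zero : a 0 ≠ 0
  exists_dotProduct_eq_one : ∃ g, g ⬝ᵥ a = 1
  mulVec_eq_zero : M *ᵥ a = 0
  unique : ∀ a', M *ᵥ a' = 0 → ∀ j, a 0 * a' j = a' 0 * a j

/-- A chosen `IsPrimitiveNull` vector of `M`; a junk value if there is none. -/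
noncomputable def primitiveNull (M : Matrix (Fin n) (Fin (n + 1)) ℤ) : Fin (n + 1) → ℤ :=
  Classical.epsilon (IsPrimitiveNull M)

/-- The exponent sums of the words `r i` in the generators. -/
def expMatrix (r : Fin n → RWord n) : Matrix (Fin n) (Fin (n + 1)) ℤ :=
  Matrix.of fun i => wordSum (fun j => Pi.single j 1) (r i)

lemma expMatrix_mulVec (r : Fin n → RWord n) (a : Fin (n + 1) → ℤ) :
    expMatrix r *ᵥ a = fun i => wordSum a (r i) := by
  let dot : (Fin (n + 1) → ℤ) →+ ℤ := AddMonoidHom.mk' (· ⬝ᵥ a) fun u v => add_dotProduct u v a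
  funext i
  have hdot : ∀ j, dot (Pi.single j 1) = a j := fun j => single_one_dotProduct j a
  calc (expMatrix r *ᵥ a) i = dot (wordSum (fun j => Pi.single j 1) (r i)) := rfl
    _ = wordSum a (r i) := by simp only [map_wordSum, hdot]

lemma expMatrix_congr {r r' : Fin n → RWord n}
    (h : ∀ i, ∀ f : Fin (n + 1) → ℤ, wordSum f (r' i) = wordSum f (r i)) :
    expMatrix r' = expMatrix r := by
  refine Matrix.ext_of_mulVec_single fun j => ?_
  simp only [expMatrix_mulVec, h]

lemma mulVec_eq_smul_add_submatrix (M : Matrix (Fin n) (Fin (n + 1)) ℤ) (a : Fin (n + 1) → ℤ) :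
    M *ᵥ a = a 0 • M.col 0 + M.submatrix id Fin.succ *ᵥ fun j => a j.succ := by
  funext i
  simp [mulVec, dotProduct, Fin.sum_univ_succ, mul_comm]

variable {M : Matrix (Fin n) (Fin (n + 1)) ℤ}

lemma eq_zero_of_mulVec_eq_zero_of_apply_zero (hM : (M.submatrix id Fin.succ).det ≠ 0)
    {u : Fin (n + 1) → ℤ} (hu : M *ᵥ u = 0) (hu0 : u 0 = 0) : u = 0 := by
  rw [mulVec_eq_smul_add_submatrix, hu0, zero_smul, zero_add] at hu
  have htail := eq_zero_of_mulVec_eq_zero hM hu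
  funext j
  exact Fin.cases hu0 (congrFun htail) j

lemma exists_mulVec_eq_zero_apply_zero_ne_zero (hM : (M.submatrix id Fin.succ).det ≠ 0) :
    ∃ b, M *ᵥ b = 0 ∧ b 0 ≠ 0 := by
  refine ⟨Fin.cons (M.submatrix id Fin.succ).det
    (-((M.submatrix id Fin.succ).adjugate *ᵥ M.col 0)), ?_, hM⟩
  rw [mulVec_eq_smul_add_submatrix]
  simp only [Fin.cons_zero, Fin.cons_succ, mulVec_neg, mulVec_mulVec, mul_adjugate, smul_mulVec,
    one_mulVec, add_neg_cancel]

lemma isPrimitiveNull_primitiveNull (hM : (M.submatrix id Fin.succ).det ≠ 0) :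
    IsPrimitiveNull M (primitiveNull M) := by
  refine Classical.epsilon_spec (p := IsPrimitiveNull M) ?_
  obtain ⟨b, hMb, hb0⟩ := exists_mulVec_eq_zero_apply_zero_ne_zero hM
  obtain ⟨d, hd, a, g, rfl, hg⟩ := exists_primitive_of_ne_zero (fun hb => hb0 (congrFun hb 0))
  have hMa : M *ᵥ a = 0 := by
    rw [mulVec_smul] at hMb
    exact (smul_eq_zero.1 hMb).resolve_left hd
  refine ⟨a, fun ha0 => hb0 ?_, ⟨g, hg⟩, hMa, fun a' ha' j => sub_eq_zero.1 ?_⟩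
  · rw [Pi.smul_apply, ha0, smul_zero]
  · have hnull : M *ᵥ (a 0 • a' - a' 0 • a) = 0 := by
      rw [mulVec_sub, mulVec_smul, mulVec_smul, ha', hMa, smul_zero, smul_zero, sub_zero]
    exact congrFun (eq_zero_of_mulVec_eq_zero_of_apply_zero hM hnull (by simp [mul_comm])) j

end ExponentMatrix

/-! ### Good tuples of relators -/

section GoodTuples

variable {n : ℕ}

/-- The hypotheses on a tuple of relators which decide whether the group is free-by-cyclic: it is
for `e = 1`, and it is not for `e = 2`. -/
def IsGood (e : ℕ) (r : Fin n → RWord n) : Prop :=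
  ∃ a, IsPrimitiveNull (expMatrix r) a ∧ (∀ i, HasTopPower a e i.succ (r i)) ∧
    ∀ i, HasTopPower (-a) 1 i.succ (r i)

lemma IsGood.freeByCyclic {r : Fin n → RWord n} (h : IsGood 1 r) :
    FreeByCyclic (PresentedGroup (relsOf r)) := by
  obtain ⟨a, ha, htop, hbot⟩ := h
  exact freeByCyclic_of_hasTopPower_one ha.ne_zero ha.exists_dotProduct_eq_one
    (congrFun (expMatrix_mulVec r a ▸ ha.mulVec_eq_zero)) htop hbot

lemma IsGood.not_freeByCyclic (hn : 1 ≤ n) {r : Fin n → RWord n} (h : IsGood 2 r) :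
    ¬ FreeByCyclic (PresentedGroup (relsOf r)) := by
  obtain ⟨a, ha, htop, hbot⟩ := h
  exact not_freeByCyclic_of_hasTopPower_two hn ha.ne_zero ha.exists_dotProduct_eq_one
    (congrFun (expMatrix_mulVec r a ▸ ha.mulVec_eq_zero))
    (fun a' ha' => ha.unique a' ((expMatrix_mulVec r a').trans (funext ha'))) htop hbot

lemma exists_cyclicallyReduced_replicate_append {w : RWord n} (hw : w ≠ [])
    (hc : CyclicallyReduced w) (y : Fin (n + 1)) :
    ∃ s, ∀ c, CyclicallyReduced (List.replicate c (y, s) ++ w) := by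
  have hhead := List.head?_eq_some_head hw
  have hlast := List.getLast?_eq_some_getLast hw
  have hjoin := (cyclicallyReduced_iff.1 hc).2 _ hlast _ hhead
  obtain ⟨s, hs_head, hs_last⟩ : ∃ s, (y = (w.head hw).1 → s = (w.head hw).2) ∧
      ((w.getLast hw).1 = y → (w.getLast hw).2 = s) := by
    by_cases h : y = (w.head hw).1
    · exact ⟨_, fun _ => rfl, fun h' => hjoin (h'.trans h)⟩
    · exact ⟨_, fun h' => absurd h' h, fun _ => rfl⟩
  refine ⟨s, fun c => ?_⟩
  rcases c with _ | c
  · exact hc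
  refine cyclicallyReduced_insert (A := []) (P := List.replicate (c + 1) (y, s)) hc hw (by simp)
    (List.isChain_replicate_of_rel _ fun _ => rfl) ?_ ?_
  · simpa [List.getLast?_replicate, hhead] using hs_head
  · simpa [List.head?_replicate, hlast] using hs_last

lemma exists_prefix_det_ne_zero {l : ℕ} {r : Fin n → RWord n} (hr : r ∈ Rtuples n l) :
    ∃ c ≤ n, ∃ r' ∈ Rtuples n (l + n), (∀ i, (r' i).drop c = r i) ∧
      ((expMatrix r').submatrix id Fin.succ).det ≠ 0 := by
  choose s hs using fun i : Fin n =>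
    exists_cyclicallyReduced_replicate_append (hr i).1 (hr i).2.2 i.succ
  have hD : (Matrix.diagonal fun i => cond (s i) (1 : ℤ) (-1)).det ≠ 0 := by
    rw [Matrix.det_diagonal, Finset.prod_ne_zero_iff]
    intro i _
    cases s i <;> simp
  obtain ⟨c, hc, hdet⟩ :=
    exists_natCast_smul_add_det_ne_zero hD ((expMatrix r).submatrix id Fin.succ)
  rw [Fintype.card_fin] at hc
  refine ⟨c, hc, fun i => List.replicate c (i.succ, s i) ++ r i, fun i => ⟨?_, ?_, hs i c⟩, ?_, ?_⟩
  · simp [(hr i).1]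
  · rw [List.length_append, List.length_replicate]
    have := (hr i).2.1
    lia
  · simp
  · convert hdet using 2
    ext i j
    rw [Matrix.add_apply, Matrix.smul_apply, Matrix.diagonal_apply, Matrix.submatrix_apply,
      Matrix.submatrix_apply]
    rcases eq_or_ne i j with rfl | hij
    · cases h : s i <;> simp [expMatrix, wordSum_replicate, letterStep, h]
    · cases h : s i <;> simp [expMatrix, wordSum_replicate, letterStep, h, hij, hij.symm]

/-- Recovers a tuple from the good tuple constructed from it: the weight is determined by the
exponent sums, which are not affected by the insertions. -/
noncomputable def recover (e c : ℕ) (r : Fin n → RWord n) : Fin n → RWord n := fun i =>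
  (removeTop (primitiveNull (expMatrix r)) e
    (removeTop (-primitiveNull (expMatrix r)) 1 (r i))).drop c

lemma exists_isGood_recover_eq {l : ℕ} (e : ℕ) {r : Fin n → RWord n} (hr : r ∈ Rtuples n l) :
    ∃ c ≤ n, ∃ r' ∈ Rtuples n (l + (n + 4 * (e + 2))), IsGood (e + 1) r' ∧
      recover (e + 1) c r' = r := by
  obtain ⟨c, hc, v, hv, hdrop, hdet⟩ := exists_prefix_det_ne_zero hr
  have ha := isPrimitiveNull_primitiveNull hdet
  set a := primitiveNull (expMatrix v)
  have hva := congrFun (expMatrix_mulVec v a ▸ ha.mulVec_eq_zero)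
  choose r' hne hred hlen hsum htop hbot hremove using fun i : Fin n =>
    exists_insert_top_bot ha.ne_zero i.succ_ne_zero e (hv i).1 (hv i).2.2 (hva i)
  have hexp : expMatrix r' = expMatrix v := expMatrix_congr hsum
  refine ⟨c, hc, r', fun i => ⟨hne i, ?_, hred i⟩, ⟨a, hexp ▸ ha, htop, hbot⟩, ?_⟩
  · rw [hlen]
    have := (hv i).2.1
    lia
  · funext i
    rw [recover, hexp, hremove, hdrop]

end GoodTuples

/-! ### Counting -/

section Counting

variable {n : ℕ}

lemma ncard_le_card_mul_ncard {α β γ : Type*} [Finite γ] {S : Set α} {T : Set β} (hT : T.Finite)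
    (φ : γ → β → α) (h : ∀ s ∈ S, ∃ c, ∃ t ∈ T, φ c t = s) :
    S.ncard ≤ Nat.card γ * T.ncard := by
  have hfin : (Set.univ ×ˢ T : Set (γ × β)).Finite := Set.finite_univ.prod hT
  rw [← Set.ncard_univ, ← Set.ncard_prod]
  refine (Set.ncard_le_ncard (t := (fun p : γ × β => φ p.1 p.2) '' (Set.univ ×ˢ T)) ?_
    (hfin.image _)).trans (Set.ncard_image_le hfin)
  intro s hs
  obtain ⟨c, t, ht, rfl⟩ := h s hs
  exact ⟨(c, t), ⟨Set.mem_univ c, ht⟩, rfl⟩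

lemma finite_rtuples (n l : ℕ) : (Rtuples n l).Finite :=
  (Set.Finite.pi' fun _ => List.finite_length_le _ l).subset fun _ hr i => (hr i).2.1

lemma finite_sep_rtuples (P : (Fin n → RWord n) → Prop) (l : ℕ) :
    {r ∈ Rtuples n l | P r}.Finite :=
  (finite_rtuples n l).subset (Set.sep_subset _ _)

lemma tupleRatio_eq_ncard_div (P : (Fin n → RWord n) → Prop) (l : ℕ) :
    tupleRatio n P l = {r ∈ Rtuples n l | P r}.ncard / (Rtuples n l).ncard := rfl

lemma ncard_rtuples_le_isGood (n l e : ℕ) : (Rtuples n l).ncard ≤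
    (n + 1) * {r ∈ Rtuples n (l + (n + 4 * (e + 2))) | IsGood (e + 1) r}.ncard := by
  have hcount := ncard_le_card_mul_ncard (S := Rtuples n l)
    (finite_sep_rtuples (IsGood (e + 1)) (l + (n + 4 * (e + 2))))
    (fun (c : Fin (n + 1)) r => recover (e + 1) c r) fun r hr => by
      obtain ⟨c, hc, r', hr', hgood, hrec⟩ := exists_isGood_recover_eq e hr
      exact ⟨⟨c, Nat.lt_succ_of_le hc⟩, r', ⟨hr', hgood⟩, hrec⟩
  rwa [Nat.card_fin] at hcount

/-- Replaces the last letter of `w` by two given letters. -/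
def growLast (w : RWord n) (x : (Fin (n + 1) × Bool) × (Fin (n + 1) × Bool)) : RWord n :=
  w.dropLast ++ [x.1, x.2]

lemma exists_cyclicallyReduced_concat (hn : 1 ≤ n) {v : RWord n} (hv : v ≠ [])
    (hred : FreeGroup.IsReduced v) : ∃ z, CyclicallyReduced (v ++ [z]) := by
  have hhead := List.head?_eq_some_head hv
  have hlast := List.getLast?_eq_some_getLast hv
  obtain ⟨z, hz_last, hz_head⟩ :
      ∃ z : Fin (n + 1) × Bool, ((v.getLast hv).1 = z.1 → (v.getLast hv).2 = z.2) ∧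
        (z.1 = (v.head hv).1 → z.2 = (v.head hv).2) := by
    by_cases h : (v.getLast hv).1 = (v.head hv).1
    · have : Nontrivial (Fin (n + 1)) := Fin.nontrivial_iff_two_le.2 (Nat.succ_le_succ hn)
      obtain ⟨j, hj⟩ := exists_ne (v.head hv).1
      exact ⟨(j, true), fun h' => absurd (h'.symm.trans h) hj, fun h' => absurd h' hj⟩
    · exact ⟨v.head hv, fun h' => absurd h' h, fun _ => rfl⟩
  refine ⟨z, ?_⟩
  rw [cyclicallyReduced_iff, FreeGroup.isCyclicallyReduced_iff, FreeGroup.IsReduced,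
    List.isChain_append, List.head?_append_of_ne_nil _ hv]
  refine ⟨⟨hred, List.isChain_singleton z, ?_⟩, ?_⟩
  · simpa [hlast] using hz_last
  · simpa [hhead] using hz_head

lemma exists_growLast_eq (hn : 1 ≤ n) {l : ℕ} (hl : 2 ≤ l) {w : RWord n}
    (hlen : w.length = l + 1) (hc : CyclicallyReduced w) :
    ∃ w', (w' ≠ [] ∧ w'.length ≤ l ∧ CyclicallyReduced w') ∧ ∃ x, growLast w' x = w := by
  have hsplit : w = w.take (l - 1) ++ [w[l - 1], w[l]] := by
    conv_lhs => rw [← List.take_append_drop (l - 1) w]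
    rw [List.drop_eq_getElem_cons (by lia), List.drop_eq_getElem_cons (by lia),
      List.drop_of_length_le (by lia)]
    simp only [Nat.sub_add_cancel (one_le_two.trans hl)]
  have hv : w.take (l - 1) ≠ [] := by
    rw [← List.length_pos_iff, List.length_take]
    lia
  have hred : FreeGroup.IsReduced (w.take (l - 1)) :=
    (cyclicallyReduced_iff.1 hc).isReduced.take _
  obtain ⟨z, hz⟩ := exists_cyclicallyReduced_concat hn hv hred
  refine ⟨w.take (l - 1) ++ [z], ⟨by simp, ?_, hz⟩, (w[l - 1], w[l]), ?_⟩
  · rw [List.length_append, List.length_take, List.length_singleton]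
    lia
  · rw [growLast, List.dropLast_concat, ← hsplit]

/-- The data for passing from a tuple of words of length at most `l` to one of words of length at
most `l + 1`: `none` keeps a word, and `some x` replaces its last letter by the two letters `x`. -/
abbrev TupleGrowth (n : ℕ) : Type := Fin n → Option ((Fin (n + 1) × Bool) × (Fin (n + 1) × Bool))

lemma ncard_rtuples_succ_le (hn : 1 ≤ n) {l : ℕ} (hl : 2 ≤ l) :
    (Rtuples n (l + 1)).ncard ≤ Nat.card (TupleGrowth n) * (Rtuples n l).ncard := by
  refine ncard_le_card_mul_ncard (finite_rtuples n l)
    (fun (o : TupleGrowth n) r i => (o i).elim (r i) (growLast (r i))) fun r hr => ?_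
  have hword : ∀ i, ∃ w', (w' ≠ [] ∧ w'.length ≤ l ∧ CyclicallyReduced w') ∧
      ∃ o : Option _, o.elim w' (growLast w') = r i := by
    intro i
    obtain ⟨hne, hlen, hc⟩ := hr i
    rcases Nat.le_succ_iff.1 hlen with hlen | hlen
    · exact ⟨r i, ⟨hne, hlen, hc⟩, none, rfl⟩
    · obtain ⟨w', hw', x, hx⟩ := exists_growLast_eq hn hl hlen hc
      exact ⟨w', hw', some x, hx⟩
  choose r' hr' o ho using hword
  exact ⟨o, r', hr', funext ho⟩

lemma ncard_rtuples_add_le (hn : 1 ≤ n) {l : ℕ} (hl : 2 ≤ l) (C : ℕ) :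
    (Rtuples n (l + C)).ncard ≤ Nat.card (TupleGrowth n) ^ C * (Rtuples n l).ncard := by
  induction C with
  | zero => rw [pow_zero, one_mul, add_zero]
  | succ C ih =>
    rw [pow_succ', mul_assoc]
    exact (ncard_rtuples_succ_le hn (hl.trans (Nat.le_add_right l C))).trans
      (Nat.mul_le_mul_left _ ih)

lemma ncard_rtuples_pos {l : ℕ} (hl : 1 ≤ l) : 0 < (Rtuples n l).ncard := by
  refine (Set.ncard_pos (finite_rtuples n l)).2 ⟨fun _ => [(0, true)], fun _ => ⟨by simp, hl, ?_⟩⟩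
  exact cyclicallyReduced_iff.2 FreeGroup.IsCyclicallyReduced.singleton

lemma exists_eventually_le_tupleRatio_isGood (hn : 1 ≤ n) (e : ℕ) :
    ∃ c : ℝ, 0 < c ∧ ∀ᶠ l in Filter.atTop, c ≤ tupleRatio n (IsGood (e + 1)) l := by
  let C := n + 4 * (e + 2)
  let K := Nat.card (TupleGrowth n)
  have hK : 0 < K := Nat.card_pos
  refine ⟨1 / (K ^ C * (n + 1)), by positivity, ?_⟩
  filter_upwards [Filter.eventually_ge_atTop (2 + C)] with m hm
  obtain ⟨l, hl, rfl⟩ : ∃ l, 2 ≤ l ∧ m = l + C := ⟨m - C, by lia, by lia⟩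
  have hcount : (Rtuples n (l + C)).ncard ≤
      K ^ C * ((n + 1) * {r ∈ Rtuples n (l + C) | IsGood (e + 1) r}.ncard) :=
    (ncard_rtuples_add_le hn hl C).trans (Nat.mul_le_mul_left _ (ncard_rtuples_le_isGood n l e))
  have hpos : 0 < (Rtuples n (l + C)).ncard := ncard_rtuples_pos (by lia)
  rw [tupleRatio_eq_ncard_div, div_le_div_iff₀ (by positivity) (Nat.cast_pos.2 hpos), one_mul,
    mul_comm, mul_assoc]
  exact_mod_cast hcount

lemma tupleRatio_mono {P Q : (Fin n → RWord n) → Prop} (h : ∀ r, P r → Q r) (l : ℕ) :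
    tupleRatio n P l ≤ tupleRatio n Q l := by
  rw [tupleRatio_eq_ncard_div, tupleRatio_eq_ncard_div]
  gcongr
  exacts [finite_sep_rtuples Q l, h _]

lemma tupleRatio_add_le_one {P Q : (Fin n → RWord n) → Prop} (h : ∀ r, P r → ¬ Q r) (l : ℕ) :
    tupleRatio n P l + tupleRatio n Q l ≤ 1 := by
  have hdisj : Disjoint {r ∈ Rtuples n l | P r} {r ∈ Rtuples n l | Q r} :=
    Set.disjoint_left.2 fun r hP hQ => h r hP.2 hQ.2
  rw [tupleRatio_eq_ncard_div, tupleRatio_eq_ncard_div, ← add_div]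
  refine div_le_one_of_le₀ ?_ (Nat.cast_nonneg _)
  rw [← Nat.cast_add, ← Set.ncard_union_eq hdisj (finite_sep_rtuples P l) (finite_sep_rtuples Q l)]
  exact Nat.cast_le.2 (Set.ncard_le_ncard
    (Set.union_subset (Set.sep_subset _ _) (Set.sep_subset _ _)) (finite_rtuples n l))

end Counting

end FewRelator

/-- A random deficiency 1 group in the few-relator model is free-by-cyclic with asymptotic
probability that is positive and bounded away from 1. -/
theorem random_def1_freeByCyclic_probability (n : ℕ) (hn : 1 ≤ n) :
    0 < Filter.liminf
        (tupleRatio n fun r => FreeByCyclic (PresentedGroup (relsOf r))) Filter.atTop ∧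
    Filter.limsup
        (tupleRatio n fun r => FreeByCyclic (PresentedGroup (relsOf r))) Filter.atTop < 1 := by
  set p : ℕ → ℝ := tupleRatio n fun r => FreeByCyclic (PresentedGroup (relsOf r))
  obtain ⟨c, hc, hgood⟩ := FewRelator.exists_eventually_le_tupleRatio_isGood hn 0
  obtain ⟨d, hd, hbad⟩ := FewRelator.exists_eventually_le_tupleRatio_isGood hn 1
  have hlower : ∀ᶠ l in Filter.atTop, c ≤ p l := by
    filter_upwards [hgood] with l hl
    exact hl.trans (FewRelator.tupleRatio_mono (fun _ => FewRelator.IsGood.freeByCyclic) l)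
  have hupper : ∀ᶠ l in Filter.atTop, p l ≤ 1 - d := by
    filter_upwards [hbad] with l hl
    have hadd : _ + p l ≤ 1 :=
      FewRelator.tupleRatio_add_le_one (fun _ => FewRelator.IsGood.not_freeByCyclic hn) l
    linarith
  have hcobdd_ge := (Filter.isBoundedUnder_of_eventually_le hupper).isCoboundedUnder_ge
  have hcobdd_le := (Filter.isBoundedUnder_of_eventually_ge hlower).isCoboundedUnder_le
  exact ⟨hc.trans_le (Filter.le_liminf_of_le hcobdd_ge hlower),
    (Filter.limsup_le_of_le hcobdd_le hupper).trans_lt (sub_lt_self 1 hd)⟩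
end
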